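/- arXiv:math/0212329 — 2 statements merged into one kernel-verified Lean document; each statement's English description precedes it below -/
import Mathlib

section
/- For every prime p there exists a strongly infinite-dimensional compact metric space Y with cohomological dimension dim_{Z[1/p]} Y = 1. -/
open Set Function

open scoped ENNReal

noncomputable section

/-! ### Alexander–Spanier (Čech) cohomology -/

namespace AS

variable (A : Type*) [AddCommGroup A]

/-- Alexander–Spanier `n`-cochains on `X` with coefficients in `A`. -/
abbrev Cochain (X : Type*) (n : ℕ) : Type _ := (Fin (n + 1) → X) → A

/-- The Alexander–Spanier coboundary operator. -/
def d (X : Type*) (n : ℕ) : Cochain A X n →+ Cochain A X (n + 1) :=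
  AddMonoidHom.mk' (fun φ s => ∑ i : Fin (n + 2), ((-1 : ℤ) ^ (i : ℕ)) • φ (s ∘ i.succAbove))
    (fun φ ψ => funext fun s => by
      simp [smul_add, Finset.sum_add_distrib])

/-- An open cover of `X`. -/
def IsOpenCover {X : Type*} [TopologicalSpace X] (U : Set (Set X)) : Prop :=
  (∀ u ∈ U, IsOpen u) ∧ ⋃₀ U = univ

/-- A tuple is `U`-small if it is contained in a single member of `U`. -/
def Small {X : Type*} (U : Set (Set X)) {k : ℕ} (s : Fin k → X) : Prop :=
  ∃ u ∈ U, ∀ i, s i ∈ u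

/-- The subgroup of cochains vanishing on all tuples that are small with respect to
some open cover (i.e. vanishing in a neighbourhood of the diagonal). -/
def locZero (X : Type*) [TopologicalSpace X] (n : ℕ) : AddSubgroup (Cochain A X n) where
  carrier := {φ | ∃ U, IsOpenCover U ∧ ∀ s : Fin (n + 1) → X, Small U s → φ s = 0}
  zero_mem' := ⟨{univ}, ⟨fun u hu => by rw [mem_singleton_iff] at hu; rw [hu]; exact isOpen_univ,
      by simp⟩, fun s _ => rfl⟩
  add_mem' := by
    rintro φ ψ ⟨U, ⟨hUo, hUc⟩, hφ⟩ ⟨W, ⟨hWo, hWc⟩, hψ⟩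
    refine ⟨(fun p : Set X × Set X => p.1 ∩ p.2) '' (U ×ˢ W), ⟨?_, ?_⟩, ?_⟩
    · rintro _ ⟨⟨u, w⟩, ⟨hu, hw⟩, rfl⟩
      exact (hUo u hu).inter (hWo w hw)
    · apply eq_univ_of_forall
      intro x
      have hx1 : x ∈ ⋃₀ U := hUc ▸ mem_univ x
      have hx2 : x ∈ ⋃₀ W := hWc ▸ mem_univ x
      obtain ⟨u, hu, hxu⟩ := hx1
      obtain ⟨w, hw, hxw⟩ := hx2
      exact ⟨u ∩ w, ⟨⟨u, w⟩, ⟨hu, hw⟩, rfl⟩, hxu, hxw⟩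
    · rintro s ⟨_, ⟨⟨u, w⟩, ⟨hu, hw⟩, rfl⟩, hs⟩
      have h1 : φ s = 0 := hφ s ⟨u, hu, fun i => (hs i).1⟩
      have h2 : ψ s = 0 := hψ s ⟨w, hw, fun i => (hs i).2⟩
      show φ s + ψ s = 0
      rw [h1, h2, add_zero]
  neg_mem' := by
    rintro φ ⟨U, hU, hφ⟩
    exact ⟨U, hU, fun s hs => by show -φ s = 0; rw [hφ s hs, neg_zero]⟩

/-- The Alexander–Spanier cochain complex: cochains modulo locally zero cochains. -/
abbrev QC (X : Type*) [TopologicalSpace X] (n : ℕ) : Type _ := Cochain A X n ⧸ locZero A X n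

lemma d_locZero (X : Type*) [TopologicalSpace X] (n : ℕ) :
    locZero A X n ≤ (locZero A X (n + 1)).comap (d A X n) := by
  rintro φ ⟨U, hU, hφ⟩
  refine ⟨U, hU, fun s ⟨u, hu, hs⟩ => ?_⟩
  show (d A X n φ) s = 0
  have : ∀ i : Fin (n + 2), φ (s ∘ i.succAbove) = 0 :=
    fun i => hφ _ ⟨u, hu, fun j => hs _⟩
  simp only [d, AddMonoidHom.mk'_apply]
  exact Finset.sum_eq_zero fun i _ => by rw [this i, smul_zero]

/-- The induced differential on the Alexander–Spanier complex. -/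
def dQ (X : Type*) [TopologicalSpace X] (n : ℕ) : QC A X n →+ QC A X (n + 1) :=
  QuotientAddGroup.map _ _ (d A X n) (d_locZero A X n)

/-- Cocycles. -/
def cocycles (X : Type*) [TopologicalSpace X] (n : ℕ) : AddSubgroup (QC A X n) :=
  (dQ A X n).ker

/-- Coboundaries (the trivial subgroup in degree `0`). -/
def cobounds (X : Type*) [TopologicalSpace X] (n : ℕ) : AddSubgroup (QC A X n) :=
  match n with
  | 0 => ⊥
  | (m + 1) => (dQ A X m).range

/-- Alexander–Spanier cohomology of `X` with coefficients in `A`; for paracompact Hausdorff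
(e.g. metric) spaces this is naturally isomorphic to Čech cohomology. -/
def ASH (n : ℕ) (X : Type*) [TopologicalSpace X] : Type _ :=
  ↥(cocycles A X n) ⧸ ((cobounds A X n).comap (cocycles A X n).subtype)

instance (n : ℕ) (X : Type*) [TopologicalSpace X] : AddCommGroup (ASH A n X) :=
  inferInstanceAs (AddCommGroup
    (↥(cocycles A X n) ⧸ ((cobounds A X n).comap (cocycles A X n).subtype)))

end AS

namespace AS

variable (A : Type*) [AddCommGroup A]

/-- Pullback of Alexander–Spanier cochains along a map. -/
def pull {X Y : Type*} (f : X → Y) (n : ℕ) : Cochain A Y n →+ Cochain A X n :=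
  AddMonoidHom.mk' (fun φ s => φ (f ∘ s)) (fun φ ψ => rfl)

lemma pull_d {X Y : Type*} (f : X → Y) (n : ℕ) (φ : Cochain A Y n) :
    pull A f (n + 1) (d A Y n φ) = d A X n (pull A f n φ) := rfl

lemma pull_locZero {X Y : Type*} [TopologicalSpace X] [TopologicalSpace Y] {f : X → Y}
    (hf : Continuous f) (n : ℕ) :
    locZero A Y n ≤ (locZero A X n).comap (pull A f n) := by
  rintro φ ⟨U, ⟨hUo, hUc⟩, hφ⟩
  refine ⟨(f ⁻¹' ·) '' U, ⟨?_, ?_⟩, ?_⟩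
  · rintro _ ⟨u, hu, rfl⟩
    exact (hUo u hu).preimage hf
  · apply eq_univ_of_forall
    intro x
    have : f x ∈ ⋃₀ U := hUc ▸ mem_univ _
    obtain ⟨u, hu, hx⟩ := this
    exact ⟨f ⁻¹' u, ⟨u, hu, rfl⟩, hx⟩
  · rintro s ⟨_, ⟨u, hu, rfl⟩, hs⟩
    exact hφ _ ⟨u, hu, fun i => hs i⟩

/-- Pullback on the Alexander–Spanier complex. -/
def pullQ {X Y : Type*} [TopologicalSpace X] [TopologicalSpace Y] {f : X → Y}
    (hf : Continuous f) (n : ℕ) : QC A Y n →+ QC A X n :=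
  QuotientAddGroup.map _ _ (pull A f n) (pull_locZero A hf n)

lemma pullQ_d {X Y : Type*} [TopologicalSpace X] [TopologicalSpace Y] {f : X → Y}
    (hf : Continuous f) (n : ℕ) (x : QC A Y n) :
    pullQ A hf (n + 1) (dQ A Y n x) = dQ A X n (pullQ A hf n x) := by
  refine QuotientAddGroup.induction_on x ?_
  intro φ
  simp only [pullQ, dQ, QuotientAddGroup.map_mk, pull_d]

lemma pullQ_cocycles {X Y : Type*} [TopologicalSpace X] [TopologicalSpace Y] {f : X → Y}
    (hf : Continuous f) (n : ℕ) {x : QC A Y n} (hx : x ∈ cocycles A Y n) :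
    pullQ A hf n x ∈ cocycles A X n := by
  have : dQ A Y n x = 0 := hx
  show dQ A X n (pullQ A hf n x) = 0
  rw [← pullQ_d, this, map_zero]

lemma pullQ_cobounds {X Y : Type*} [TopologicalSpace X] [TopologicalSpace Y] {f : X → Y}
    (hf : Continuous f) (n : ℕ) {x : QC A Y n} (hx : x ∈ cobounds A Y n) :
    pullQ A hf n x ∈ cobounds A X n := by
  match n with
  | 0 =>
    have : x = 0 := hx
    rw [this, map_zero]
    exact (⊥ : AddSubgroup (QC A X 0)).zero_mem
  | (m + 1) =>
    obtain ⟨y, rfl⟩ := hx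
    exact ⟨pullQ A hf m y, (pullQ_d A hf m y).symm⟩

/-- The map on cocycles induced by a continuous map. -/
def pullZ {X Y : Type*} [TopologicalSpace X] [TopologicalSpace Y] {f : X → Y}
    (hf : Continuous f) (n : ℕ) : ↥(cocycles A Y n) →+ ↥(cocycles A X n) :=
  AddMonoidHom.codRestrict ((pullQ A hf n).comp (cocycles A Y n).subtype) _
    (fun x => pullQ_cocycles A hf n x.2)

/-- The homomorphism induced on Alexander–Spanier (Čech) cohomology by a continuous map.
Note the contravariance: a map `f : X → Y` induces `ASHmap : ASH A n Y →+ ASH A n X`. -/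
def ASHmap {X Y : Type*} [TopologicalSpace X] [TopologicalSpace Y] {f : X → Y}
    (hf : Continuous f) (n : ℕ) : ASH A n Y →+ ASH A n X :=
  QuotientAddGroup.map _ _ (pullZ A hf n) (by
    rintro ⟨x, hx⟩ hmem
    have : x ∈ cobounds A Y n := hmem
    exact pullQ_cobounds A hf n this)

end AS

namespace AS

variable (A : Type*) [AddCommGroup A]

/-- Čech cohomology with compact supports: for compact `B` this is the (Alexander–Spanier =
Čech) cohomology of `B` itself, and for noncompact `B` it is that of the one-point
compactification of `B`. -/
def Hc (n : ℕ) (B : Type*) [TopologicalSpace B] : Type _ :=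
  open scoped Classical in
  if CompactSpace B then ASH A n B else ASH A n (OnePoint B)

end AS

/-- The cohomological dimension `dim_A X` of a space `X` with respect to an abelian group `A`:
the supremum of the integers `n` for which there is a locally compact subset `B ⊆ X` with
`H^n_c(B; A) ≠ 0`. -/
noncomputable def cohDim (A : Type*) [AddCommGroup A] (X : Type*) [TopologicalSpace X] : ℕ∞ :=
  sSup {e : ℕ∞ | ∃ n : ℕ, e = (n : ℕ∞) ∧
    ∃ B : Set X, LocallyCompactSpace B ∧ Nontrivial (AS.Hc A n B)}

/-! ### Essential maps and strong infinite-dimensionality -/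

/-- The boundary of the cube `I^n`. -/
def cubeBoundary (n : ℕ) : Set (Fin n → unitInterval) :=
  {x | ∃ i, x i = 0 ∨ x i = 1}

/-- A continuous map `f : X → I^n` is *essential* if there is no homotopy of pairs
`(X, f⁻¹(∂Iⁿ)) × I → (Iⁿ, ∂Iⁿ)` from `f` to a map into `∂Iⁿ`. -/
def IsEssential {X : Type*} [TopologicalSpace X] {n : ℕ} (f : X → (Fin n → unitInterval)) :
    Prop :=
  ¬ ∃ F : X × unitInterval → (Fin n → unitInterval), Continuous F ∧
      (∀ x, F (x, 0) = f x) ∧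
      (∀ x, f x ∈ cubeBoundary n → ∀ t, F (x, t) ∈ cubeBoundary n) ∧
      (∀ x, F (x, 1) ∈ cubeBoundary n)

/-- `X` is *strongly infinite-dimensional* if there is an essential map of `X` onto the
Hilbert cube, i.e. a continuous surjection `f : X → Q` whose composition with every
coordinate projection `Q → Iⁿ` is essential. -/
def StronglyInfiniteDimensional (X : Type*) [TopologicalSpace X] : Prop :=
  ∃ f : X → (ℕ → unitInterval), Continuous f ∧ Function.Surjective f ∧
    ∀ (n : ℕ) (c : Fin n → ℕ), Function.Injective c → IsEssential (fun x i => f x (c i))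

/-! ### Cochains on finite lists and mod `p` chain functionals -/

namespace ListCochain

variable {X Y R : Type*} [CommRing R]

/-- Evaluation of a cochain on the (augmented, ordered) simplicial boundary of a list. -/
def bd : List X → ((List X → R) →ₗ[R] R)
  | [] => 0
  | x :: t => LinearMap.proj t - (bd t).comp (LinearMap.funLeft R R (List.cons x))

/-- The coboundary operator on list cochains. -/
def δ : (List X → R) →ₗ[R] (List X → R) := LinearMap.pi bd

/-- Evaluation of a cochain on the prism over a list spanned by two maps. -/
def prism (f g : X → Y) : List X → ((List Y → R) →ₗ[R] R)
  | [] => 0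
  | x :: t => LinearMap.proj (f x :: g x :: t.map g) -
      (prism f g t).comp (LinearMap.funLeft R R (List.cons (f x)))

/-- The cochain homotopy between the pullbacks along two maps. -/
def prismOp (f g : X → Y) : (List Y → R) →ₗ[R] (List X → R) := LinearMap.pi (prism f g)

/-- Pullback of list cochains. -/
def pullback (f : X → Y) : (List Y → R) →ₗ[R] (List X → R) := LinearMap.funLeft R R (List.map f)

@[simp] lemma pullback_apply (f : X → Y) (α : List Y → R) (t : List X) :
    pullback f α t = α (t.map f) := rfl

@[simp] lemma δ_nil (α : List X → R) : δ α [] = 0 := rfl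

lemma δ_cons (α : List X → R) (x : X) (t : List X) :
    δ α (x :: t) = α t - δ (fun s => α (x :: s)) t := rfl

lemma prismOp_nil (f g : X → Y) (α : List Y → R) : prismOp f g α [] = 0 := rfl

lemma prismOp_cons (f g : X → Y) (α : List Y → R) (x : X) (t : List X) :
    prismOp f g α (x :: t) =
      α (f x :: g x :: t.map g) - prismOp f g (fun s => α (f x :: s)) t := rfl

lemma δ_δ (α : List X → R) : δ (δ α) = 0 := by
  funext t
  induction t generalizing α with
  | nil => rfl
  | cons x t ih =>
    have h : (fun s => δ α (x :: s)) = α - δ (fun s => α (x :: s)) := rfl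
    rw [δ_cons, h, map_sub, Pi.sub_apply, ih]
    simp

lemma δ_pullback (f : X → Y) (α : List Y → R) : δ (pullback f α) = pullback f (δ α) := by
  funext t
  induction t generalizing α with
  | nil => rfl
  | cons x t ih =>
    have := ih (fun s => α (f x :: s))
    rw [pullback_apply, List.map_cons, δ_cons, δ_cons]
    exact congrArg (α (t.map f) - ·) this

lemma δ_prismOp (f g : X → Y) (α : List Y → R) :
    δ (prismOp f g α) + prismOp f g (δ α) = pullback g α - pullback f α := by
  funext t
  induction t generalizing α with
  | nil => simp [prismOp_nil]
  | cons x t ih =>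
    have h1 : (fun s => prismOp f g α (x :: s)) =
        pullback g (fun s => α (f x :: g x :: s)) - prismOp f g (fun s => α (f x :: s)) := rfl
    have h2 : (fun s => δ α (f x :: s)) = α - δ (fun s => α (f x :: s)) := rfl
    have h3 := ih (fun s => α (f x :: s))
    simp only [Pi.add_apply, Pi.sub_apply, pullback_apply] at h3
    simp only [Pi.add_apply, Pi.sub_apply, pullback_apply, List.map_cons]
    rw [δ_cons, prismOp_cons, h1, h2, map_sub, map_sub, δ_pullback, δ_cons, δ_cons]
    simp only [Pi.sub_apply, pullback_apply]
    linear_combination h3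

lemma prismOp_eq_zero {f g : X → Y} {α : List Y → R} {t : List X}
    (h : ∀ l : List Y, (∀ y ∈ l, ∃ x ∈ t, y = f x ∨ y = g x) → α l = 0) :
    prismOp f g α t = 0 := by
  induction t generalizing α with
  | nil => rfl
  | cons x t ih =>
    rw [prismOp_cons, h, ih, sub_zero]
    · intro l hl
      apply h
      intro y hy
      rcases List.mem_cons.1 hy with rfl | hy
      · exact ⟨x, by simp, Or.inl rfl⟩
      · obtain ⟨z, hz, h'⟩ := hl y hy
        exact ⟨z, List.mem_cons_of_mem _ hz, h'⟩
    · intro y hy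
      simp only [List.mem_cons, List.mem_map] at hy
      rcases hy with rfl | rfl | ⟨z, hz, rfl⟩
      · exact ⟨x, by simp, Or.inl rfl⟩
      · exact ⟨x, by simp, Or.inr rfl⟩
      · exact ⟨z, List.mem_cons_of_mem _ hz, Or.inr rfl⟩

/-- The sum of the first `n` prism operators of a sequence of maps. -/
def prismSum (f : ℕ → X → Y) (n : ℕ) : (List Y → R) →ₗ[R] (List X → R) :=
  ∑ i ∈ Finset.range n, prismOp (f i) (f (i + 1))

lemma prismSum_apply (f : ℕ → X → Y) (n : ℕ) (α : List Y → R) (t : List X) :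
    prismSum f n α t = ∑ i ∈ Finset.range n, prismOp (f i) (f (i + 1)) α t := by
  simp [prismSum]

lemma prismSum_nil (f : ℕ → X → Y) (n : ℕ) (α : List Y → R) : prismSum f n α [] = 0 := by
  simp [prismSum_apply, prismOp_nil]

lemma δ_prismSum (f : ℕ → X → Y) (n : ℕ) (α : List Y → R) :
    δ (prismSum f n α) + prismSum f n (δ α) = pullback (f n) α - pullback (f 0) α := by
  induction n with
  | zero => simp [prismSum]
  | succ n ih =>
    have h := δ_prismOp (f n) (f (n + 1)) α
    have e : ∀ β : List Y → R, prismSum f (n + 1) β =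
        prismSum f n β + prismOp (f n) (f (n + 1)) β := fun β => by
      simp [prismSum, Finset.sum_range_succ]
    rw [e, e, map_add]
    linear_combination (exp := 1) ih + h

/-- The operator applying, on a list with head `x`, the prism sum of length `k x`. -/
def headPrism (f : ℕ → X → Y) (k : X → ℕ) : (List Y → R) →ₗ[R] (List X → R) :=
  LinearMap.pi fun t => match t with
    | [] => 0
    | x :: t => (LinearMap.proj (x :: t)).comp (prismSum f (k x))

/-- The cochain map obtained by spreading the pullbacks along `x ↦ f (k x) x` with prisms. -/
def spread (f : ℕ → X → Y) (k : X → ℕ) : (List Y → R) →ₗ[R] (List X → R) :=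
  pullback (f 0) + δ.comp (headPrism f k) + (headPrism f k).comp δ

lemma headPrism_cons (f : ℕ → X → Y) (k : X → ℕ) (α : List Y → R) (x : X) (t : List X) :
    headPrism f k α (x :: t) = prismSum f (k x) α (x :: t) := rfl

lemma spread_apply (f : ℕ → X → Y) (k : X → ℕ) (α : List Y → R) :
    spread f k α = pullback (f 0) α + δ (headPrism f k α) + headPrism f k (δ α) := rfl

lemma δ_spread (f : ℕ → X → Y) (k : X → ℕ) (α : List Y → R) :
    δ (spread f k α) = spread f k (δ α) := by
  simp [spread_apply, δ_δ, δ_pullback]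

lemma spread_nil (f : ℕ → X → Y) (k : X → ℕ) (α : List Y → R) :
    spread f k α [] = α [] := by
  simp only [spread_apply, Pi.add_apply, δ_nil, pullback_apply, List.map_nil, add_zero]
  exact add_zero _

lemma spread_cons (f : ℕ → X → Y) (k : X → ℕ) (α : List Y → R) (x : X) (t : List X) :
    spread f k α (x :: t) = α ((x :: t).map (f (k x))) +
      (headPrism f k α t - prismSum f (k x) α t) := by
  have h := congrFun (δ_prismSum f (k x) α) (x :: t)
  have e : (fun s => headPrism f k α (x :: s)) = fun s => prismSum f (k x) α (x :: s) := rfl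
  simp only [spread_apply, Pi.add_apply]
  rw [headPrism_cons, δ_cons, e]
  simp only [Pi.add_apply, Pi.sub_apply] at h
  rw [δ_cons] at h
  simp only [pullback_apply] at h ⊢
  linear_combination h

/-- The cochain with value `1` on singletons and `0` elsewhere. -/
def one : List X → R
  | [_] => 1
  | _ => 0

lemma one_map (f : X → Y) (t : List X) : (one (t.map f) : R) = one t := by
  rcases t with _ | ⟨x, _ | ⟨y, t⟩⟩ <;> rfl

lemma prismOp_one (f g : X → Y) : prismOp f g (one : List Y → R) = 0 := by
  funext t
  have h0 : ∀ t : List X, prismOp f g (fun _ : List Y => (0 : R)) t = 0 :=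
    fun t => prismOp_eq_zero fun _ _ => rfl
  rcases t with _ | ⟨x, t⟩
  · rfl
  · rw [prismOp_cons]
    rcases t with _ | ⟨y, t⟩
    · simp [one, prismOp_nil]
    · rw [prismOp_cons]
      simp [one, h0]

lemma spread_one (f : ℕ → X → Y) (k : X → ℕ) : spread f k (one : List Y → R) = one := by
  have h : ∀ n t, prismSum f n (one : List Y → R) t = 0 := fun n t => by
    simp [prismSum_apply, prismOp_one]
  funext t
  rcases t with _ | ⟨x, t⟩
  · exact spread_nil f k one
  · rw [spread_cons, h, one_map]
    rcases t with _ | ⟨y, t⟩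
    · exact (congrArg _ (sub_zero _)).trans (add_zero _)
    · simp [headPrism_cons, h]

/-- The cup product of the coboundaries of a list of functions. -/
def cup : List (X → R) → List X → R
  | [], t => one t
  | s :: S, x :: y :: t => (s y - s x) * cup S (y :: t)
  | _, _ => 0

/-- The product of a function with the cup product of the coboundaries of further functions. -/
def cupPre (s : X → R) (S : List (X → R)) : List X → R
  | [] => 0
  | x :: t => s x * cup S (x :: t)

lemma cup_nil (S : List (X → R)) : cup S [] = 0 := by
  cases S <;> rfl

lemma cup_eq_δ_aux (s : X → R) (S : List (X → R)) (h : δ (cup S) = 0) :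
    cup (s :: S) = δ (cupPre s S) := by
  funext t
  rcases t with _ | ⟨x, t⟩
  · rfl
  · have e : (fun r => cupPre s S (x :: r)) = s x • fun r => cup S (x :: r) := rfl
    have h' := congrFun h (x :: t)
    rw [δ_cons] at h'
    rw [δ_cons, e, map_smul, Pi.smul_apply, smul_eq_mul]
    rcases t with _ | ⟨y, t⟩
    · simp [cup, cupPre]
    · simp only [cup, cupPre, Pi.zero_apply] at h' ⊢
      linear_combination -(s x * h')

lemma δ_cup (S : List (X → R)) : δ (cup S) = 0 := by
  induction S with
  | nil =>
    funext t
    rcases t with _ | ⟨x, _ | ⟨y, _ | ⟨z, t⟩⟩⟩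
    · rfl
    · simp [cup, δ_cons, one]
    · simp [cup, δ_cons, one]
    · have h0 : (fun r : List X => (0 : R)) = 0 := rfl
      simp [cup, δ_cons, one, h0]
  | cons s S ih => rw [cup_eq_δ_aux s S ih, δ_δ]

lemma cup_cons (s : X → R) (S : List (X → R)) : cup (s :: S) = δ (cupPre s S) :=
  cup_eq_δ_aux s S (δ_cup S)

lemma cup_ne_zero {S : List (X → R)} {t : List X} (h : cup S t ≠ 0) :
    ∃ x ∈ t, ∀ s ∈ S, ∃ y ∈ t, ∃ z ∈ t, s y ≠ s z := by
  suffices H : t ≠ [] ∧ ∀ s ∈ S, ∃ y ∈ t, ∃ z ∈ t, s y ≠ s z by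
    obtain ⟨x, hx⟩ := List.exists_mem_of_ne_nil t H.1
    exact ⟨x, hx, H.2⟩
  refine ⟨fun e => h (e ▸ cup_nil S), ?_⟩
  induction S generalizing t with
  | nil => simp
  | cons s S ih =>
    rcases t with _ | ⟨x, _ | ⟨y, t⟩⟩
    · exact absurd rfl h
    · exact absurd rfl h
    · simp only [cup] at h
      intro s' hs'
      rcases List.mem_cons.1 hs' with rfl | hs'
      · refine ⟨y, by simp, x, by simp, fun e => h (by rw [e, sub_self, zero_mul])⟩
      · obtain ⟨a, ha, b, hb, hab⟩ := ih (right_ne_zero_of_mul h) s' hs'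
        exact ⟨a, List.mem_cons_of_mem _ ha, b, List.mem_cons_of_mem _ hb, hab⟩

/-- `α` vanishes on the good lists contained in `C`. -/
def Van (good : Set (List X)) (C : Set X) (α : List X → R) : Prop :=
  ∀ t ∈ good, (∀ x ∈ t, x ∈ C) → α t = 0

/-- `L` is (evaluation on) a relative fundamental chain, made of good lists in `C`, for the
cube structure on `C` given by the list of pairs of opposite faces. -/
def IsCubeChain (good : Set (List X)) :
    List (Set X × Set X) → Set X → ((List X → R) →ₗ[R] R) → Prop
  | [], C, L => (∀ α, Van good C α → L α = 0) ∧ (∀ α : List X → R, α [] = 0 → L (δ α) = 0) ∧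
      L one = 1
  | P :: ps, C, L => (∀ α, Van good C α → L α = 0) ∧
      ∃ L', IsCubeChain good ps (C ∩ P.2) L' ∧ ∀ α, Van good (C ∩ P.1) α →
        (∀ Q ∈ ps, Van good (C ∩ Q.1) α ∧ Van good (C ∩ Q.2) α) → L (δ α) = L' α

lemma Van.mono {good : Set (List X)} {C D : Set X} {α : List X → R} (h : Van good C α)
    (hD : D ⊆ C) : Van good D α := fun t ht htD => h t ht fun x hx => hD (htD x hx)

lemma IsCubeChain.eq_zero {good : Set (List X)} {ps : List (Set X × Set X)} {C : Set X}
    {L : (List X → R) →ₗ[R] R} (h : IsCubeChain good ps C L) {α : List X → R}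
    (hα : Van good C α) : L α = 0 := by
  cases ps <;> exact h.1 α hα

lemma IsCubeChain.stokes_zero {good : Set (List X)} {ps : List (Set X × Set X)} {C : Set X}
    {L : (List X → R) →ₗ[R] R} (h : IsCubeChain good ps C L) {α : List X → R} (h0 : α [] = 0)
    (hα : ∀ Q ∈ ps, Van good (C ∩ Q.1) α ∧ Van good (C ∩ Q.2) α) : L (δ α) = 0 := by
  cases ps with
  | nil => exact h.2.1 α h0
  | cons P ps =>
    obtain ⟨-, L', hL', hs⟩ := h
    rw [hs α (hα P (by simp)).1 fun Q hQ => hα Q (List.mem_cons_of_mem _ hQ)]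
    exact hL'.eq_zero (hα P (by simp)).2

lemma IsCubeChain.map_cup {good : Set (List X)} {ι : Type*} {idx : List ι}
    {P : ι → Set X × Set X} {s : ι → X → R} {C : Set X} {L : (List X → R) →ₗ[R] R}
    (h : IsCubeChain good (idx.map P) C L)
    (hs : ∀ i ∈ idx, (∀ z ∈ (P i).1, s i z = 0) ∧ ∀ z ∈ (P i).2, s i z = 1) :
    L (cup (idx.map s)) = 1 := by
  have cupz : ∀ (idx : List ι) (t : List X), (∃ i ∈ idx, ∃ c, ∀ z ∈ t, s i z = c) →
      cup (idx.map s) t = 0 := by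
    rintro idx t ⟨i, hi, c, hc⟩
    by_contra hne
    obtain ⟨-, -, h⟩ := cup_ne_zero hne
    obtain ⟨y, hy, z, hz, hyz⟩ := h (s i) (List.mem_map_of_mem hi)
    exact hyz ((hc y hy).trans (hc z hz).symm)
  induction idx generalizing C L with
  | nil => exact h.2.2
  | cons i idx ih =>
    obtain ⟨-, L', hL', hst⟩ := h
    have h1 := ih hL' fun j hj => hs j (List.mem_cons_of_mem _ hj)
    rw [List.map_cons, cup_cons, hst, ← h1, ← sub_eq_zero, ← map_sub]
    · apply hL'.eq_zero
      intro t _ ht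
      rcases t with _ | ⟨x, t⟩
      · simp [cupPre, cup_nil]
      · have := (hs i (by simp)).2 x (ht x (by simp)).2
        simp [cupPre, this]
    · intro t _ ht
      rcases t with _ | ⟨x, t⟩
      · rfl
      · have := (hs i (by simp)).1 x (ht x (by simp)).2
        simp [cupPre, this]
    · intro Q hQ
      obtain ⟨j, hj, rfl⟩ := List.mem_map.1 hQ
      have hsj := hs j (List.mem_cons_of_mem _ hj)
      constructor
      · intro t _ ht
        rcases t with _ | ⟨x, t⟩
        · rfl
        · rw [cupPre, cupz idx _ ⟨j, hj, 0, fun z hz => hsj.1 z (ht z hz).2⟩, mul_zero]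
      · intro t _ ht
        rcases t with _ | ⟨x, t⟩
        · rfl
        · rw [cupPre, cupz idx _ ⟨j, hj, 1, fun z hz => hsj.2 z (ht z hz).2⟩, mul_zero]

lemma IsCubeChain.comp {good good' : Set (List X)} {ps : List (Set X × Set X)} {C E : Set X}
    {L : (List X → R) →ₗ[R] R} (h : IsCubeChain good ps C L)
    (θ : (List X → R) →ₗ[R] (List X → R)) (hδ : ∀ α, δ (θ α) = θ (δ α))
    (h0 : ∀ α : List X → R, θ α [] = α []) (h1 : θ one = one) (p : Set X → Prop)
    (hinter : ∀ C D, p C → p D → p (C ∩ D))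
    (hθ : ∀ D, p D → ∀ α, Van good' (D ∩ E) α → Van good D (θ α))
    (hC : p C) (hps : ∀ Q ∈ ps, p Q.1 ∧ p Q.2) :
    IsCubeChain good' ps (C ∩ E) (L.comp θ) := by
  induction ps generalizing C L with
  | nil =>
    refine ⟨fun α hα => h.eq_zero (hθ C hC α hα), fun α hα => ?_, ?_⟩
    · rw [LinearMap.comp_apply, ← hδ]
      exact h.2.1 _ ((h0 α).trans hα)
    · rw [LinearMap.comp_apply, h1]
      exact h.2.2
  | cons P ps ih =>
    refine ⟨fun α hα => h.eq_zero (hθ C hC α hα), ?_⟩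
    obtain ⟨-, L', hL', hst⟩ := h
    have hP := hps P (by simp)
    have hps' : ∀ Q ∈ ps, p Q.1 ∧ p Q.2 := fun Q hQ => hps Q (List.mem_cons_of_mem _ hQ)
    refine ⟨L'.comp θ, ?_, fun α hα hαs => ?_⟩
    · rw [inter_right_comm]
      exact ih hL' (hinter _ _ hC hP.2) hps'
    · rw [LinearMap.comp_apply, ← hδ]
      refine hst _ (hθ _ (hinter _ _ hC hP.1) _ (inter_right_comm C E P.1 ▸ hα)) fun Q hQ => ?_
      have hQ' := hps' Q hQ
      exact ⟨hθ _ (hinter _ _ hC hQ'.1) _ (inter_right_comm C E Q.1 ▸ (hαs Q hQ).1),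
        hθ _ (hinter _ _ hC hQ'.2) _ (inter_right_comm C E Q.2 ▸ (hαs Q hQ).2)⟩

/-- Taking the product of a cube chain with a subdivided interval. -/
lemma IsCubeChain.cons {good good' : Set (List X)} {ps : List (Set X × Set X)}
    {L : (List X → R) →ₗ[R] R} (h : IsCubeChain good ps univ L) (f : ℕ → X → X) (N : ℕ)
    {A B : Set X} (hA : ∀ x, f 0 x ∈ A) (hB : ∀ x, f N x ∈ B)
    (hgood : ∀ t ∈ good, ∀ e < N, ∀ l : List X,
      (∀ y ∈ l, ∃ x ∈ t, y = f e x ∨ y = f (e + 1) x) → l ∈ good')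
    (hgood' : ∀ t ∈ good, ∀ e, t.map (f e) ∈ good')
    (hps : ∀ Q ∈ ps, (∀ e, ∀ x ∈ Q.1, f e x ∈ Q.1) ∧ ∀ e, ∀ x ∈ Q.2, f e x ∈ Q.2) :
    IsCubeChain good' ((A, B) :: ps) univ (L.comp (prismSum f N)) := by
  have van : ∀ D : Set X, (∀ e, ∀ x ∈ D, f e x ∈ D) → ∀ α : List X → R, Van good' D α →
      Van good D (prismSum f N α) := by
    intro D hD α hα t ht htD
    rw [prismSum_apply]
    refine Finset.sum_eq_zero fun e he => prismOp_eq_zero fun l hl => ?_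
    refine hα l (hgood t ht e (Finset.mem_range.1 he) l hl) fun y hy => ?_
    obtain ⟨x, hx, rfl | rfl⟩ := hl y hy <;> exact hD _ _ (htD x hx)
  refine ⟨fun α hα => h.eq_zero (van univ (fun _ _ _ => mem_univ _) α hα),
    L.comp (pullback (f N)), ?_, fun α hα hαs => ?_⟩
  · refine h.comp (pullback (f N)) (δ_pullback (f N)) (fun α => rfl)
      (funext fun t => one_map (f N) t) (fun D => ∀ e, ∀ x ∈ D, f e x ∈ D)
      (fun C D hC hD e x hx => ⟨hC e x hx.1, hD e x hx.2⟩) (fun D hD α hα t ht htD => ?_)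
      (fun _ _ _ => mem_univ _) hps
    refine hα _ (hgood' t ht N) fun y hy => ?_
    obtain ⟨x, hx, rfl⟩ := List.mem_map.1 hy
    exact ⟨hD N x (htD x hx), hB x⟩
  · have hst := δ_prismSum f N α
    have e : prismSum f N (δ α) = pullback (f N) α - pullback (f 0) α - δ (prismSum f N α) := by
      rw [← hst, add_sub_cancel_left]
    rw [LinearMap.comp_apply, e, map_sub, map_sub, h.stokes_zero (prismSum_nil f N α),
      h.eq_zero (α := pullback (f 0) α), sub_zero, sub_zero, LinearMap.comp_apply]
    · intro t ht _
      refine hα _ (hgood' t ht 0) fun y hy => ?_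
      obtain ⟨x, -, rfl⟩ := List.mem_map.1 hy
      exact ⟨mem_univ _, hA x⟩
    · intro Q hQ
      have hQ' := hps Q hQ
      rw [univ_inter, univ_inter]
      exact ⟨van _ hQ'.1 _ (univ_inter Q.1 ▸ (hαs Q hQ).1),
        van _ hQ'.2 _ (univ_inter Q.2 ▸ (hαs Q hQ).2)⟩

end ListCochain

section

open scoped Uniformity Topology

/-- The point of the circle at a given number of turns. -/
def turn (x : ℝ) : Circle := Circle.exp (2 * Real.pi * x)

lemma turn_add (x y : ℝ) : turn (x + y) = turn x * turn y := by
  rw [turn, mul_add, Circle.exp_add]; rfl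

lemma turn_sub (x y : ℝ) : turn (x - y) = turn x / turn y := by
  rw [turn, mul_sub, Circle.exp_sub]; rfl

lemma turn_zero : turn 0 = 1 := by simp [turn]

lemma turn_one : turn 1 = 1 := by simp [turn]

lemma turn_nat_mul (n : ℕ) (x : ℝ) : turn (n * x) = turn x ^ n := by
  induction n with
  | zero => simp [turn_zero]
  | succ n ih => rw [Nat.cast_succ, add_mul, one_mul, turn_add, ih, pow_succ]

lemma turn_natCast (n : ℕ) : turn n = 1 := by
  rw [← mul_one (n : ℝ), turn_nat_mul, turn_one, one_pow]

lemma turn_intCast (n : ℤ) : turn n = 1 := by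
  obtain ⟨k, rfl | rfl⟩ := n.eq_nat_or_neg
  · exact_mod_cast turn_natCast k
  · rw [Int.cast_neg, ← zero_sub, turn_sub, turn_zero, Int.cast_natCast, turn_natCast, div_one]

lemma norm_turn_sub_one (x : ℝ) : ‖(turn x : ℂ) - 1‖ = 2 * |Real.sin (Real.pi * x)| := by
  rw [turn, Circle.coe_exp, mul_comm, Complex.norm_exp_I_mul_ofReal_sub_one, norm_mul,
    Real.norm_eq_abs, Real.norm_eq_abs, abs_two]
  congr 3
  ring

lemma norm_turn_sub_one_le (x : ℝ) : ‖(turn x : ℂ) - 1‖ ≤ 2 * Real.pi * |x| := by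
  rw [norm_turn_sub_one]
  have := Real.abs_sin_le_abs (x := Real.pi * x)
  rw [abs_mul, abs_of_pos Real.pi_pos] at this
  linarith

lemma four_mul_abs_le_norm_turn_sub_one {x : ℝ} (hx : |x| ≤ 1 / 2) :
    4 * |x| ≤ ‖(turn x : ℂ) - 1‖ := by
  rw [norm_turn_sub_one]
  have hpi := Real.pi_pos
  have h := Real.mul_le_sin (x := Real.pi * |x|) (by positivity) (by nlinarith)
  have h2 : 2 / Real.pi * (Real.pi * |x|) = 2 * |x| := by field_simp
  have h3 : Real.sin (Real.pi * |x|) ≤ |Real.sin (Real.pi * x)| := by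
    rcases abs_choice x with h | h <;> rw [h]
    · exact le_abs_self _
    · rw [mul_neg, Real.sin_neg]; exact neg_le_abs _
  linarith

lemma norm_turn_sub_turn (x y : ℝ) : ‖(turn x : ℂ) - turn y‖ = ‖(turn (x - y) : ℂ) - 1‖ := by
  have h : (turn x : ℂ) - turn y = turn y * ((turn (x - y) : ℂ) - 1) := by
    rw [mul_sub, ← Circle.coe_mul, ← turn_add]; simp
  rw [h, norm_mul, Circle.norm_coe, one_mul]

lemma norm_turn_sub_turn_le (x y : ℝ) :
    ‖(turn x : ℂ) - turn y‖ ≤ 2 * Real.pi * |x - y| := by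
  rw [norm_turn_sub_turn]; exact norm_turn_sub_one_le _

lemma exists_int_abs_sub_le (x y : ℝ) :
    ∃ s : ℤ, 4 * |x - y - s| ≤ ‖(turn x : ℂ) - turn y‖ := by
  refine ⟨round (x - y), (four_mul_abs_le_norm_turn_sub_one (abs_sub_round _)).trans_eq ?_⟩
  rw [norm_turn_sub_turn, turn_sub (x - y), turn_intCast, div_one]

lemma exists_eq_turn (w : Circle) : ∃ a : ℝ, 0 ≤ a ∧ a < 1 ∧ w = turn a := by
  obtain ⟨t, rfl⟩ := Circle.exp_surjective w
  refine ⟨Int.fract (t / (2 * Real.pi)), Int.fract_nonneg _, Int.fract_lt_one _, ?_⟩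
  rw [← Int.self_sub_floor, turn_sub, turn_intCast, div_one, turn]
  congr 1
  have := Real.pi_pos
  field_simp

lemma exists_eq_norm_mul_turn (w : ℂ) : ∃ a : ℝ, 0 ≤ a ∧ a < 1 ∧ w = ‖w‖ * turn a := by
  obtain ⟨a, h0, h1, h⟩ := exists_eq_turn (Circle.exp w.arg)
  exact ⟨a, h0, h1, by rw [← h, Circle.coe_exp, Complex.norm_mul_exp_arg_mul_I]⟩

section PeriodicSum

variable {p N : ℕ} {w : ℕ → ZMod p}

lemma sum_range_add_period (hw : ∀ e, w (e + N) = w e) (n T : ℕ) :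
    ∑ e ∈ Finset.range (n + T * (p * N)), w e = ∑ e ∈ Finset.range n, w e := by
  have hper : ∀ k e, w (e + k * N) = w e := fun k => by
    induction k with
    | zero => simp
    | succ k ih => intro e; rw [Nat.succ_mul, ← add_assoc, hw, ih]
  have hN : ∀ n, ∑ e ∈ Finset.range N, w (n + e) = ∑ e ∈ Finset.range N, w e := fun n => by
    induction n with
    | zero => simp
    | succ n ih =>
      have h1 := Finset.sum_range_succ (fun e => w (n + e)) N
      rw [Finset.sum_range_succ', hw, add_zero] at h1
      rw [← ih, ← add_right_cancel h1]
      exact Finset.sum_congr rfl fun e _ => by rw [add_right_comm, add_assoc]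
  have hk : ∀ k n, ∑ e ∈ Finset.range (n + k * N), w e =
      ∑ e ∈ Finset.range n, w e + k * ∑ e ∈ Finset.range N, w e := fun k => by
    induction k with
    | zero => simp
    | succ k ih =>
      intro n
      rw [Nat.succ_mul, ← add_assoc, Finset.sum_range_add, ih, hN]
      push_cast; ring
  rw [← mul_assoc, hk]
  simp

lemma sum_range_eq_of_zero {n m : ℕ} (h : n ≤ m) (hw : ∀ e, n ≤ e → e < m → w e = 0) :
    ∑ e ∈ Finset.range n, w e = ∑ e ∈ Finset.range m, w e := by
  refine Finset.sum_subset (by simpa using h) fun e he hn => hw e ?_ (by simpa using he)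
  simpa using hn

lemma sum_range_floor_eq (hw : ∀ e, w (e + N) = w e) {a b σ : ℝ} {s : ℤ} (ha : 0 ≤ a)
    (hb : 0 ≤ b) (hs : |a - b - s| ≤ σ)
    (h0 : ∀ e T : ℕ, |(e : ℝ) - T * (p * N) - p * N * a| ≤ 2 + p * N * σ → w e = 0) :
    ∑ e ∈ Finset.range ⌊p * N * a⌋₊, w e = ∑ e ∈ Finset.range ⌊p * N * b⌋₊, w e := by
  obtain ⟨T, S, hT⟩ : ∃ T S : ℕ, (S : ℤ) = T + s := ⟨s.natAbs, (s.natAbs + s).toNat, by omega⟩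
  have hTs : (S : ℝ) = T + s := by exact_mod_cast hT
  rw [← sum_range_add_period hw _ T, ← sum_range_add_period hw ⌊p * N * b⌋₊ S]
  have ha1 := Nat.floor_le (show 0 ≤ p * N * a by positivity)
  have ha2 := Nat.lt_floor_add_one (p * N * a)
  have hb1 := Nat.floor_le (show 0 ≤ p * N * b by positivity)
  have hb2 := Nat.lt_floor_add_one (p * N * b)
  have hpN : (0 : ℝ) ≤ p * N := by positivity
  have h1 : |p * N * a - p * N * b - p * N * s| ≤ p * N * σ := by
    rw [← mul_sub, ← mul_sub, abs_mul, abs_of_nonneg hpN]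
    exact mul_le_mul_of_nonneg_left hs hpN
  have hσ : 0 ≤ p * N * σ := (abs_nonneg _).trans h1
  rw [abs_le] at h1
  have hS : (S : ℝ) * (p * N) = T * (p * N) + p * N * s := by rw [hTs]; ring
  rcases le_total (⌊p * N * a⌋₊ + T * (p * N)) (⌊p * N * b⌋₊ + S * (p * N)) with h | h
  · refine sum_range_eq_of_zero h fun e h1e h2e => h0 e T ?_
    have h1e : (⌊p * N * a⌋₊ : ℝ) + T * (p * N) ≤ e := by exact_mod_cast h1e
    have h2e : (e : ℝ) < ⌊p * N * b⌋₊ + S * (p * N) := by exact_mod_cast h2e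
    rw [abs_le]; constructor <;> linarith
  · refine (sum_range_eq_of_zero h fun e h1e h2e => h0 e T ?_).symm
    have h1e : (⌊p * N * b⌋₊ : ℝ) + S * (p * N) ≤ e := by exact_mod_cast h1e
    have h2e : (e : ℝ) < ⌊p * N * a⌋₊ + T * (p * N) := by exact_mod_cast h2e
    rw [abs_le]; constructor <;> linarith

end PeriodicSum

end

section

open ListCochain
open scoped Uniformity Topology

lemma exists_entourage_of_continuous {T Z W : Type*} [PseudoMetricSpace T] [UniformSpace Z]
    [UniformSpace W] [CompactSpace T] [CompactSpace Z] {φ : T × Z → W} (hφ : Continuous φ)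
    {V : Set (W × W)} (hV : V ∈ 𝓤 W) :
    ∃ U ∈ 𝓤 Z, ∃ η > 0, ∀ v v' z w, (z, w) ∈ U → dist v v' < η → (φ (v, z), φ (v', w)) ∈ V := by
  have h := CompactSpace.uniformContinuous_of_continuous hφ hV
  rw [Filter.mem_map, uniformity_prod_eq_comap_prod, Filter.mem_comap] at h
  obtain ⟨S, hS, hSV⟩ := h
  obtain ⟨A, hA, U, hU, hAU⟩ := Filter.mem_prod_iff.1 hS
  obtain ⟨η, hη, hηA⟩ := Metric.mem_uniformity_dist.1 hA
  exact ⟨U, hU, η, hη, fun v v' z w hz hv => hSV (a := ((v, z), (v', w))) (hAU ⟨hηA hv, hz⟩)⟩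

/-- The product of the Hilbert cube and an infinite-dimensional torus. -/
abbrev CubeTorus : Type := (ℕ → unitInterval) × (ℕ → Circle)

/-- Replace one circle coordinate. -/
def setCircle (m : ℕ) (v : Circle) (z : CubeTorus) : CubeTorus := (z.1, update z.2 m v)

/-- Replace one interval coordinate. -/
def setInterval (m : ℕ) (v : unitInterval) (z : CubeTorus) : CubeTorus := (update z.1 m v, z.2)

lemma continuous_setCircle (m : ℕ) :
    Continuous fun q : Circle × CubeTorus => setCircle m q.1 q.2 := by
  unfold setCircle
  fun_prop

lemma continuous_setInterval (m : ℕ) :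
    Continuous fun q : unitInterval × CubeTorus => setInterval m q.1 q.2 := by
  unfold setInterval
  fun_prop

/-- The failure of the `j`-th circle coordinate to be the `p`-th power of the direction
of `F j`. -/
def defect (p : ℕ) (F : ℕ → CubeTorus → ℂ) (j : ℕ) (z : CubeTorus) : ℝ :=
  ‖F j z ^ p - (‖F j z‖ : ℂ) ^ p * z.2 j‖

/-- Lists of `V`-close points whose first `m` defects are at most `δ`. -/
def almostLists (p : ℕ) (F : ℕ → CubeTorus → ℂ) (m : ℕ) (δ : ℝ) (V : Set (CubeTorus × CubeTorus)) :
    Set (List CubeTorus) :=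
  {t | (∀ z ∈ t, ∀ j < m, defect p F j z ≤ δ) ∧ ∀ z ∈ t, ∀ w ∈ t, (z, w) ∈ V}

/-- The pair of opposite faces of `CubeTorus` in a given interval direction. -/
def facePair (i : ℕ) : Set CubeTorus × Set CubeTorus := ({z | z.1 i = 0}, {z | z.1 i = 1})

variable {p : ℕ} {F : ℕ → CubeTorus → ℂ}

lemma exists_isCubeChain_zero (δ : ℝ) {n : ℕ} {c : Fin n → ℕ} (hc : Injective c)
    (idx : List (Fin n)) (hidx : idx.Nodup) :
    ∀ V ∈ 𝓤 CubeTorus, ∃ L : (List CubeTorus → ZMod p) →ₗ[ZMod p] ZMod p,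
      IsCubeChain (almostLists p F 0 δ V) (idx.map fun i => facePair (c i)) univ L := by
  induction idx with
  | nil =>
    intro V hV
    refine ⟨LinearMap.proj [(fun _ => 0, fun _ => 1)], fun α hα => hα _ ?_ (by simp), fun α h0 => ?_,
      rfl⟩
    · refine ⟨by simp, ?_⟩
      simp only [List.mem_singleton, forall_eq]
      exact refl_mem_uniformity hV
    · show ListCochain.δ α [_] = 0
      rw [δ_cons, h0, δ_nil, sub_zero]
  | cons i idx ih =>
    intro V hV
    obtain ⟨U, hU, η, hη, hUV⟩ := exists_entourage_of_continuous (continuous_setInterval (c i)) hV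
    obtain ⟨L, hL⟩ := ih (List.nodup_cons.1 hidx).2 U hU
    obtain ⟨N, hN⟩ := exists_nat_one_div_lt hη
    let f : ℕ → CubeTorus → CubeTorus := fun e =>
      setInterval (c i) (projIcc (0 : ℝ) 1 zero_le_one (e / (N + 1 : ℕ)))
    have hd : ∀ e : ℕ, dist (projIcc (0 : ℝ) 1 zero_le_one (e / (N + 1 : ℕ)))
        (projIcc (0 : ℝ) 1 zero_le_one ((e + 1 : ℕ) / (N + 1 : ℕ))) < η := by
      intro e
      refine lt_of_le_of_lt ?_ hN
      rw [Subtype.dist_eq, Real.dist_eq]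
      refine (abs_projIcc_sub_projIcc _).trans_eq ?_
      rw [← sub_div, abs_div]
      push_cast
      rw [abs_of_pos (show (0 : ℝ) < N + 1 by positivity)]
      simp
    refine ⟨_, hL.cons f (N + 1) (fun z => ?_) (fun z => ?_) ?_ ?_ ?_⟩
    · simp [f, setInterval]
    · show update z.1 (c i) _ (c i) = 1
      rw [update_self, div_self (by positivity), projIcc_right]
      rfl
    · intro t ht e he l hl
      refine ⟨by simp, fun y hy y' hy' => ?_⟩
      obtain ⟨x, hx, hxy⟩ := hl y hy
      obtain ⟨x', hx', hxy'⟩ := hl y' hy'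
      have hxx := ht.2 x hx x' hx'
      rcases hxy with rfl | rfl <;> rcases hxy' with rfl | rfl
      · exact hUV _ _ x x' hxx (by simpa using hη)
      · exact hUV _ _ x x' hxx (hd e)
      · exact hUV _ _ x x' hxx (by rw [dist_comm]; exact hd e)
      · exact hUV _ _ x x' hxx (by simpa using hη)
    · intro t ht e
      refine ⟨by simp, fun y hy y' hy' => ?_⟩
      obtain ⟨x, hx, rfl⟩ := List.mem_map.1 hy
      obtain ⟨x', hx', rfl⟩ := List.mem_map.1 hy'
      exact hUV _ _ x x' (ht.2 x hx x' hx') (by simpa using hη)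
    · intro Q hQ
      obtain ⟨j, hj, rfl⟩ := List.mem_map.1 hQ
      have hij : c j ≠ c i := fun h => (List.nodup_cons.1 hidx).1 (hc h ▸ hj)
      refine ⟨fun e z hz => ?_, fun e z hz => ?_⟩
      · show update z.1 (c i) _ (c j) = 0
        rw [update_of_ne hij]; exact hz
      · show update z.1 (c i) _ (c j) = 1
        rw [update_of_ne hij]; exact hz

end

section

open ListCochain
open scoped Uniformity Topology
variable {p : ℕ} {F : ℕ → CubeTorus → ℂ}

lemma defect_setCircle_le {m : ℕ} (hF : ∀ v z, F m (setCircle m v z) = F m z) {x z : CubeTorus}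
    {δ : ℝ} (v : Circle) (h1 : dist (F m x ^ p) (F m z ^ p) < δ / 8)
    (h2 : dist (‖F m x‖ ^ p) (‖F m z‖ ^ p) < δ / 8)
    (hx : ‖F m x ^ p - (‖F m x‖ : ℂ) ^ p * v‖ ≤ δ / 2) :
    defect p F m (setCircle m v z) ≤ δ := by
  have hv : (setCircle m v z).2 m = v := update_self ..
  rw [defect, hF, hv]
  have e : F m z ^ p - (‖F m z‖ : ℂ) ^ p * v = (F m x ^ p - (‖F m x‖ : ℂ) ^ p * v) -
      (F m x ^ p - F m z ^ p) + (((‖F m x‖ ^ p - ‖F m z‖ ^ p : ℝ) : ℂ) * v) := by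
    push_cast; ring
  have e2 : ‖((‖F m x‖ ^ p - ‖F m z‖ ^ p : ℝ) : ℂ) * v‖ < δ / 8 := by
    rwa [norm_mul, Circle.norm_coe, mul_one, Complex.norm_real, ← dist_eq_norm]
  rw [dist_eq_norm] at h1
  rw [e]
  have := norm_add_le ((F m x ^ p - (‖F m x‖ : ℂ) ^ p * v) - (F m x ^ p - F m z ^ p))
    (((‖F m x‖ ^ p - ‖F m z‖ ^ p : ℝ) : ℂ) * v)
  have := norm_sub_le (F m x ^ p - (‖F m x‖ : ℂ) ^ p * v) (F m x ^ p - F m z ^ p)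
  linarith [norm_nonneg (F m x ^ p - F m z ^ p)]

lemma norm_pow_sub_le (w : ℂ) {a : ℝ} (hw : w = ‖w‖ * turn a) {M ρ δ : ℝ} (hM : ‖w‖ ^ p ≤ M)
    (hρ : 2 * Real.pi * (M * ρ) ≤ δ) {b : ℝ} {T : ℤ} (hb : |p * a + T - b| ≤ ρ) :
    ‖w ^ p - (‖w‖ : ℂ) ^ p * turn b‖ ≤ δ := by
  have h1 : w ^ p - (‖w‖ : ℂ) ^ p * turn b =
      ((‖w‖ ^ p : ℝ) : ℂ) * ((turn (p * a + T) : ℂ) - turn b) := by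
    rw [turn_add, turn_intCast, mul_one, turn_nat_mul, Circle.coe_pow, mul_sub]
    nth_rewrite 1 [hw]
    push_cast
    ring
  rw [h1, norm_mul, Complex.norm_real, Real.norm_of_nonneg (by positivity)]
  have h2 := norm_turn_sub_turn_le (p * a + T) b
  have hpi := Real.pi_pos
  have h0 : 0 ≤ ‖w‖ ^ p := by positivity
  calc ‖w‖ ^ p * ‖(turn (p * a + T) : ℂ) - turn b‖ ≤ M * (2 * Real.pi * ρ) := by
        refine mul_le_mul hM (h2.trans ?_) (norm_nonneg _) (h0.trans hM)
        exact mul_le_mul_of_nonneg_left hb (by positivity)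
    _ = 2 * Real.pi * (M * ρ) := by ring
    _ ≤ δ := hρ

lemma norm_turn_sub_turn_le_of_dist {w w' : ℂ} {a b r ε : ℝ} (hw : w = ‖w‖ * turn a)
    (hw' : w' = ‖w'‖ * turn b) (hr0 : 0 ≤ r) (hr : r < ‖w‖)
    (hd : dist w w' ≤ ε * r) (hε : 0 ≤ ε) :
    ‖(turn a : ℂ) - turn b‖ ≤ 2 * ε := by
  have e : (‖w‖ : ℂ) * ((turn a : ℂ) - turn b) = (w - w') - ((‖w‖ - ‖w'‖ : ℝ) : ℂ) * turn b := by
    push_cast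
    linear_combination hw' - hw
  have h1 : ‖w‖ * ‖(turn a : ℂ) - turn b‖ ≤ ‖w - w'‖ + ‖w - w'‖ := by
    have h2 : ‖(‖w‖ : ℂ) * ((turn a : ℂ) - turn b)‖ = ‖w‖ * ‖(turn a : ℂ) - turn b‖ := by
      rw [norm_mul, Complex.norm_real, norm_norm]
    rw [← h2, e]
    refine (norm_sub_le _ _).trans ?_
    gcongr
    rw [norm_mul, Circle.norm_coe, mul_one, Complex.norm_real]
    exact abs_norm_sub_norm_le w w'
  rw [dist_eq_norm] at hd
  by_contra! hc
  have h4 : ε * r ≤ ε * ‖w‖ := mul_le_mul_of_nonneg_left hr.le hε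
  nlinarith [hr0.trans_lt hr]

lemma exists_isCubeChain_succ (hp : 0 < p) {m : ℕ} (hFc : Continuous (F m))
    (hF : ∀ j ≤ m, ∀ v z, F j (setCircle m v z) = F j z) {ps : List (Set CubeTorus × Set CubeTorus)}
    (hps : ∀ Q ∈ ps, (∀ v, ∀ z ∈ Q.1, setCircle m v z ∈ Q.1) ∧
      ∀ v, ∀ z ∈ Q.2, setCircle m v z ∈ Q.2) {δ : ℝ} (hδ : 0 < δ)
    (h : ∀ V ∈ 𝓤 CubeTorus, ∃ L : (List CubeTorus → ZMod p) →ₗ[ZMod p] ZMod p,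
      IsCubeChain (almostLists p F m δ V) ps univ L)
    {V : Set (CubeTorus × CubeTorus)} (hV : V ∈ 𝓤 CubeTorus) :
    ∃ L : (List CubeTorus → ZMod p) →ₗ[ZMod p] ZMod p,
      IsCubeChain (almostLists p F (m + 1) δ V) ps univ L := by
  have hpi := Real.pi_pos
  have hp' : (0 : ℝ) < p := by exact_mod_cast hp
  obtain ⟨M, hM0, hM⟩ : ∃ M : ℝ, 0 < M ∧ ∀ z, ‖F m z‖ ^ p ≤ M := by
    obtain ⟨B, hB⟩ := (isCompact_range (hFc.norm.pow p)).bddAbove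
    exact ⟨max B 1, by positivity, fun z => (hB ⟨z, rfl⟩).trans (le_max_left _ _)⟩
  obtain ⟨ρ, hρ0, hρ⟩ : ∃ ρ : ℝ, 0 < ρ ∧ 2 * Real.pi * (M * ρ) ≤ δ / 2 :=
    ⟨δ / (4 * Real.pi * M), by positivity, le_of_eq (by field_simp; ring)⟩
  obtain ⟨r, hr0, hr⟩ : ∃ r : ℝ, 0 < r ∧ ∀ x : ℝ, 0 ≤ x → x ≤ r → 2 * x ^ p ≤ δ / 2 := by
    refine ⟨min 1 (δ / 4), by positivity, fun x h0 hx => ?_⟩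
    have h1 := pow_le_of_le_one h0 (hx.trans (min_le_left _ _)) hp.ne'
    linarith [hx.trans (min_le_right _ _)]
  obtain ⟨σ, hσ0, hσ⟩ : ∃ σ : ℝ, 0 < σ ∧ p * σ = ρ / 2 := ⟨ρ / (2 * p), by positivity, by field_simp⟩
  obtain ⟨U₁, hU₁, η, hη, hUV⟩ := exists_entourage_of_continuous (continuous_setCircle m) hV
  have hu : ∀ {E : Type} [PseudoMetricSpace E] {φ : CubeTorus → E} {ε : ℝ}, Continuous φ → 0 < ε →
      {q : CubeTorus × CubeTorus | dist (φ q.1) (φ q.2) < ε} ∈ 𝓤 CubeTorus := fun hφ hε =>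
    CompactSpace.uniformContinuous_of_continuous hφ (Metric.dist_mem_uniformity hε)
  have hU₂ := hu hFc (show 0 < 2 * σ * r by positivity)
  have hU₃ := hu (hFc.pow p) (show 0 < δ / 8 by positivity)
  have hU₄ := hu (hFc.norm.pow p) (show 0 < δ / 8 by positivity)
  obtain ⟨N, hN, hN1, hN2⟩ : ∃ N : ℕ, 0 < N ∧ 2 * Real.pi / N < η ∧ 3 / N ≤ ρ / 2 := by
    have h1 := tendsto_const_div_atTop_nhds_zero_nat (2 * Real.pi)
    have h2 := tendsto_const_div_atTop_nhds_zero_nat (3 : ℝ)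
    obtain ⟨N, ⟨h1, h2⟩, h3⟩ := (((h1.eventually (gt_mem_nhds hη)).and
      (h2.eventually (ge_mem_nhds (half_pos hρ0)))).and (Filter.eventually_gt_atTop 0)).exists
    exact ⟨N, h3, h1, h2⟩
  have hN' : (0 : ℝ) < N := by exact_mod_cast hN
  set U := U₁ ∩ {q : CubeTorus × CubeTorus | dist (F m q.1) (F m q.2) < 2 * σ * r} ∩
    {q : CubeTorus × CubeTorus | dist (F m q.1 ^ p) (F m q.2 ^ p) < δ / 8} ∩
    {q : CubeTorus × CubeTorus | dist (‖F m q.1‖ ^ p) (‖F m q.2‖ ^ p) < δ / 8} with hUdef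
  have hU : U ∈ 𝓤 CubeTorus :=
    Filter.inter_mem (Filter.inter_mem (Filter.inter_mem hU₁ hU₂) hU₃) hU₄
  obtain ⟨L, hL⟩ := h U hU
  choose a ha0 ha1 ha using fun z => exists_eq_norm_mul_turn (F m z)
  set f : ℕ → CubeTorus → CubeTorus := fun e => setCircle m (turn (e / N)) with hf
  set k : CubeTorus → ℕ := fun z => ⌊p * N * a z⌋₊ with hk
  have hsmall : ∀ x z, (x, z) ∈ U → ‖F m x‖ ≤ r → ∀ e, defect p F m (f e z) ≤ δ := by
    intro x z hxz hx e
    refine defect_setCircle_le (hF m le_rfl) _ hxz.1.2 hxz.2 ((norm_sub_le _ _).trans ?_)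
    have := hr _ (norm_nonneg _) hx
    rw [norm_mul, Circle.norm_coe, norm_pow, norm_pow, Complex.norm_real, norm_norm]
    linarith
  have hnear : ∀ x z, (x, z) ∈ U → ∀ e T : ℕ, |(e : ℝ) - T * (p * N) - p * N * a x| ≤ 3 + p * N * σ →
      defect p F m (f e z) ≤ δ := by
    intro x z hxz e T he
    refine defect_setCircle_le (hF m le_rfl) _ hxz.1.2 hxz.2
      (norm_pow_sub_le _ (ha x) (hM x) hρ (T := T * p) ?_)
    have e1 : p * a x + ((T * p : ℤ) : ℝ) - e / N = -((e : ℝ) - T * (p * N) - p * N * a x) / N := by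
      push_cast; field_simp; ring
    rw [e1, abs_div, abs_neg, abs_of_pos hN', div_le_iff₀ hN']
    rw [div_le_iff₀ hN'] at hN2
    have : p * N * σ = ρ / 2 * N := by rw [← hσ]; ring
    linarith
  have hV' : ∀ x z, (x, z) ∈ U → ∀ e e' : ℕ, |(e : ℝ) - e'| ≤ 1 → (f e x, f e' z) ∈ V := by
    intro x z hxz e e' he
    refine hUV _ _ x z hxz.1.1.1 (lt_of_le_of_lt ?_ hN1)
    have hd : dist (turn (e / N)) (turn (e' / N)) = ‖(turn (e / N) : ℂ) - turn (e' / N)‖ :=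
      dist_eq_norm (turn (e / N) : ℂ) (turn (e' / N))
    refine (hd.trans_le (norm_turn_sub_turn_le _ _)).trans ?_
    rw [← sub_div, abs_div, abs_of_pos hN', ← mul_div_assoc]
    exact div_le_div_of_nonneg_right (mul_le_of_le_one_right (by positivity) he) hN'.le
  have hold : ∀ e z, ∀ j < m, defect p F j (f e z) = defect p F j z := by
    intro e z j hj
    have : (f e z).2 j = z.2 j := update_of_ne hj.ne _ _
    rw [defect, defect, this, hF j hj.le]
  have hgood : ∀ t ∈ almostLists p F m δ U, ∀ e, (∀ z ∈ t, defect p F m (f e z) ≤ δ) →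
      (∀ z ∈ t, defect p F m (f (e + 1) z) ≤ δ) → ∀ l : List CubeTorus,
      (∀ y ∈ l, ∃ x ∈ t, y = f e x ∨ y = f (e + 1) x) → l ∈ almostLists p F (m + 1) δ V := by
    intro t ht e h1 h2 l hl
    refine ⟨fun y hy j hj => ?_, fun y hy y' hy' => ?_⟩
    · obtain ⟨x, hx, hxy⟩ := hl y hy
      rcases (Nat.lt_succ_iff_lt_or_eq.1 hj) with hj | rfl
      · rcases hxy with rfl | rfl <;> rw [hold _ _ _ hj] <;> exact ht.1 x hx j hj
      · rcases hxy with rfl | rfl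
        exacts [h1 x hx, h2 x hx]
    · obtain ⟨x, hx, hxy⟩ := hl y hy
      obtain ⟨x', hx', hxy'⟩ := hl y' hy'
      rcases hxy with rfl | rfl <;> rcases hxy' with rfl | rfl <;>
        exact hV' _ _ (ht.2 x hx x' hx') _ _ (by simp)
  have key := hL.comp (good' := almostLists p F (m + 1) δ V) (E := univ) (spread f k) (δ_spread f k)
    (spread_nil f k) (spread_one f k) (fun D => ∀ v, ∀ z ∈ D, setCircle m v z ∈ D)
    (fun C D hC hD v z hz => ⟨hC v z hz.1, hD v z hz.2⟩) ?_ (fun _ _ _ => mem_univ _) hps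
  · rw [inter_univ] at key
    exact ⟨_, key⟩
  intro D hD α hα t ht htD
  rw [inter_univ] at hα
  have hlD : ∀ e, ∀ l : List CubeTorus, (∀ y ∈ l, ∃ x ∈ t, y = f e x ∨ y = f (e + 1) x) →
      ∀ y ∈ l, y ∈ D := by
    intro e l hl y hy
    obtain ⟨x, hx, rfl | rfl⟩ := hl y hy <;> exact hD _ _ (htD x hx)
  rcases t with _ | ⟨x, t⟩
  · rw [spread_nil]
    exact hα [] ⟨by simp, by simp⟩ (by simp)
  have hxU : ∀ z ∈ x :: t, (x, z) ∈ U := ht.2 x (by simp)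
  have hfloor : |(k x : ℝ) - p * N * a x| ≤ 1 := by
    have h1 := Nat.floor_le (show 0 ≤ p * N * a x from mul_nonneg (by positivity) (ha0 x))
    have h2 := Nat.lt_floor_add_one (p * N * a x)
    rw [abs_le]; constructor <;> linarith
  have hpNσ : 0 ≤ p * N * σ := by positivity
  have hfirst : α ((x :: t).map (f (k x))) = 0 := by
    have hl : ∀ y ∈ (x :: t).map (f (k x)), ∃ z ∈ x :: t, y = f (k x) z ∨ y = f (k x + 1) z := by
      intro y hy
      obtain ⟨z, hz, rfl⟩ := List.mem_map.1 hy
      exact ⟨z, hz, Or.inl rfl⟩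
    refine hα _ (hgood _ ht (k x) (fun z hz => hnear x z (hxU z hz) _ 0 ?_)
      (fun z hz => hnear x z (hxU z hz) _ 0 ?_) _ hl) (hlD _ _ hl)
    · push_cast; rw [zero_mul, sub_zero]; linarith
    · push_cast; rw [zero_mul, sub_zero, abs_le]; rw [abs_le] at hfloor
      constructor <;> linarith
  rw [spread_cons, hfirst, zero_add, sub_eq_zero]
  rcases t with _ | ⟨y, t⟩
  · rw [prismSum_nil]; rfl
  rw [headPrism_cons, prismSum_apply, prismSum_apply]
  have hw0 : ∀ e, (∀ z ∈ x :: y :: t, defect p F m (f e z) ≤ δ) →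
      (∀ z ∈ x :: y :: t, defect p F m (f (e + 1) z) ≤ δ) →
      prismOp (f e) (f (e + 1)) α (y :: t) = 0 := by
    intro e h1 h2
    refine prismOp_eq_zero fun l hl => ?_
    have hl' : ∀ y' ∈ l, ∃ z ∈ x :: y :: t, y' = f e z ∨ y' = f (e + 1) z := fun y' hy' => by
      obtain ⟨z, hz, h⟩ := hl y' hy'
      exact ⟨z, List.mem_cons_of_mem _ hz, h⟩
    exact hα _ (hgood _ ht e h1 h2 l hl') (hlD _ _ hl')
  symm
  rcases le_or_gt ‖F m x‖ r with hx | hx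
  · rw [Finset.sum_eq_zero, Finset.sum_eq_zero] <;>
      exact fun e _ => hw0 e (fun z hz => hsmall x z (hxU z hz) hx _)
        fun z hz => hsmall x z (hxU z hz) hx _
  · obtain ⟨s, hs⟩ := exists_int_abs_sub_le (a x) (a y)
    have h1 := norm_turn_sub_turn_le_of_dist (ha x) (ha y) hr0.le hx
      (hxU y (by simp)).1.1.2.le (by positivity)
    have hper : ∀ e, f (e + N) = f e := by
      intro e
      simp only [hf]
      push_cast
      rw [add_div, div_self hN'.ne', turn_add, turn_one, mul_one]
    refine sum_range_floor_eq (σ := σ) (s := s) (fun e => ?_) (ha0 x) (ha0 y) (by linarith)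
      fun e T he => ?_
    · rw [hper, add_right_comm, hper]
    · refine hw0 e (fun z hz => hnear x z (hxU z hz) e T (by linarith))
        fun z hz => hnear x z (hxU z hz) (e + 1) T ?_
      rw [abs_le] at he ⊢
      push_cast
      constructor <;> linarith

end

section

open ListCochain
open scoped Uniformity Topology
variable {p : ℕ} {F : ℕ → CubeTorus → ℂ}

/-- The points all of whose defects vanish. -/
def rootSet (p : ℕ) (F : ℕ → CubeTorus → ℂ) : Set CubeTorus := {z | ∀ j, defect p F j z = 0}

lemma continuous_defect {j : ℕ} (hF : Continuous (F j)) : Continuous (defect p F j) := by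
  unfold defect
  fun_prop

lemma isClosed_rootSet (hF : ∀ j, Continuous (F j)) : IsClosed (rootSet p F) := by
  simp only [rootSet, ofPred_forall]
  exact isClosed_iInter fun j => isClosed_eq (continuous_defect (hF j)) continuous_const

lemma exists_defect_le_eq_half (hp : p.Prime) (hFc : ∀ j, Continuous (F j))
    (hF : ∀ m, ∀ j ≤ m, ∀ v z, F j (setCircle m v z) = F j z) {n : ℕ} {c : Fin n → ℕ}
    (hc : Injective c) {H : Fin n → CubeTorus → ℝ} (hH : ∀ i, Continuous (H i))
    (h0 : ∀ i z, z.1 (c i) = 0 → H i z = 0) (h1 : ∀ i z, z.1 (c i) = 1 → H i z = 1)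
    (m : ℕ) {ε : ℝ} (hε : 0 < ε) :
    ∃ z, (∀ j < m, defect p F j z ≤ ε) ∧ ∀ i, |H i z - 1 / 2| ≤ ε := by
  have : Fact p.Prime := ⟨hp⟩
  have hchain : ∀ m, ∀ V ∈ 𝓤 CubeTorus, ∃ L : (List CubeTorus → ZMod p) →ₗ[ZMod p] ZMod p,
      IsCubeChain (almostLists p F m ε V) ((List.finRange n).map fun i => facePair (c i))
        univ L := by
    intro m
    induction m with
    | zero => exact exists_isCubeChain_zero ε hc _ (List.nodup_finRange n)
    | succ m ih =>
      intro V hV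
      refine exists_isCubeChain_succ hp.pos (hFc m) (hF m) ?_ hε ih hV
      intro Q hQ
      obtain ⟨i, -, rfl⟩ := List.mem_map.1 hQ
      exact ⟨fun v z hz => hz, fun v z hz => hz⟩
  have hV : (⋂ i, {q : CubeTorus × CubeTorus | dist (H i q.1) (H i q.2) < ε}) ∈ 𝓤 CubeTorus :=
    Filter.iInter_mem.2 fun i =>
      CompactSpace.uniformContinuous_of_continuous (hH i) (Metric.dist_mem_uniformity hε)
  obtain ⟨L, hL⟩ := hchain m _ hV
  classical
  let s : Fin n → CubeTorus → ZMod p := fun i z => if H i z ≤ 1 / 2 then 0 else 1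
  have hLs := hL.map_cup (s := s) fun i _ => ⟨fun z hz => by simp [s, h0 i z hz],
    fun z hz => by simp only [s, h1 i z hz]; norm_num⟩
  obtain ⟨t, ht, hne⟩ : ∃ t ∈ almostLists p F m ε
      (⋂ i, {q : CubeTorus × CubeTorus | dist (H i q.1) (H i q.2) < ε}),
      cup ((List.finRange n).map s) t ≠ 0 := by
    by_contra! hcon
    exact one_ne_zero (hLs.symm.trans (hL.eq_zero fun t ht _ => hcon t ht))
  obtain ⟨x, hx, hxs⟩ := cup_ne_zero hne
  refine ⟨x, ht.1 x hx, fun i => ?_⟩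
  obtain ⟨y, hy, w, hw, hyw⟩ := hxs (s i) (List.mem_map_of_mem (List.mem_finRange i))
  have hxy := mem_iInter.1 (ht.2 x hx y hy) i
  have hxw := mem_iInter.1 (ht.2 x hx w hw) i
  simp only [mem_ofPred_eq, Real.dist_eq, abs_lt] at hxy hxw
  rw [abs_le]
  by_cases hy2 : H i y ≤ 1 / 2 <;> by_cases hw2 : H i w ≤ 1 / 2
  · exact absurd (by simp only [s, hy2, hw2]) hyw
  · constructor <;> linarith
  · constructor <;> linarith
  · exact absurd (by simp only [s, hy2, hw2]) hyw

theorem exists_mem_rootSet_eq_half (hp : p.Prime) (hFc : ∀ j, Continuous (F j))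
    (hF : ∀ m, ∀ j ≤ m, ∀ v z, F j (setCircle m v z) = F j z) {n : ℕ} {c : Fin n → ℕ}
    (hc : Injective c) {H : Fin n → CubeTorus → ℝ} (hH : ∀ i, Continuous (H i))
    (h0 : ∀ i z, z.1 (c i) = 0 → H i z = 0) (h1 : ∀ i z, z.1 (c i) = 1 → H i z = 1) :
    ∃ z ∈ rootSet p F, ∀ i, H i z = 1 / 2 := by
  let T : ℕ → Set CubeTorus := fun m =>
    {z | (∀ j < m, defect p F j z ≤ 1 / (m + 1)) ∧ ∀ i, |H i z - 1 / 2| ≤ 1 / (m + 1)}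
  have hTc : ∀ m, IsClosed (T m) := by
    intro m
    simp only [T, ofPred_and, ofPred_forall]
    refine (isClosed_iInter fun j => isClosed_iInter fun _ =>
      isClosed_le (continuous_defect (hFc j)) continuous_const).inter
      (isClosed_iInter fun i => isClosed_le ?_ continuous_const)
    exact ((hH i).sub continuous_const).abs
  obtain ⟨z, hz⟩ := IsCompact.nonempty_iInter_of_sequence_nonempty_isCompact_isClosed T
    (fun m z hz => by
      have hle : 1 / (((m + 1 : ℕ) : ℝ) + 1) ≤ 1 / ((m : ℝ) + 1) :=
        one_div_le_one_div_of_le (by positivity) (by push_cast; linarith)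
      exact ⟨fun j hj => (hz.1 j (hj.trans (Nat.lt_succ_self m))).trans hle,
        fun i => (hz.2 i).trans hle⟩)
    (fun m => exists_defect_le_eq_half hp hFc hF hc hH h0 h1 m Nat.one_div_pos_of_nat)
    (hTc 0).isCompact hTc
  have hz : ∀ m, z ∈ T m := fun m => mem_iInter.1 hz m
  have hlim := tendsto_one_div_add_atTop_nhds_zero_nat (𝕜 := ℝ)
  refine ⟨z, fun j => le_antisymm ?_ (norm_nonneg _), fun i => ?_⟩
  · exact ge_of_tendsto hlim ((Filter.eventually_gt_atTop j).mono fun m hm => (hz m).1 j hm)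
  · have := ge_of_tendsto hlim (Filter.Eventually.of_forall fun m => (hz m).2 i)
    exact sub_eq_zero.1 (abs_nonpos_iff.1 this)

lemma exists_mem_rootSet_fst_eq (hFc : ∀ j, Continuous (F j))
    (hF : ∀ m, ∀ j ≤ m, ∀ v z, F j (setCircle m v z) = F j z) (x : ℕ → unitInterval) :
    ∃ z ∈ rootSet p F, z.1 = x := by
  let T : ℕ → Set CubeTorus := fun m => {z | (∀ j < m, defect p F j z = 0) ∧ z.1 = x}
  have hTc : ∀ m, IsClosed (T m) := by
    intro m
    simp only [T, ofPred_and, ofPred_forall]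
    exact (isClosed_iInter fun j => isClosed_iInter fun _ =>
      isClosed_eq (continuous_defect (hFc j)) continuous_const).inter
      (isClosed_eq continuous_fst continuous_const)
  have hne : ∀ m, (T m).Nonempty := by
    intro m
    induction m with
    | zero => exact ⟨(x, fun _ => 1), by simp, rfl⟩
    | succ m ih =>
      obtain ⟨z, hz, hzx⟩ := ih
      obtain ⟨a, -, -, ha⟩ := exists_eq_norm_mul_turn (F m z)
      refine ⟨setCircle m (turn a ^ p) z, fun j hj => ?_, hzx⟩
      rcases Nat.lt_succ_iff_lt_or_eq.1 hj with hj | rfl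
      · rw [← hz j hj, defect, defect, hF m j hj.le]
        have : (setCircle m (turn a ^ p) z).2 j = z.2 j := update_of_ne hj.ne _ _
        rw [this]
      · have : (setCircle j (turn a ^ p) z).2 j = turn a ^ p := update_self ..
        rw [defect, hF j j le_rfl, this, norm_eq_zero, Circle.coe_pow, ← mul_pow, ← ha, sub_self]
  obtain ⟨z, hz⟩ := IsCompact.nonempty_iInter_of_sequence_nonempty_isCompact_isClosed T
    (fun m z hz => ⟨fun j hj => hz.1 j (hj.trans (Nat.lt_succ_self m)), hz.2⟩) hne
    (hTc 0).isCompact hTc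
  have hz : ∀ m, z ∈ T m := fun m => mem_iInter.1 hz m
  exact ⟨z, fun j => (hz (j + 1)).1 j (Nat.lt_succ_self j), (hz 0).2⟩

theorem isEssential_rootSet (hp : p.Prime) (hFc : ∀ j, Continuous (F j))
    (hF : ∀ m, ∀ j ≤ m, ∀ v z, F j (setCircle m v z) = F j z) {n : ℕ} {c : Fin n → ℕ}
    (hc : Injective c) : IsEssential fun (z : rootSet p F) i => z.1.1 (c i) := by
  rintro ⟨G, hG, hG0, hGb, hG1⟩
  have hY := isClosed_rootSet (p := p) hFc
  have hYc : CompactSpace (rootSet p F) := isCompact_iff_compactSpace.1 hY.isCompact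
  have hhalf : (1 / 2 : ℝ) ∈ Icc (0 : ℝ) 1 := by norm_num
  let ctr : Fin n → unitInterval := fun _ => ⟨1 / 2, hhalf⟩
  have hctr : ctr ∉ cubeBoundary n := by
    rintro ⟨i, hi | hi⟩ <;> · have := congrArg Subtype.val hi; norm_num [ctr] at this
  have hπ : Continuous fun (z : rootSet p F) (i : Fin n) => z.1.1 (c i) := by fun_prop
  let A : Set (rootSet p F) := Prod.fst '' (G ⁻¹' {ctr})
  let B : Set (rootSet p F) := {y | (fun i => y.1.1 (c i)) ∈ cubeBoundary n}
  have hA : IsClosed A := isClosedMap_fst_of_compactSpace _ (isClosed_singleton.preimage hG)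
  have hB : IsClosed B := by
    have : B = ⋃ i, {y | y.1.1 (c i) = 0} ∪ {y | y.1.1 (c i) = 1} := by
      ext y; simp [B, cubeBoundary]
    rw [this]
    refine isClosed_iUnion_of_finite fun i => ?_
    have hi : Continuous fun y : rootSet p F => y.1.1 (c i) := by fun_prop
    exact (isClosed_eq hi continuous_const).union (isClosed_eq hi continuous_const)
  have hBA : Disjoint B A := by
    rw [disjoint_left]
    rintro y hy ⟨⟨_, t⟩, ht, rfl⟩
    exact hctr (ht ▸ hGb _ hy t)
  obtain ⟨ρ, hρB, hρA, hρ⟩ := exists_continuous_zero_one_of_isClosed hB hA hBA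
  let h : rootSet p F → Fin n → unitInterval := fun y => G (y, ⟨ρ y, hρ y⟩)
  have hh : Continuous h := by fun_prop
  have hhc : ∀ y, h y ≠ ctr := by
    intro y hy
    have hyA : y ∈ A := ⟨_, hy, rfl⟩
    have e : (⟨ρ y, hρ y⟩ : unitInterval) = 1 := Subtype.ext (hρA hyA)
    have := hG1 y
    rw [← e] at this
    exact hctr (hy ▸ this)
  have hhB : ∀ y ∈ B, ∀ i, h y i = y.1.1 (c i) := by
    intro y hy i
    have e : (⟨ρ y, hρ y⟩ : unitInterval) = 0 := Subtype.ext (hρB hy)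
    simp only [h, e, hG0]
  have hext : ∀ i, ∃ H : CubeTorus → ℝ, Continuous H ∧ (∀ z, z.1 (c i) = 0 → H z = 0) ∧
      (∀ z, z.1 (c i) = 1 → H z = 1) ∧ ∀ y : rootSet p F, H y = h y i := by
    intro i
    classical
    let φ : CubeTorus → ℝ := fun z => if hz : z ∈ rootSet p F then h ⟨z, hz⟩ i else z.1 (c i)
    have hi : Continuous fun z : CubeTorus => z.1 (c i) := by fun_prop
    have hφY : ∀ y : rootSet p F, φ y = h y i := fun y => by simp [φ]
    have hφ0 : ∀ z : CubeTorus, z.1 (c i) = 0 ∨ z.1 (c i) = 1 → φ z = z.1 (c i) := by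
      intro z hz
      by_cases hzY : z ∈ rootSet p F
      · exact (hφY ⟨z, hzY⟩).trans (congrArg Subtype.val (hhB ⟨z, hzY⟩ ⟨i, hz⟩ i))
      · simp [φ, hzY]
    let C₀ : Set CubeTorus := {z | z.1 (c i) = 0} ∪ {z | z.1 (c i) = 1}
    have hC₀ : IsClosed C₀ :=
      (isClosed_eq hi continuous_const).union (isClosed_eq hi continuous_const)
    have hcont : ContinuousOn φ (rootSet p F ∪ C₀) := by
      refine ContinuousOn.union_of_isClosed ?_ ?_ hY hC₀
      · rw [continuousOn_iff_continuous_domRestrict]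
        have : (rootSet p F).domRestrict φ = fun y => (h y i : ℝ) := funext hφY
        rw [this]
        fun_prop
      · exact (continuous_subtype_val.comp hi).continuousOn.congr fun z hz => hφ0 z hz
    obtain ⟨H, hH⟩ := ContinuousMap.exists_restrict_eq (hY.union hC₀)
      ⟨_, continuousOn_iff_continuous_domRestrict.1 hcont⟩
    have hHφ : ∀ z ∈ rootSet p F ∪ C₀, H z = φ z := fun z hz =>
      congrArg (fun f : C(↑(rootSet p F ∪ C₀), ℝ) => f ⟨z, hz⟩) hH
    refine ⟨H, H.continuous, fun z hz => ?_, fun z hz => ?_, fun y => ?_⟩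
    · rw [hHφ z (Or.inr (Or.inl hz)), hφ0 z (Or.inl hz), hz]; rfl
    · rw [hHφ z (Or.inr (Or.inr hz)), hφ0 z (Or.inr hz), hz]; rfl
    · rw [hHφ y (Or.inl y.2), hφY]
  choose H hH h0 h1 hHh using hext
  obtain ⟨z, hz, hz2⟩ := exists_mem_rootSet_eq_half hp hFc hF hc hH h0 h1
  refine hhc ⟨z, hz⟩ (funext fun i => Subtype.ext ?_)
  rw [← hHh, hz2]

theorem stronglyInfiniteDimensional_rootSet (hp : p.Prime) (hFc : ∀ j, Continuous (F j))
    (hF : ∀ m, ∀ j ≤ m, ∀ v z, F j (setCircle m v z) = F j z) :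
    StronglyInfiniteDimensional (rootSet p F) :=
  ⟨fun z => z.1.1, by fun_prop, fun x => by
    obtain ⟨z, hz, rfl⟩ := exists_mem_rootSet_fst_eq hFc hF x
    exact ⟨⟨z, hz⟩, rfl⟩, fun _ _ hc => isEssential_rootSet hp hFc hF hc⟩

end

section

open scoped Uniformity Topology

/-- The `p`-th power of every circle-valued map on a closed subset extends. -/
def PowersExtend (p : ℕ) (X : Type*) [TopologicalSpace X] : Prop :=
  ∀ C : Set X, IsClosed C → ∀ f : X → Circle, ContinuousOn f C →
    ∃ g : X → Circle, Continuous g ∧ ∀ x ∈ C, g x = f x ^ p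

section

variable {X : Type*} [UniformSpace X] [CompactSpace X] [T2Space X]

lemma exists_real_potential {C : Set X} (hC : IsClosed C) {c : X → X → ℤ} {M : ℕ}
    (hM : ∀ x y, |c x y| ≤ M) {V : Set (X × X)} (hV : V ∈ 𝓤 X)
    (hc : ∀ x ∈ C, ∀ y ∈ C, ∀ z ∈ C, (x, y) ∈ V → (y, z) ∈ V → (x, z) ∈ V →
      c y z - c x z + c x y = 0) :
    ∃ a : X → ℝ, ∀ ε > 0, ∃ U ∈ 𝓤 X, ∀ x ∈ C, ∀ y ∈ C, (x, y) ∈ U → |a x - a y - c x y| < ε := by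
  obtain ⟨W, hW, hWs, hWV⟩ := comp_symm_mem_uniformity_sets hV
  have hWV' : W ⊆ V := (subset_comp_self_of_mem_uniformity hW).trans hWV
  obtain ⟨T, hTC, hT⟩ := hC.isCompact.elim_nhds_subcover (fun x => interior (UniformSpace.ball x W))
    fun x _ => interior_mem_nhds.2 (UniformSpace.ball_mem_nhds x hW)
  obtain ⟨l, hl⟩ := PartitionOfUnity.exists_isSubordinate hC
    (fun t : T => interior (UniformSpace.ball (t : X) W)) (fun _ => isOpen_interior)
    (by simpa [iUnion_subtype] using hT)
  have hl1 : ∀ x ∈ C, ∑ t, l t x = 1 := fun x hx => by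
    rw [← finsum_eq_sum_of_fintype]; exact l.sum_eq_one hx
  have hlW : ∀ t x, l t x ≠ 0 → ((t : X), x) ∈ W := fun t x h =>
    (interior_subset (hl t (subset_tsupport _ h)) : x ∈ UniformSpace.ball (t : X) W)
  refine ⟨fun x => ∑ t, l t x * c x t, fun ε hε => ?_⟩
  obtain ⟨η, hη, hηε⟩ : ∃ η : ℝ, 0 < η ∧ T.card * (η * M) < ε := by
    refine ⟨ε / (T.card * M + 1), by positivity, ?_⟩
    have h : (0 : ℝ) < T.card * M + 1 := by positivity
    rw [← mul_assoc, mul_comm _ (ε / _), mul_assoc, div_mul_eq_mul_div, div_lt_iff₀ h]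
    linarith
  have hU : (⋂ t : T, {q : X × X | dist (l t q.1) (l t q.2) < η}) ∈ 𝓤 X :=
    Filter.iInter_mem.2 fun t => CompactSpace.uniformContinuous_of_continuous (l t).continuous
      (Metric.dist_mem_uniformity hη)
  refine ⟨_, Filter.inter_mem hW hU, fun x hx y hy hxy => ?_⟩
  have hterm : ∀ t : T, l t x * (c x t : ℝ) = l t x * c x y + l t x * c y t := by
    intro t
    by_cases h : l t x = 0
    · simp [h]
    · have h1 := SetRel.symm W (hlW t x h)
      have h2 := hc x hx y hy t (hTC t t.2) (hWV' hxy.1)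
        (hWV ⟨x, SetRel.symm W hxy.1, h1⟩) (hWV' h1)
      have h3 : (c x t : ℝ) = c x y + c y t := by
        have : c x t = c x y + c y t := by linarith
        exact_mod_cast this
      rw [h3, mul_add]
  have hsum : ∑ t, l t x * (c x t : ℝ) - ∑ t, l t y * (c y t : ℝ) - c x y =
      ∑ t : T, (l t x - l t y) * c y t := by
    rw [Finset.sum_congr rfl fun t _ => hterm t, Finset.sum_add_distrib, ← Finset.sum_mul,
      hl1 x hx, one_mul, Finset.sum_congr rfl fun t _ => sub_mul (l t x) (l t y) (c y t : ℝ),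
      Finset.sum_sub_distrib]
    ring
  rw [hsum]
  refine (Finset.abs_sum_le_sum_abs _ _).trans_lt (lt_of_le_of_lt ?_ hηε)
  refine (Finset.sum_le_card_nsmul _ _ (η * M) fun t _ => ?_).trans_eq (by simp)
  have hcM : |(c y t : ℝ)| ≤ M := by exact_mod_cast hM y t
  rw [abs_mul]
  exact mul_le_mul (mem_iInter.1 hxy.2 t).le hcM (abs_nonneg _) hη.le

lemma exists_integral_extension {p : ℕ} (hp : 0 < p) (hX : PowersExtend p X) {C : Set X}
    (hC : IsClosed C) {c : X → X → ℤ} {M : ℕ} (hM : ∀ x y, |c x y| ≤ M) {V : Set (X × X)}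
    (hV : V ∈ 𝓤 X)
    (hc : ∀ x ∈ C, ∀ y ∈ C, ∀ z ∈ C, (x, y) ∈ V → (y, z) ∈ V → (x, z) ∈ V →
      c y z - c x z + c x y = 0) :
    ∃ (e : X → X → ℤ) (m : X → ℤ), ∃ U ∈ 𝓤 X,
      (∀ x y z, (x, y) ∈ U → (y, z) ∈ U → (x, z) ∈ U → e y z - e x z + e x y = 0) ∧
      ∀ x ∈ C, ∀ y ∈ C, (x, y) ∈ U → p * c x y = e x y - (m x - m y) := by
  have hpi := Real.pi_pos
  have hp' : (0 : ℝ) < p := by exact_mod_cast hp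
  obtain ⟨a, ha⟩ := exists_real_potential hC hM hV hc
  have hcont : ContinuousOn (fun x => turn (a x)) C := by
    intro x hx
    rw [Metric.continuousWithinAt_iff']
    intro ε hε
    obtain ⟨U, hU, hUa⟩ := ha (ε / (2 * Real.pi)) (by positivity)
    have h1 : {y | (y, x) ∈ U} ∈ 𝓝[C] x := nhdsWithin_le_nhds (mem_nhds_right x hU)
    filter_upwards [h1, self_mem_nhdsWithin] with y hy hyC
    have h2 := hUa y hyC x hx hy
    have h3 : dist (turn (a y)) (turn (a x)) = ‖(turn (a y) : ℂ) - turn (a x + c y x)‖ := by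
      rw [turn_add, turn_intCast, mul_one]
      exact dist_eq_norm (turn (a y) : ℂ) (turn (a x))
    rw [h3]
    refine (norm_turn_sub_turn_le _ _).trans_lt ?_
    rw [lt_div_iff₀ (by positivity)] at h2
    rw [← sub_sub]
    linarith
  obtain ⟨g, hg, hgC⟩ := hX C hC _ hcont
  choose b hb0 hb1 hb using fun x => exists_eq_turn (g x)
  obtain ⟨U₁, hU₁, h₁⟩ := ha (1 / (8 * p)) (by positivity)
  let U₂ : Set (X × X) := {q | dist (g q.1) (g q.2) < 1 / 2}
  have hU₂ : U₂ ∈ 𝓤 X := CompactSpace.uniformContinuous_of_continuous hg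
    (Metric.dist_mem_uniformity (by norm_num))
  have he : ∀ x y, ∃ s : ℤ, (x, y) ∈ U₂ → |b x - b y - s| < 1 / 8 := by
    intro x y
    obtain ⟨s, hs⟩ := exists_int_abs_sub_le (b x) (b y)
    refine ⟨s, fun hxy => ?_⟩
    have h3 : dist (g x) (g y) = ‖(turn (b x) : ℂ) - turn (b y)‖ := by
      rw [← hb, ← hb]; exact dist_eq_norm (g x : ℂ) (g y)
    have h4 : dist (g x) (g y) < 1 / 2 := hxy
    linarith
  choose e he using he
  have hm : ∀ x, ∃ s : ℤ, x ∈ C → b x - p * a x = s := by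
    intro x
    obtain ⟨s, hs⟩ := exists_int_abs_sub_le (b x) (p * a x)
    refine ⟨s, fun hx => ?_⟩
    rw [turn_nat_mul, ← hb, hgC x hx, sub_self, norm_zero] at hs
    exact sub_eq_zero.1 (abs_nonpos_iff.1 (by linarith))
  choose m hm using hm
  have hround : ∀ n : ℤ, |(n : ℝ)| < 1 → n = 0 := fun n hn => by
    have : |n| < 1 := by exact_mod_cast hn
    exact Int.abs_lt_one_iff.1 this
  refine ⟨e, m, U₁ ∩ U₂, Filter.inter_mem hU₁ hU₂, fun x y z hxy hyz hxz => hround _ ?_,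
    fun x hx y hy hxy => sub_eq_zero.1 (hround _ ?_)⟩
  · have h1 := he x y hxy.2
    have h2 := he y z hyz.2
    have h3 := he x z hxz.2
    rw [abs_lt] at *
    push_cast
    constructor <;> linarith
  · have h1 := he x y hxy.2
    have h2 := h₁ x hx y hy hxy.1
    rw [lt_div_iff₀ (by positivity), ← abs_of_pos (show (0 : ℝ) < 8 * p by positivity),
      ← abs_mul] at h2
    have h3 := hm x hx
    have h4 := hm y hy
    rw [abs_lt] at *
    push_cast
    rw [← h3, ← h4]
    constructor <;> linarith

end

end

section

open scoped Uniformity Topology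

namespace AS

section Coboundary

variable {A : Type*} [AddCommGroup A] {X : Type*}

lemma d_apply {n : ℕ} (φ : Cochain A X n) (s : Fin (n + 2) → X) :
    d A X n φ s = ∑ i : Fin (n + 2), ((-1 : ℤ) ^ (i : ℕ)) • φ (s ∘ i.succAbove) := rfl

lemma d_congr {n : ℕ} {φ ψ : Cochain A X n} {s : Fin (n + 2) → X}
    (h : ∀ i : Fin (n + 2), φ (s ∘ i.succAbove) = ψ (s ∘ i.succAbove)) :
    d A X n φ s = d A X n ψ s := by
  simp only [d_apply, h]

lemma d_zero_apply (φ : Cochain A X 0) (s : Fin 2 → X) :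
    d A X 0 φ s = φ (fun _ => s 1) - φ (fun _ => s 0) := by
  have h0 : s ∘ (0 : Fin 2).succAbove = fun _ => s 1 := by
    funext i; fin_cases i; rfl
  have h1 : s ∘ (1 : Fin 2).succAbove = fun _ => s 0 := by
    funext i; fin_cases i; rfl
  rw [d_apply, Fin.sum_univ_two, h0, h1]
  simp [sub_eq_add_neg]

lemma d_one_apply (φ : Cochain A X 1) (s : Fin 3 → X) :
    d A X 1 φ s = φ ![s 1, s 2] - φ ![s 0, s 2] + φ ![s 0, s 1] := by
  have h0 : s ∘ (0 : Fin 3).succAbove = ![s 1, s 2] := by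
    funext i; fin_cases i <;> rfl
  have h1 : s ∘ (1 : Fin 3).succAbove = ![s 0, s 2] := by
    funext i; fin_cases i <;> rfl
  have h2 : s ∘ (2 : Fin 3).succAbove = ![s 0, s 1] := by
    funext i; fin_cases i <;> rfl
  rw [d_apply, Fin.sum_univ_three, h0, h1, h2]
  simp [sub_eq_add_neg]

lemma d_cons {n : ℕ} (φ : Cochain A X (n + 1)) (x : X) (t : Fin (n + 2) → X) :
    d A X (n + 1) φ (Fin.cons x t : Fin (n + 3) → X) =
      φ t - d A X n (fun s => φ (Fin.cons x s : Fin (n + 2) → X)) t := by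
  have h0 : (Fin.cons x t : Fin (n + 3) → X) ∘ (0 : Fin (n + 3)).succAbove = t := by
    funext i; simp
  have h1 : ∀ i : Fin (n + 2), (Fin.cons x t : Fin (n + 3) → X) ∘ i.succ.succAbove =
      (Fin.cons x (t ∘ i.succAbove) : Fin (n + 2) → X) := by
    intro i
    funext j
    refine Fin.cases ?_ (fun j => ?_) j <;> simp
  rw [d_apply, Fin.sum_univ_succ, h0, d_apply, sub_eq_add_neg, ← Finset.sum_neg_distrib]
  congr 1
  · simp
  · refine Finset.sum_congr rfl fun i _ => ?_
    rw [h1, Fin.val_succ, pow_succ]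
    simp

lemma d_d {n : ℕ} (φ : Cochain A X n) : d A X (n + 1) (d A X n φ) = 0 := by
  induction n with
  | zero =>
    funext s
    rw [d_one_apply]
    simp [d_zero_apply]
  | succ n ih =>
    funext s
    rw [← Fin.cons_self_tail s, d_cons]
    have h : (fun t => d A X (n + 1) φ (Fin.cons (s 0) t : Fin (n + 3) → X)) =
        φ - d A X n (fun t => φ (Fin.cons (s 0) t : Fin (n + 2) → X)) :=
      funext fun t => d_cons φ (s 0) t
    rw [h, map_sub, ih]
    simp

end Coboundary

section Uniform

variable {A : Type*} [AddCommGroup A] {X : Type*} [UniformSpace X] {n : ℕ}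
  {φ ψ : Cochain A X n} {C D : Set X}

/-- A cochain that vanishes on all sufficiently small tuples in `C`. -/
def LocZeroOn (φ : Cochain A X n) (C : Set X) : Prop :=
  ∃ V ∈ 𝓤 X, ∀ s : Fin (n + 1) → X, (∀ i, s i ∈ C) → (∀ i j, (s i, s j) ∈ V) → φ s = 0

namespace LocZeroOn

lemma mono (h : LocZeroOn φ C) (hD : D ⊆ C) : LocZeroOn φ D := by
  obtain ⟨V, hV, h⟩ := h
  exact ⟨V, hV, fun s hs => h s fun i => hD (hs i)⟩

lemma add (h : LocZeroOn φ C) (h' : LocZeroOn ψ C) : LocZeroOn (φ + ψ) C := by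
  obtain ⟨V, hV, h⟩ := h
  obtain ⟨W, hW, h'⟩ := h'
  refine ⟨V ∩ W, Filter.inter_mem hV hW, fun s hs hsV => ?_⟩
  rw [Pi.add_apply, h s hs fun i j => (hsV i j).1, h' s hs fun i j => (hsV i j).2, add_zero]

lemma neg (h : LocZeroOn φ C) : LocZeroOn (-φ) C := by
  obtain ⟨V, hV, h⟩ := h
  exact ⟨V, hV, fun s hs hsV => by rw [Pi.neg_apply, h s hs hsV, neg_zero]⟩

lemma sub (h : LocZeroOn φ C) (h' : LocZeroOn ψ C) : LocZeroOn (φ - ψ) C := by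
  rw [sub_eq_add_neg]
  exact h.add h'.neg

end LocZeroOn

lemma mem_locZero_iff [CompactSpace X] : φ ∈ locZero A X n ↔ LocZeroOn φ univ := by
  constructor
  · rintro ⟨U, ⟨hUo, hUc⟩, h⟩
    obtain ⟨V, hV, hVU⟩ := lebesgue_number_lemma_sUnion isCompact_univ hUo hUc.ge
    refine ⟨V, hV, fun s _ hs => ?_⟩
    obtain ⟨u, hu, hsu⟩ := hVU (s 0) (mem_univ _)
    exact h s ⟨u, hu, fun i => hsu (hs 0 i)⟩
  · rintro ⟨V, hV, h⟩
    obtain ⟨W, hW, hWs, hWV⟩ := comp_symm_mem_uniformity_sets hV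
    refine ⟨range fun x => interior (UniformSpace.ball x W), ⟨?_, ?_⟩, ?_⟩
    · rintro _ ⟨x, rfl⟩
      exact isOpen_interior
    · exact eq_univ_of_forall fun x => ⟨_, ⟨x, rfl⟩, mem_interior_iff_mem_nhds.2
        (UniformSpace.ball_mem_nhds x hW)⟩
    · rintro s ⟨_, ⟨x, rfl⟩, hs⟩
      have hs' : ∀ i, (x, s i) ∈ W := fun i =>
        (interior_subset (hs i) : s i ∈ UniformSpace.ball x W)
      exact h s (fun _ => mem_univ _) fun i j => hWV ⟨x, SetRel.symm W (hs' i), hs' j⟩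

variable (A X) in
/-- Cocycles on closed subsets are restrictions of cocycles on the whole space. -/
def CocyclesExtend (n : ℕ) : Prop :=
  ∀ C : Set X, IsClosed C → ∀ φ : Cochain A X n, LocZeroOn (AS.d A X n φ) C →
    ∃ φ' : Cochain A X n, LocZeroOn (AS.d A X n φ') univ ∧ LocZeroOn (φ - φ') C

variable (A X) in
/-- Cocycles of degree `n + 1` on closed subsets are coboundaries. -/
def CocyclesSplit (n : ℕ) : Prop :=
  ∀ C : Set X, IsClosed C → ∀ φ : Cochain A X (n + 1), LocZeroOn (AS.d A X (n + 1) φ) C →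
    ∃ ψ : Cochain A X n, LocZeroOn (φ - AS.d A X n ψ) C

lemma CocyclesSplit.cocyclesExtend (h : CocyclesSplit A X n) : CocyclesExtend A X (n + 1) := by
  intro C hC φ hφ
  obtain ⟨ψ, hψ⟩ := h C hC φ hφ
  refine ⟨AS.d A X n ψ, ⟨univ, Filter.univ_mem, fun s _ _ => ?_⟩, hψ⟩
  rw [d_d]
  rfl

lemma CocyclesExtend.exists_splitting_union {n : ℕ} (hE : CocyclesExtend A X n) {C D E P : Set X}
    (hC : IsClosed C) (hD : IsClosed D) (hE' : IsClosed E) {φ : Cochain A X (n + 1)}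
    {α β : Cochain A X n}
    (hα : LocZeroOn (φ - AS.d A X n α) (D ∩ C)) (hβ : LocZeroOn (φ - AS.d A X n β) (E ∩ C))
    {W : Set (X × X)} (hW : W ∈ 𝓤 X) (hPW : ∀ x ∈ P, ∀ y, (x, y) ∈ W → y ∈ D) :
    ∃ ψ : Cochain A X n, LocZeroOn (φ - AS.d A X n ψ) ((P ∪ E) ∩ C) := by
  classical
  have h1 : LocZeroOn (AS.d A X n (α - β)) (D ∩ E ∩ C) := by
    have h := (hβ.mono (inter_subset_inter_left C (inter_subset_right (s := D)))).sub
      (hα.mono (inter_subset_inter_left C (inter_subset_left (t := E))))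
    rwa [sub_sub_sub_cancel_left, ← map_sub] at h
  obtain ⟨γ, hγ, hαβ⟩ := hE _ ((hD.inter hE').inter hC) _ h1
  have hα' : LocZeroOn (φ - AS.d A X n (α - γ)) (D ∩ C) := by
    have h := hα.add (hγ.mono (subset_univ _))
    rwa [sub_add, ← map_sub] at h
  obtain ⟨V₁, hV₁, hα'⟩ := hα'
  obtain ⟨V₂, hV₂, hβ⟩ := hβ
  obtain ⟨V₃, hV₃, hαβ⟩ := hαβ
  refine ⟨fun s => if ∀ i, s i ∈ D then (α - γ) s else β s, W ∩ (V₁ ∩ (V₂ ∩ V₃)),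
    Filter.inter_mem hW (Filter.inter_mem hV₁ (Filter.inter_mem hV₂ hV₃)), fun s hs hsV => ?_⟩
  by_cases hsD : ∀ i, s i ∈ D
  · rw [← hα' s (fun i => ⟨hsD i, (hs i).2⟩) fun i j => (hsV i j).2.1, Pi.sub_apply, Pi.sub_apply]
    congr 1
    exact d_congr fun i => if_pos fun j => hsD _
  · obtain ⟨k, hk⟩ := not_forall.1 hsD
    have hsE : ∀ i, s i ∈ E := fun i =>
      (hs i).1.resolve_left fun hP => hk (hPW _ hP _ (hsV i k).1)
    rw [← hβ s (fun i => ⟨hsE i, (hs i).2⟩) fun i j => (hsV i j).2.2.1, Pi.sub_apply, Pi.sub_apply]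
    congr 1
    refine d_congr fun i => ?_
    by_cases hi : ∀ j, (s ∘ i.succAbove) j ∈ D
    · rw [if_pos hi]
      have h := hαβ (s ∘ i.succAbove) (fun j => ⟨⟨hi j, hsE _⟩, (hs _).2⟩)
        fun j k => (hsV _ _).2.2.2
      rw [Pi.sub_apply, Pi.sub_apply, sub_right_comm] at h
      exact sub_eq_zero.1 h
    · exact if_neg hi

lemma CocyclesExtend.cocyclesSplit [CompactSpace X] {n : ℕ} (hE : CocyclesExtend A X (n + 1)) :
    CocyclesSplit A X (n + 1) := by
  intro C hC φ hφ
  obtain ⟨V, hV, hφ⟩ := hφ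
  have key : ∃ D : Set X, IsClosed D ∧
      (∃ ψ : Cochain A X (n + 1), LocZeroOn (φ - AS.d A X (n + 1) ψ) (D ∩ C)) ∧
      ∃ W ∈ 𝓤 X, ∀ x ∈ C, ∀ y, (x, y) ∈ W → y ∈ D := by
    refine hC.isCompact.induction_on (p := fun S => ∃ D : Set X, IsClosed D ∧
      (∃ ψ : Cochain A X (n + 1), LocZeroOn (φ - AS.d A X (n + 1) ψ) (D ∩ C)) ∧
      ∃ W ∈ 𝓤 X, ∀ x ∈ S, ∀ y, (x, y) ∈ W → y ∈ D) ?_ ?_ ?_ ?_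
    · exact ⟨∅, isClosed_empty, ⟨0, univ, Filter.univ_mem, fun s hs => absurd (hs 0).1 id⟩,
        univ, Filter.univ_mem, fun x hx => absurd hx id⟩
    · rintro S T hST ⟨D, hD, hψ, W, hW, h⟩
      exact ⟨D, hD, hψ, W, hW, fun x hx => h x (hST hx)⟩
    · rintro S T ⟨D, hD, ⟨α, hα⟩, W₁, hW₁, h₁⟩ ⟨E, hE', ⟨β, hβ⟩, W₂, hW₂, h₂⟩
      obtain ⟨W', hW', -, hW'₁⟩ := comp_symm_mem_uniformity_sets hW₁
      obtain ⟨W, hW, hWs, hWW'⟩ := comp_symm_mem_uniformity_sets hW'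
      have hWW : W ⊆ W' := (subset_comp_self_of_mem_uniformity hW).trans hWW'
      obtain ⟨ψ, hψ⟩ := hE.exists_splitting_union hC hD hE' hα hβ (W := W)
        (P := closure {y | ∃ x ∈ S, (x, y) ∈ W}) hW fun x hx y hxy => by
          obtain ⟨z, hz, w, hw, hwz⟩ := mem_closure_iff_nhds.1 hx _ (UniformSpace.ball_mem_nhds x hW)
          exact h₁ w hw y (hW'₁ ⟨x, hWW' ⟨z, hwz, SetRel.symm W hz⟩, hWW hxy⟩)
      refine ⟨_, isClosed_closure.union hE', ⟨ψ, hψ⟩, W ∩ W₂, Filter.inter_mem hW hW₂, ?_⟩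
      rintro x (hx | hx) y hxy
      · exact Or.inl (subset_closure ⟨x, hx, hxy.1⟩)
      · exact Or.inr (h₂ x hx y hxy.2)
    · intro x hx
      obtain ⟨V₀, ⟨hV₀, hV₀c⟩, hV₀V⟩ := uniformity_hasBasis_closed.mem_iff.1
        (Filter.inter_mem hV (symm_le_uniformity hV))
      obtain ⟨W, hW, -, hWV⟩ := comp_symm_mem_uniformity_sets hV₀
      refine ⟨UniformSpace.ball x W,
        mem_nhdsWithin_of_mem_nhds (UniformSpace.ball_mem_nhds x hW), {y | (x, y) ∈ V₀},
        hV₀c.preimage (by fun_prop), ⟨fun s => φ (Fin.cons x s : Fin (n + 3) → X), V, hV,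
          fun s hs hsV => ?_⟩, W, hW, fun y hy z hyz => hWV ⟨y, hy, hyz⟩⟩
      rw [Pi.sub_apply, ← d_cons]
      refine hφ _ (fun i => ?_) fun i j => ?_
      · refine Fin.cases ?_ (fun i => ?_) i
        · simpa using hx
        · simpa using (hs i).2
      · refine Fin.cases ?_ (fun i => ?_) i <;> refine Fin.cases ?_ (fun j => ?_) j
        · simpa using refl_mem_uniformity hV
        · simpa using (hV₀V (hs j).1).1
        · simpa using (hV₀V (hs i).1).2
        · simpa using hsV i j
  obtain ⟨D, -, ⟨ψ, hψ⟩, W, hW, h⟩ := key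
  exact ⟨ψ, hψ.mono fun x hx => ⟨h x hx x (refl_mem_uniformity hW), hx⟩⟩

lemma CocyclesExtend.cocyclesSplit_add [CompactSpace X] {n : ℕ} (hE : CocyclesExtend A X (n + 1))
    (k : ℕ) : CocyclesSplit A X (n + 1 + k) := by
  induction k with
  | zero => exact hE.cocyclesSplit
  | succ k ih => exact (show CocyclesExtend A X (n + 1 + k + 1) from
      ih.cocyclesExtend).cocyclesSplit

lemma CocyclesSplit.subsingleton_ASH [CompactSpace X] {n : ℕ} (h : CocyclesSplit A X n) :
    Subsingleton (ASH A (n + 1) X) := by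
  refine QuotientAddGroup.subsingleton_iff.2 ?_
  rw [eq_top_iff]
  rintro ⟨x, hx⟩ -
  induction x using QuotientAddGroup.induction_on with
  | H φ =>
    have h1 : AS.d A X (n + 1) φ ∈ locZero A X (n + 2) :=
      (QuotientAddGroup.eq_zero_iff _).1 hx
    obtain ⟨ψ, hψ⟩ := h univ isClosed_univ φ (mem_locZero_iff.1 h1)
    refine ⟨(ψ : QC A X n), ?_⟩
    refine (QuotientAddGroup.eq.2 ?_ : ((AS.d A X n ψ : Cochain A X (n + 1)) : QC A X (n + 1)) = φ)
    rw [neg_add_eq_sub]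
    exact mem_locZero_iff.2 hψ

end Uniform

end AS

end

section

open scoped Uniformity Topology

namespace AS

variable {p : ℕ} {X : Type*} [UniformSpace X] [CompactSpace X] [T2Space X]

lemma exists_denominator (p : ℕ) (S : Finset (Localization.Away (p : ℤ))) :
    ∃ v : (Localization.Away (p : ℤ))ˣ, ∀ a ∈ S, ∃ k : ℤ, a = v * (p * k) := by
  classical
  obtain ⟨b, hb⟩ := IsLocalization.exist_integer_multiples_of_finset
    (Submonoid.powers (p : ℤ)) S
  have hu := (IsLocalization.map_units (Localization.Away (p : ℤ)) b).mul
    (IsLocalization.Away.algebraMap_isUnit (S := Localization.Away (p : ℤ)) (p : ℤ))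
  obtain ⟨u, hu⟩ := hu
  refine ⟨u⁻¹, fun a ha => ?_⟩
  obtain ⟨k, hk⟩ := hb a ha
  refine ⟨k, ?_⟩
  rw [Units.eq_inv_mul_iff_mul_eq, hu]
  rw [Algebra.smul_def] at hk
  simp only [eq_intCast, Int.cast_natCast] at hk ⊢
  rw [hk]
  ring

lemma cocyclesExtend_one (hp : 0 < p) (hX : PowersExtend p X) :
    CocyclesExtend (Localization.Away (p : ℤ)) X 1 := by
  classical
  intro C hC φ hφ
  have hinj : ∀ k : ℤ, (k : Localization.Away (p : ℤ)) = 0 → k = 0 := by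
    have h := IsLocalization.injective (Localization.Away (p : ℤ))
      (powers_le_nonZeroDivisors_of_noZeroDivisors (Int.natCast_ne_zero.2 hp.ne'))
    intro k hk
    refine h ?_
    rw [eq_intCast, hk, map_zero]
  obtain ⟨V, hV, hφ⟩ := hφ
  obtain ⟨V₁, hV₁, hV₁s, hV₁V⟩ := comp_symm_mem_uniformity_sets hV
  obtain ⟨V₂, hV₂, hV₂s, hV₂V⟩ := comp_symm_mem_uniformity_sets hV₁
  obtain ⟨W, hW, hWs, hWV⟩ := comp_symm_mem_uniformity_sets hV₂
  have hW₂ : W ⊆ V₂ := (subset_comp_self_of_mem_uniformity hW).trans hWV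
  have h₂₁ : V₂ ⊆ V₁ := (subset_comp_self_of_mem_uniformity hV₂).trans hV₂V
  have h₁ : V₁ ⊆ V := (subset_comp_self_of_mem_uniformity hV₁).trans hV₁V
  have hcoc : ∀ x ∈ C, ∀ y ∈ C, ∀ z ∈ C, (x, y) ∈ V₁ → (y, z) ∈ V₁ → (x, z) ∈ V₁ →
      φ ![y, z] - φ ![x, z] + φ ![x, y] = 0 := by
    intro x hx y hy z hz hxy hyz hxz
    have h := hφ ![x, y, z] (by simp [Fin.forall_fin_succ, hx, hy, hz]) (by
      have hr : ∀ w, (w, w) ∈ V := fun w => refl_mem_uniformity hV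
      simp [Fin.forall_fin_succ, hr, h₁ hxy, h₁ hyz, h₁ hxz, h₁ (SetRel.symm V₁ hxy),
        h₁ (SetRel.symm V₁ hyz), h₁ (SetRel.symm V₁ hxz)])
    rwa [d_one_apply] at h
  obtain ⟨T, hTC, hT⟩ := hC.isCompact.elim_nhds_subcover (fun x => UniformSpace.ball x W)
    fun x _ => UniformSpace.ball_mem_nhds x hW
  have hr : ∀ x, ∃ t, x ∈ C → t ∈ T ∧ (t, x) ∈ W := by
    intro x
    by_cases hx : x ∈ C
    · obtain ⟨t, ht, htx⟩ := mem_iUnion₂.1 (hT hx)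
      exact ⟨t, fun _ => ⟨ht, htx⟩⟩
    · exact ⟨x, fun h => absurd h hx⟩
  choose r hr using hr
  obtain ⟨v, hv⟩ := exists_denominator p ((T ×ˢ T).image fun q => φ ![q.1, q.2])
  have hv' : ∀ x y, ∃ k : ℤ, x ∈ T → y ∈ T → φ ![x, y] = v * (p * k) := by
    intro x y
    by_cases h : x ∈ T ∧ y ∈ T
    · obtain ⟨k, hk⟩ := hv _ (Finset.mem_image_of_mem _ (Finset.mk_mem_product h.1 h.2))
      exact ⟨k, fun _ _ => hk⟩
    · exact ⟨0, fun h1 h2 => absurd ⟨h1, h2⟩ h⟩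
  choose k hk using hv'
  have hk' : ∀ x ∈ C, ∀ y ∈ C, φ ![r x, r y] = v * (p * k (r x) (r y)) := fun x hx y hy =>
    hk _ _ (hr x hx).1 (hr y hy).1
  have hrr : ∀ x ∈ C, ∀ y ∈ C, (x, y) ∈ W → (r x, y) ∈ V₂ ∧ (r x, r y) ∈ V₁ := fun x hx y hy hxy =>
    have h : (r x, y) ∈ V₂ := hWV ⟨x, (hr x hx).2, hxy⟩
    ⟨h, hV₂V ⟨y, h, hW₂ (SetRel.symm W (hr y hy).2)⟩⟩
  obtain ⟨M, hM⟩ : ∃ M : ℕ, ∀ x ∈ T, ∀ y ∈ T, |k x y| ≤ M := by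
    refine ⟨∑ q ∈ T ×ˢ T, (k q.1 q.2).natAbs, fun x hx y hy => ?_⟩
    rw [Int.abs_eq_natAbs]
    exact_mod_cast Finset.single_le_sum (f := fun q : X × X => (k q.1 q.2).natAbs)
      (fun _ _ => Nat.zero_le _) (Finset.mk_mem_product hx hy)
  obtain ⟨e, m, U, hU, he, hem⟩ := exists_integral_extension hp hX hC
    (c := fun x y => if r x ∈ T ∧ r y ∈ T then k (r x) (r y) else 0) (M := M)
    (fun x y => by
      split_ifs with h
      · exact hM _ h.1 _ h.2
      · simp) hW
    (fun x hx y hy z hz hxy hyz hxz => by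
      have h := hcoc (r x) (hTC _ (hr x hx).1) (r y) (hTC _ (hr y hy).1) (r z)
        (hTC _ (hr z hz).1) (hrr x hx y hy hxy).2 (hrr y hy z hz hyz).2 (hrr x hx z hz hxz).2
      rw [hk' x hx y hy, hk' y hy z hz, hk' x hx z hz, ← mul_sub, ← mul_add,
        Units.mul_right_eq_zero] at h
      rw [if_pos ⟨(hr y hy).1, (hr z hz).1⟩, if_pos ⟨(hr x hx).1, (hr z hz).1⟩,
        if_pos ⟨(hr x hx).1, (hr y hy).1⟩]
      have h' := hinj (p * (k (r y) (r z) - k (r x) (r z) + k (r x) (r y)))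
        (by push_cast; rw [← h]; ring)
      exact (mul_eq_zero.1 h').resolve_left (Int.natCast_ne_zero.2 hp.ne'))
  let B : X → Localization.Away (p : ℤ) := fun x => if x ∈ C then φ ![r x, x] + v * m x else 0
  refine ⟨fun s => v * e (s 0) (s 1) + B (s 1) - B (s 0), ⟨U, hU, fun s _ hs => ?_⟩,
    W ∩ U, Filter.inter_mem hW hU, fun s hs hsV => ?_⟩
  · have h : (e (s 1) (s 2) - e (s 0) (s 2) + e (s 0) (s 1) : Localization.Away (p : ℤ)) = 0 := by
      exact_mod_cast congrArg (Int.cast : ℤ → Localization.Away (p : ℤ))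
        (he (s 0) (s 1) (s 2) (hs 0 1) (hs 1 2) (hs 0 2))
    rw [d_one_apply]
    simp only [Matrix.cons_val_zero, Matrix.cons_val_one]
    linear_combination (v : Localization.Away (p : ℤ)) * h
  · have hs' : s = ![s 0, s 1] := by
      funext i; fin_cases i <;> rfl
    have hx := hs 0
    have hy := hs 1
    have hxy := hsV 0 1
    rw [Pi.sub_apply, hs']
    simp only [Matrix.cons_val_zero, Matrix.cons_val_one, B, if_pos hx, if_pos hy]
    generalize s 0 = x at *
    generalize s 1 = y at *
    have h1 := hcoc (r x) (hTC _ (hr x hx).1) x hx y hy (h₂₁ (hW₂ (hr x hx).2))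
      (h₂₁ (hW₂ hxy.1)) (h₂₁ (hrr x hx y hy hxy.1).1)
    have h2 := hcoc (r x) (hTC _ (hr x hx).1) (r y) (hTC _ (hr y hy).1) y hy
      (hrr x hx y hy hxy.1).2 (h₂₁ (hW₂ (hr y hy).2)) (h₂₁ (hrr x hx y hy hxy.1).1)
    have h3 := hem x hx y hy hxy.2
    rw [if_pos ⟨(hr x hx).1, (hr y hy).1⟩] at h3
    have h4 : (p * k (r x) (r y) : Localization.Away (p : ℤ)) = e x y - (m x - m y) := by
      exact_mod_cast congrArg (Int.cast : ℤ → Localization.Away (p : ℤ)) h3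
    rw [hk' x hx y hy] at h2
    linear_combination h1 - h2 + (v : Localization.Away (p : ℤ)) * h4

/-- Alexander-Spanier cohomology with coefficients in `ℤ[1/p]` vanishes above degree one. -/
theorem subsingleton_ASH_of_powersExtend {X : Type*} [TopologicalSpace X] [CompactSpace X]
    [T2Space X] (hp : 0 < p) (hX : PowersExtend p X) (k : ℕ) :
    Subsingleton (ASH (Localization.Away (p : ℤ)) (k + 2) X) := by
  let := uniformSpaceOfCompactR1 (γ := X)
  have h := ((cocyclesExtend_one hp hX).cocyclesSplit_add k).subsingleton_ASH
  rwa [show 0 + 1 + k + 1 = k + 2 by omega] at h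

end AS

end

section

open scoped Uniformity Topology

/-- Reset all circle coordinates from the `j`-th on. -/
def truncateCircles (j : ℕ) (z : CubeTorus) : CubeTorus := (z.1, fun i => if i < j then z.2 i else 1)

lemma continuous_truncateCircles (j : ℕ) : Continuous (truncateCircles j) := by
  unfold truncateCircles
  refine continuous_fst.prodMk (continuous_pi fun i => ?_)
  split_ifs <;> fun_prop

lemma truncateCircles_setCircle {j m : ℕ} (hj : j ≤ m) (v : Circle) (z : CubeTorus) :
    truncateCircles j (setCircle m v z) = truncateCircles j z := by
  refine Prod.ext rfl (funext fun i => ?_)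
  by_cases hi : i < j
  · simp [truncateCircles, setCircle, hi, update_of_ne (hi.trans_le hj).ne]
  · simp [truncateCircles, hi]

lemma tendstoUniformly_truncateCircles :
    TendstoUniformly truncateCircles id Filter.atTop := by
  rw [tendstoUniformly_iff_tendsto, uniformity_prod, Filter.tendsto_inf, Filter.tendsto_comap_iff,
    Filter.tendsto_comap_iff]
  constructor
  · exact fun s hs => Filter.mem_map.2 (Filter.univ_mem' fun q : ℕ × CubeTorus =>
      (refl_mem_uniformity hs : (q.2.1, q.2.1) ∈ s))
  · rw [Pi.uniformity, Filter.tendsto_iInf]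
    intro i
    rw [Filter.tendsto_comap_iff]
    intro s hs
    have h : ∀ᶠ q : ℕ × CubeTorus in Filter.atTop ×ˢ ⊤, i < q.1 :=
      (Filter.eventually_gt_atTop i).prod_inl _
    refine Filter.mem_map.2 ?_
    filter_upwards [h] with q hq
    simpa [truncateCircles, hq] using refl_mem_uniformity hs

lemma exists_dense_triangular_functions : ∃ F : ℕ → CubeTorus → ℂ, (∀ j, Continuous (F j)) ∧
    (∀ m, ∀ j ≤ m, ∀ v z, F j (setCircle m v z) = F j z) ∧
    ∀ G : CubeTorus → ℂ, Continuous G → ∀ ε > 0, ∃ j, ∀ z, ‖F j z - G z‖ < ε := by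
  let G := TopologicalSpace.denseSeq C(CubeTorus, ℂ)
  refine ⟨fun j z => G (Nat.unpair j).1 (truncateCircles j z),
    fun j => (G _).continuous.comp (continuous_truncateCircles j),
    fun m j hj v z => by simp only [truncateCircles_setCircle hj], fun H hH ε hε => ?_⟩
  obtain ⟨i, hi⟩ := (TopologicalSpace.denseRange_denseSeq C(CubeTorus, ℂ)).exists_dist_lt
    (⟨H, hH⟩ : C(CubeTorus, ℂ)) (half_pos hε)
  have hu := (CompactSpace.uniformContinuous_of_continuous
    (G i).continuous).comp_tendstoUniformly tendstoUniformly_truncateCircles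
  obtain ⟨N, hN⟩ := Filter.eventually_atTop.1 (Metric.tendstoUniformly_iff.1 hu _ (half_pos hε))
  refine ⟨Nat.pair i N, fun z => ?_⟩
  have h1 := hN _ (Nat.right_le_pair i N) z
  have h2 := (ContinuousMap.dist_apply_le_dist (f := ⟨H, hH⟩) (g := G i) z).trans_lt hi
  simp only [Nat.unpair_pair]
  rw [← dist_eq_norm, dist_comm]
  refine (dist_triangle _ (G i z) _).trans_lt ?_
  calc _ < ε / 2 + ε / 2 := add_lt_add h2 h1
    _ = ε := add_halves ε

variable {p : ℕ} {F : ℕ → CubeTorus → ℂ}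

lemma mem_rootSet_iff {z : CubeTorus} :
    z ∈ rootSet p F ↔ ∀ j, F j z ^ p = (‖F j z‖ : ℂ) ^ p * z.2 j :=
  forall_congr' fun j => by rw [defect, norm_eq_zero, sub_eq_zero]

lemma eq_pow_mul_exp_arg {w f x u : ℂ} (hx : x = w * f) (hf : ‖f‖ = 1) (hw : w ≠ 0)
    (h : x ^ p = (‖x‖ : ℂ) ^ p * u) : u = f ^ p * Complex.exp (p * (w.arg * Complex.I)) := by
  have hw' : (‖w‖ : ℂ) ^ p ≠ 0 := pow_ne_zero _ (by simpa using hw)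
  refine mul_left_cancel₀ hw' ?_
  have hx' : ‖x‖ = ‖w‖ := by rw [hx, norm_mul, hf, mul_one]
  rw [← hx', ← h, hx, mul_pow, Complex.exp_nat_mul]
  conv_lhs => rw [← Complex.norm_mul_exp_arg_mul_I w]
  rw [norm_mul, hf]
  push_cast
  ring

theorem powersExtend_rootSet (hFc : ∀ j, Continuous (F j))
    (hd : ∀ G : CubeTorus → ℂ, Continuous G → ∀ ε > 0, ∃ j, ∀ z, ‖F j z - G z‖ < ε) :
    PowersExtend p (rootSet p F) := by
  have hcl : IsClosed (rootSet p F) := isClosed_rootSet hFc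
  have : CompactSpace (rootSet p F) := isCompact_iff_compactSpace.1 hcl.isCompact
  intro C hC f hf
  have hfC := continuousOn_iff_continuous_domRestrict.1 hf
  obtain ⟨G, hG⟩ := ContinuousMap.exists_extension
    (hcl.isClosedEmbedding_subtypeVal.comp hC.isClosedEmbedding_subtypeVal)
    (⟨fun x : C => (f x : ℂ), by
      exact continuous_subtype_val.comp hfC⟩ : C(C, ℂ))
  have hG' : ∀ x ∈ C, G x.1 = f x := fun x hx => DFunLike.congr_fun hG ⟨x, hx⟩
  obtain ⟨j, hj⟩ := hd G G.continuous 1 one_pos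
  let w : rootSet p F → ℂ := fun x => F j x.1 / f x
  have hw : ∀ x ∈ C, w x ∈ Complex.slitPlane := by
    intro x hx
    have h := hj x.1
    have h1 : ‖w x - 1‖ < 1 := by
      have : w x - 1 = (F j x.1 - f x) / f x := by
        rw [sub_div, div_self (Circle.coe_ne_zero _)]
      rw [this, norm_div, Circle.norm_coe, div_one, ← hG' x hx]
      exact h
    have h2 := (Complex.abs_re_le_norm _).trans_lt h1
    rw [Complex.sub_re, Complex.one_re, abs_lt] at h2
    exact Or.inl (by linarith)
  obtain ⟨θ, hθ⟩ := ContinuousMap.exists_extension hC.isClosedEmbedding_subtypeVal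
    (⟨fun x : C => (w x).arg, by
      refine continuous_iff_continuousAt.2 fun x =>
        (Complex.continuousAt_arg (hw x x.2)).comp (f := fun x : C => w x) ?_
      refine Continuous.continuousAt ?_
      refine Continuous.div ?_ (continuous_subtype_val.comp hfC) fun x => Circle.coe_ne_zero _
      exact (hFc j).comp (by fun_prop)⟩ : C(C, ℝ))
  have hθ' : ∀ x ∈ C, θ x = (w x).arg := fun x hx => DFunLike.congr_fun hθ ⟨x, hx⟩
  refine ⟨fun x => x.1.2 j * (Circle.exp (p * θ x))⁻¹, by fun_prop, fun x hx => ?_⟩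
  rw [mul_inv_eq_iff_eq_mul, hθ' x hx]
  ext
  have h := eq_pow_mul_exp_arg (p := p) (w := w x) (f := f x) (x := F j x.1) (u := x.1.2 j)
    (div_mul_cancel₀ _ (Circle.coe_ne_zero _)).symm (Circle.norm_coe _)
    (Complex.slitPlane_ne_zero (hw x hx)) (mem_rootSet_iff.1 x.2 j)
  rw [h]
  push_cast
  rw [mul_assoc]

end

section

open Topology
open scoped Uniformity

lemma Topology.IsDenseEmbedding.isOpenEmbedding {B Z : Type*} [TopologicalSpace B]
    [TopologicalSpace Z] [LocallyCompactSpace B] [T2Space Z] {e : B → Z}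
    (he : IsDenseEmbedding e) : IsOpenEmbedding e := by
  refine ⟨he.isEmbedding, isOpen_iff_mem_nhds.2 ?_⟩
  rintro _ ⟨b, rfl⟩
  obtain ⟨K, hK, hKb⟩ := exists_compact_mem_nhds b
  refine Filter.mem_of_superset (he.isDenseInducing.closure_image_mem_nhds hKb) ?_
  rw [(hK.image he.continuous).isClosed.closure_eq]
  exact image_subset_range e K

/-- Collapse the complement of the range of `e` to the point at infinity. -/
def collapse {B Z : Type*} (e : B → Z) : Z → OnePoint B := extend e (↑) fun _ => OnePoint.infty

section

variable {B Z : Type*} {e : B → Z}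

lemma collapse_apply (he : Injective e) (b : B) : collapse e (e b) = b := he.extend_apply _ _ b

lemma collapse_of_notMem {z : Z} (hz : z ∉ range e) : collapse e z = OnePoint.infty := extend_apply' _ _ _ hz

lemma injective_collapse_of_ne_infty (he : Injective e) {z z' : Z} (hz : collapse e z ≠ OnePoint.infty)
    (h : collapse e z = collapse e z') : z = z' := by
  have hr : ∀ w, collapse e w ≠ OnePoint.infty → w ∈ range e := fun w hw =>
    not_not.1 fun h => hw (collapse_of_notMem h)
  obtain ⟨b, rfl⟩ := hr z hz
  obtain ⟨b', rfl⟩ := hr z' (h ▸ hz)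
  rw [collapse_apply he, collapse_apply he, OnePoint.coe_eq_coe] at h
  rw [h]

lemma surjective_collapse (he : Injective e) (hr : range e ≠ univ) : Surjective (collapse e) := by
  intro w
  induction w using OnePoint.rec with
  | infty =>
    obtain ⟨z, hz⟩ := (ne_univ_iff_exists_notMem _).1 hr
    exact ⟨z, collapse_of_notMem hz⟩
  | coe b => exact ⟨e b, collapse_apply he b⟩

variable [TopologicalSpace B] [TopologicalSpace Z] [T2Space Z]

lemma continuous_collapse (he : IsOpenEmbedding e) : Continuous (collapse e) := by
  refine continuous_def.2 fun s hs => ?_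
  by_cases h : OnePoint.infty ∈ s
  · have hp : collapse e ⁻¹' s = (e '' ((↑) ⁻¹' s : Set B)ᶜ)ᶜ := by
      ext z
      by_cases hz : z ∈ range e
      · obtain ⟨b, rfl⟩ := hz
        simp [collapse_apply he.injective, he.injective.mem_set_image]
      · have : z ∉ e '' ((↑) ⁻¹' s : Set B)ᶜ := fun hz' => hz (image_subset_range _ _ hz')
        simp [collapse_of_notMem hz, h, this]
    rw [hp]
    exact (((OnePoint.isOpen_iff_of_mem' h).1 hs).1.image he.continuous).isClosed.isOpen_compl
  · have hp : collapse e ⁻¹' s = e '' ((↑) ⁻¹' s : Set B) := by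
      ext z
      by_cases hz : z ∈ range e
      · obtain ⟨b, rfl⟩ := hz
        simp [collapse_apply he.injective, he.injective.mem_set_image]
      · have : z ∉ e '' ((↑) ⁻¹' s : Set B) := fun hz' => hz (image_subset_range _ _ hz')
        simp [collapse_of_notMem hz, h, this]
    rw [hp]
    exact he.isOpenMap _ ((OnePoint.isOpen_iff_of_notMem h).1 hs)

lemma isQuotientMap_collapse [CompactSpace Z] [LocallyCompactSpace B] (he : IsOpenEmbedding e)
    (hr : range e ≠ univ) : IsQuotientMap (collapse e) :=
  have : T2Space B := he.isEmbedding.t2Space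
  (continuous_collapse he).isClosedMap.isQuotientMap (continuous_collapse he)
    (surjective_collapse he.injective hr)

end

namespace PowersExtend

variable {p : ℕ} {X Z : Type*} [TopologicalSpace X] [TopologicalSpace Z]

lemma of_isClosedEmbedding (hX : PowersExtend p X) {e : Z → X} (he : IsClosedEmbedding e) :
    PowersExtend p Z := by
  intro C hC f hf
  obtain ⟨g, hg, hgf⟩ := hX (e '' C) (he.isClosedMap C hC) (extend e f fun _ => 1) (by
    rintro _ ⟨z, hz, rfl⟩
    rw [ContinuousWithinAt, ← he.isEmbedding.map_nhdsWithin_eq, Filter.tendsto_map'_iff,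
      he.injective.extend_apply]
    exact Filter.Tendsto.congr (fun z => (he.injective.extend_apply f _ z).symm) (hf z hz))
  refine ⟨g ∘ e, hg.comp he.continuous, fun z hz => ?_⟩
  rw [comp_apply, hgf _ (mem_image_of_mem e hz), he.injective.extend_apply]

lemma of_isQuotientMap [T1Space X] (hZ : PowersExtend p Z) {q : Z → X} (hq : IsQuotientMap q)
    {a : X} (hqa : ∀ z z', q z ≠ a → q z = q z' → z = z') : PowersExtend p X := by
  classical
  intro C hC f hf
  obtain ⟨f', hf', hff'⟩ : ∃ f' : X → Circle, ContinuousOn f' (C ∪ {a}) ∧ EqOn f' f C := by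
    by_cases ha : a ∈ C
    · refine ⟨f, ?_, fun _ _ => rfl⟩
      rwa [union_eq_self_of_subset_right (singleton_subset_iff.2 ha)]
    · have h : EqOn (update f a 1) f C := fun x hx => update_of_ne (ne_of_mem_of_not_mem hx ha) _ _
      exact ⟨update f a 1, (hf.congr h).union_of_isClosed (continuousOn_singleton _ _) hC
        isClosed_singleton, h⟩
  obtain ⟨g, hg, hgf⟩ := hZ (q ⁻¹' (C ∪ {a})) ((hC.union isClosed_singleton).preimage hq.continuous)
    (f' ∘ q) (hf'.comp hq.continuous.continuousOn fun _ h => h)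
  have hgq : (fun x => g (surjInv hq.surjective x)) ∘ q = g := by
    funext z
    have h := surjInv_eq hq.surjective (q z)
    by_cases hz : q z = a
    · rw [comp_apply, hgf _ (Or.inr (h.trans hz)), hgf z (Or.inr hz), comp_apply, h, comp_apply]
    · rw [comp_apply, ← hqa z _ hz h.symm]
  refine ⟨fun x => g (surjInv hq.surjective x), hq.continuous_iff.2 (hgq.symm ▸ hg), fun x hx => ?_⟩
  have h := surjInv_eq hq.surjective x
  simp only
  rw [hgf _ (Or.inl (by rwa [h])), comp_apply, h, hff' hx]

end PowersExtend

theorem subsingleton_Hc_of_powersExtend {p : ℕ} (hp : 0 < p) {Y : Type*} [TopologicalSpace Y]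
    [CompactSpace Y] [T2Space Y] (hY : PowersExtend p Y) (B : Set Y) [LocallyCompactSpace B]
    (k : ℕ) : Subsingleton (AS.Hc (Localization.Away (p : ℤ)) (k + 2) B) := by
  unfold AS.Hc
  split_ifs with hB
  · exact AS.subsingleton_ASH_of_powersExtend hp (hY.of_isClosedEmbedding
      (isCompact_iff_compactSpace.2 hB).isClosed.isClosedEmbedding_subtypeVal) k
  · have he : IsDenseEmbedding (inclusion (subset_closure (s := B))) :=
      ⟨⟨(IsEmbedding.inclusion _).isInducing, denseRange_inclusion_iff _ |>.2 subset_rfl⟩,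
        inclusion_injective _⟩
    have hr : range (inclusion (subset_closure (s := B))) ≠ univ := fun h => hB <|
      isCompact_iff_compactSpace.1 <| by
        have : closure B ⊆ B := fun x hx => by
          obtain ⟨b, hb⟩ := h.ge (mem_univ (⟨x, hx⟩ : closure B))
          have hb' : (b : Y) = x := congrArg Subtype.val hb
          exact hb' ▸ b.2
        exact (isClosed_of_closure_subset this).isCompact
    have : CompactSpace (closure B) := isCompact_iff_compactSpace.1 isClosed_closure.isCompact
    exact AS.subsingleton_ASH_of_powersExtend hp ((hY.of_isClosedEmbedding
      isClosed_closure.isClosedEmbedding_subtypeVal).of_isQuotientMap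
        (isQuotientMap_collapse he.isOpenEmbedding hr) fun _ _ =>
          injective_collapse_of_ne_infty (inclusion_injective _)) k

end

section

open Topology
open scoped Uniformity

/-- The integer recording whether the step from `a` to `b` jumps up or down by more than `1/2`. -/
def jump (a b : ℝ) : ℤ := if 1 / 2 < b - a then 1 else if b - a < -(1 / 2) then -1 else 0

lemma jump_eq_zero {a b : ℝ} (h : |b - a| ≤ 1 / 2) : jump a b = 0 := by
  rw [abs_le] at h
  rw [jump, if_neg h.2.not_gt, if_neg h.1.not_gt]

lemma jump_eq_sub {a b : ℝ} (ha : a ∈ Icc (0 : ℝ) 1) (hb : b ∈ Icc (0 : ℝ) 1)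
    (ha' : a < 1 / 4 ∨ 3 / 4 < a) (hb' : b < 1 / 4 ∨ 3 / 4 < b) :
    jump a b = (if 1 / 2 < b then 1 else 0) - if 1 / 2 < a then 1 else 0 := by
  obtain ⟨ha0, ha1⟩ := ha
  obtain ⟨hb0, hb1⟩ := hb
  unfold jump
  rcases ha' with h | h <;> rcases hb' with h' | h' <;> split_ifs <;> first | rfl | (exfalso; linarith)

/-- The function on the one-point compactification that extends `h` by zero at infinity. -/
def zeroExtension {Y : Type*} {B : Set Y} (h : Y → ℝ) (w : OnePoint B) : ℝ :=
  w.elim 0 fun b => h b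

section

variable {Y : Type*} {h : Y → ℝ} {B : Set Y}

lemma zeroExtension_collapse_of_mem {z : Y} (hz : z ∈ B) :
    zeroExtension h (collapse ((↑) : B → Y) z) = h z := by
  rw [collapse_apply (e := ((↑) : B → Y)) Subtype.val_injective ⟨z, hz⟩]
  rfl

lemma zeroExtension_collapse_of_notMem {z : Y} (hz : z ∉ B) :
    zeroExtension h (collapse ((↑) : B → Y) z) = 0 := by
  rw [collapse_of_notMem (by simpa using hz)]
  rfl

variable [TopologicalSpace Y] [CompactSpace Y] [T2Space Y]

theorem nontrivial_ASH_one_onePoint (A : Type*) [AddCommGroup A] [Nontrivial A]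
    (hc : Continuous h) (h01 : ∀ z, h z ∈ Icc (0 : ℝ) 1) (h0 : ∃ z, h z = 0)
    (hS : ∀ S : Set Y, IsClopen S → h ⁻¹' {0} ⊆ S → (S ∩ h ⁻¹' {1}).Nonempty) :
    Nontrivial (AS.ASH A 1 (OnePoint (h ⁻¹' Ioo 0 1))) := by
  classical
  obtain ⟨a, ha⟩ := exists_ne (0 : A)
  obtain ⟨z₀, hz₀⟩ := h0
  have hBo : IsOpen (h ⁻¹' Ioo 0 1) := isOpen_Ioo.preimage hc
  set B : Set Y := h ⁻¹' Ioo 0 1 with hB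
  have hLC : LocallyCompactSpace B := hBo.locallyCompactSpace
  have hz₀B : z₀ ∉ B := by simp [hB, hz₀]
  let q : Y → OnePoint B := collapse ((↑) : B → Y)
  have hq : IsQuotientMap q := isQuotientMap_collapse hBo.isOpenEmbedding_subtypeVal
    (by rw [Subtype.range_val]; exact fun h => hz₀B (h.ge (mem_univ z₀)))
  let g : OnePoint B → ℝ := zeroExtension h
  have hg : ∀ z ∈ B, g (q z) = h z := fun z => zeroExtension_collapse_of_mem
  have hg' : ∀ z ∉ B, g (q z) = 0 := fun z => zeroExtension_collapse_of_notMem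
  have hq' : ∀ z ∉ B, q z = OnePoint.infty := fun z hz => collapse_of_notMem (by simpa using hz)
  have hh : ∀ z ∉ B, h z = 0 ∨ h z = 1 := by
    intro z hz
    have h1 := h01 z
    by_contra! hne
    exact hz ⟨h1.1.lt_of_ne' hne.1, h1.2.lt_of_ne hne.2⟩
  have hg01 : ∀ w, g w ∈ Icc (0 : ℝ) 1 := by
    intro w
    obtain ⟨z, rfl⟩ := hq.surjective w
    by_cases hz : z ∈ B
    · rw [hg z hz]; exact h01 z
    · rw [hg' z hz]; simp
  let φ : AS.Cochain A (OnePoint B) 1 := fun s => jump (g (s 0)) (g (s 1)) • a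
  have hcoc : ∀ z, ∃ u : Set (OnePoint B), IsOpen u ∧ q z ∈ u ∧ ∀ s : Fin 3 → OnePoint B,
      (∀ i, s i ∈ u) → AS.d A _ 1 φ s = 0 := by
    intro z
    have key : ∀ s : Fin 3 → OnePoint B, jump (g (s 1)) (g (s 2)) - jump (g (s 0)) (g (s 2)) +
        jump (g (s 0)) (g (s 1)) = 0 → AS.d A _ 1 φ s = 0 := by
      intro s hs
      rw [AS.d_one_apply]
      simp only [φ, Matrix.cons_val_zero, Matrix.cons_val_one]
      rw [← sub_smul, ← add_smul, hs, zero_smul]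
    by_cases hz : z ∈ B
    · refine ⟨{w | w ≠ OnePoint.infty ∧ |g w - h z| < 1 / 4}, ?_, ?_, fun s hs => key s ?_⟩
      · rw [← hq.isOpen_preimage]
        have : q ⁻¹' {w | w ≠ OnePoint.infty ∧ |g w - h z| < 1 / 4} = B ∩ {x | |h x - h z| < 1 / 4} := by
          ext x
          by_cases hx : x ∈ B
          · have : q x ≠ OnePoint.infty := by
              rw [show q x = _ from collapse_apply (e := ((↑) : B → Y)) Subtype.val_injective ⟨x, hx⟩]
              exact OnePoint.coe_ne_infty _
            simp [hx, hg x hx, this]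
          · simp [hx, hq' x hx]
        rw [this]
        exact hBo.inter (isOpen_lt (by fun_prop) continuous_const)
      · refine ⟨?_, by simp [hg z hz]⟩
        rw [show q z = _ from collapse_apply (e := ((↑) : B → Y)) Subtype.val_injective ⟨z, hz⟩]
        exact OnePoint.coe_ne_infty _
      · have hj : ∀ i j, jump (g (s i)) (g (s j)) = 0 := by
          intro i j
          have h1 := (hs i).2
          have h2 := (hs j).2
          rw [abs_lt] at h1 h2
          exact jump_eq_zero (abs_le.2 ⟨by linarith, by linarith⟩)
        simp [hj]
    · refine ⟨{w | g w < 1 / 4 ∨ 3 / 4 < g w}, ?_, ?_, fun s hs => key s ?_⟩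
      · rw [← hq.isOpen_preimage]
        have : q ⁻¹' {w | g w < 1 / 4 ∨ 3 / 4 < g w} = {x | h x < 1 / 4 ∨ 3 / 4 < h x} := by
          ext x
          by_cases hx : x ∈ B
          · simp [hg x hx]
          · rcases hh x hx with h | h <;> simp [hg' x hx, h]; norm_num
        rw [this]
        exact (isOpen_lt hc continuous_const).union (isOpen_lt continuous_const hc)
      · left
        rw [hg' z hz]
        norm_num
      · rw [jump_eq_sub (hg01 _) (hg01 _) (hs 1) (hs 2), jump_eq_sub (hg01 _) (hg01 _) (hs 0) (hs 2),
          jump_eq_sub (hg01 _) (hg01 _) (hs 0) (hs 1)]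
        ring
  have hφ : AS.d A _ 1 φ ∈ AS.locZero A (OnePoint B) 2 := by
    refine ⟨{u | IsOpen u ∧ ∀ s : Fin 3 → OnePoint B, (∀ i, s i ∈ u) → AS.d A _ 1 φ s = 0},
      ⟨fun u hu => hu.1, eq_univ_of_forall fun w => ?_⟩, fun s ⟨u, hu, hs⟩ => hu.2 s hs⟩
    obtain ⟨z, rfl⟩ := hq.surjective w
    obtain ⟨u, hu, hzu, hus⟩ := hcoc z
    exact ⟨u, ⟨hu, hus⟩, hzu⟩
  rw [← not_subsingleton_iff_nontrivial]
  intro hsub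
  have htop := (QuotientAddGroup.subsingleton_iff.1 hsub).ge
  have hmem := htop (AddSubgroup.mem_top (⟨(φ : AS.QC A (OnePoint B) 1),
    (QuotientAddGroup.eq_zero_iff _).2 hφ⟩ : AS.cocycles A (OnePoint B) 1))
  obtain ⟨ψ', hψ⟩ := hmem
  induction ψ' using QuotientAddGroup.induction_on with
  | H ψ =>
  have hψ' := QuotientAddGroup.eq.1 (show ((AS.d A _ 0 ψ : AS.Cochain A (OnePoint B) 1) :
    AS.QC A (OnePoint B) 1) = φ from hψ)
  obtain ⟨U, ⟨hUo, hUc⟩, hU⟩ := hψ'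
  have hloc : ∀ z, ∀ᶠ z' in 𝓝 z, ψ (fun _ => q z') - ψ (fun _ => q z) =
      jump (g (q z)) (g (q z')) • a := by
    intro z
    obtain ⟨u, hu, hzu⟩ := hUc.ge (mem_univ (q z))
    filter_upwards [((hUo u hu).preimage hq.continuous).mem_nhds hzu] with z' hz'
    have h1 := hU ![q z, q z'] ⟨u, hu, by
      intro i; fin_cases i
      · exact hzu
      · exact hz'⟩
    rw [Pi.add_apply, Pi.neg_apply, neg_add_eq_zero, AS.d_zero_apply] at h1
    exact h1
  let χ : Y → A := fun z => ψ (fun _ => q z) + if h z = 1 then a else 0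
  have hχ : IsLocallyConstant χ := by
    rw [IsLocallyConstant.iff_eventually_eq]
    intro z
    by_cases hz : z ∈ B
    · filter_upwards [hloc z, hBo.mem_nhds hz,
        hc.continuousAt.eventually (Metric.ball_mem_nhds (h z) (by norm_num : (0 : ℝ) < 1 / 4))]
        with y hy hyB hyd
      rw [Real.dist_eq] at hyd
      rw [hg z hz, hg y hyB, jump_eq_zero (hyd.le.trans (by norm_num)), zero_smul] at hy
      have h1 : h z ≠ 1 := hz.2.ne
      have h2 : h y ≠ 1 := hyB.2.ne
      simp only [χ, if_neg h1, if_neg h2, sub_eq_zero.1 hy]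
    rcases hh z hz with h0 | h1
    · filter_upwards [hloc z, hc.continuousAt.eventually_lt_const
        (show h z < 1 / 4 by rw [h0]; norm_num)] with y hy hyd
      have h1 : h y ≠ 1 := by intro h; rw [h] at hyd; norm_num at hyd
      have hgy : |g (q y) - 0| ≤ 1 / 2 := by
        by_cases hyB : y ∈ B
        · rw [hg y hyB, sub_zero, abs_of_pos hyB.1]; linarith
        · rw [hg' y hyB]; norm_num
      rw [hg' z hz, jump_eq_zero hgy, zero_smul] at hy
      have h2 : h z ≠ 1 := by rw [h0]; norm_num
      simp only [χ, if_neg h1, if_neg h2, sub_eq_zero.1 hy]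
    · filter_upwards [hloc z, hc.continuousAt.eventually_const_lt
        (show 3 / 4 < h z by rw [h1]; norm_num)] with y hy hyd
      rw [hg' z hz] at hy
      by_cases hyB : y ∈ B
      · rw [hg y hyB, jump, if_pos (by linarith), one_smul] at hy
        have h2 : h y ≠ 1 := hyB.2.ne
        simp only [χ, if_neg h2, if_pos h1, ← hy]
        abel
      · have h2 : h y = 1 := (hh y hyB).resolve_left fun h => by rw [h] at hyd; norm_num at hyd
        rw [hg' y hyB, jump_eq_zero (by norm_num), zero_smul] at hy
        simp only [χ, if_pos h2, if_pos h1, sub_eq_zero.1 hy]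
  obtain ⟨z, hz, hz1⟩ := hS (χ ⁻¹' {χ z₀}) (hχ.isClopen_fiber _) fun z hz => by
    have hz' : h z = 0 := hz
    have hzB : z ∉ B := by simp [hB, hz']
    simp [χ, hz', hz₀, hq' z hzB, hq' z₀ hz₀B]
  have hz1' : h z = 1 := hz1
  have hzB : z ∉ B := by simp [hB, hz1']
  simp [χ, hz1', hz₀, hq' z hzB, hq' z₀ hz₀B, ha] at hz

end

end

section

open Topology
open scoped Uniformity
variable {p : ℕ} {F : ℕ → CubeTorus → ℂ}

lemma nontrivial_Hc_one_rootSet {A : Type*} [AddCommGroup A] [Nontrivial A] (hp : p.Prime)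
    (hFc : ∀ j, Continuous (F j))
    (hF : ∀ m, ∀ j ≤ m, ∀ v z, F j (setCircle m v z) = F j z) :
    ∃ B : Set (rootSet p F), LocallyCompactSpace B ∧ Nontrivial (AS.Hc A 1 B) := by
  have hcl : IsClosed (rootSet p F) := isClosed_rootSet hFc
  have : CompactSpace (rootSet p F) := isCompact_iff_compactSpace.1 hcl.isCompact
  let h : rootSet p F → ℝ := fun z => z.1.1 0
  have hc : Continuous h := by fun_prop
  have hsurj : ∀ t : unitInterval, ∃ z, h z = t := fun t => by
    obtain ⟨z, hz, hzt⟩ := exists_mem_rootSet_fst_eq (p := p) hFc hF fun _ => t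
    exact ⟨⟨z, hz⟩, by simp [h, hzt]⟩
  have hopen : IsOpen (h ⁻¹' Ioo 0 1) := isOpen_Ioo.preimage hc
  refine ⟨h ⁻¹' Ioo 0 1, hopen.locallyCompactSpace, ?_⟩
  have hnc : ¬CompactSpace (h ⁻¹' Ioo 0 1) := fun hcomp => by
    obtain ⟨w, hw⟩ := hsurj ⟨1 / 2, by norm_num, by norm_num⟩
    obtain ⟨x, hx, hmin⟩ := (isCompact_iff_compactSpace.2 hcomp).exists_isMinOn
      ⟨w, show h w ∈ Ioo (0 : ℝ) 1 by rw [hw]; norm_num⟩ hc.continuousOn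
    obtain ⟨y, hy⟩ := hsurj ⟨h x / 2, by linarith [hx.1], by linarith [hx.2, hx.1]⟩
    have hy' : h y = h x / 2 := hy
    have hle : h x ≤ h y := hmin
      (show h y ∈ Ioo (0 : ℝ) 1 by rw [hy']; constructor <;> linarith [hx.1, hx.2])
    linarith [hx.1]
  rw [AS.Hc, if_neg hnc]
  refine nontrivial_ASH_one_onePoint A hc (fun z => (z.1.1 0).2) (by simpa using hsurj 0) ?_
  intro S hS hS0
  by_contra hS1
  have hdisj : ∀ z ∈ S, h z ≠ 1 := fun z hz h1 => hS1 ⟨z, hz, h1⟩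
  let P : Set CubeTorus := (↑) '' S ∪ {z | z.1 0 = 0}
  let Q : Set CubeTorus := (↑) '' Sᶜ ∪ {z | z.1 0 = 1}
  have hPc : IsClosed P := (hcl.isClosedMap_subtype_val _ hS.1).union
    (isClosed_eq (by fun_prop) continuous_const)
  have hQc : IsClosed Q := (hcl.isClosedMap_subtype_val _ hS.compl.1).union
    (isClosed_eq (by fun_prop) continuous_const)
  have hPQ : Disjoint P Q := by
    rw [Set.disjoint_left]
    rintro _ (⟨z, hz, rfl⟩ | hz) (⟨w, hw, hwz⟩ | hw)
    · exact hw (Subtype.ext hwz ▸ hz)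
    · exact hdisj z hz (by simp [h, show z.1.1 0 = 1 from hw])
    · subst hwz
      exact hw (hS0 (by simp [h, show w.1.1 0 = 0 from hz]))
    · exact zero_ne_one ((show _ = _ from hz).symm.trans hw)
  obtain ⟨H, hH0, hH1, -⟩ := exists_continuous_zero_one_of_isClosed hPc hQc hPQ
  obtain ⟨z, hz, hzH⟩ := exists_mem_rootSet_eq_half hp hFc hF (c := fun _ : Fin 1 => 0)
    (injective_of_subsingleton _) (H := fun _ => H) (fun _ => H.continuous)
    (fun _ z hz => hH0 (Or.inr hz)) (fun _ z hz => hH1 (Or.inr hz))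
  have hz2 : H z = 1 / 2 := hzH 0
  by_cases hzS : (⟨z, hz⟩ : rootSet p F) ∈ S
  · rw [hH0 (Or.inl ⟨_, hzS, rfl⟩)] at hz2
    norm_num at hz2
  · rw [hH1 (Or.inl ⟨_, hzS, rfl⟩)] at hz2
    norm_num at hz2

lemma cohDim_rootSet (hp : p.Prime) (hFc : ∀ j, Continuous (F j))
    (hF : ∀ m, ∀ j ≤ m, ∀ v z, F j (setCircle m v z) = F j z)
    (hd : ∀ G : CubeTorus → ℂ, Continuous G → ∀ ε > 0, ∃ j, ∀ z, ‖F j z - G z‖ < ε) :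
    cohDim (Localization.Away (p : ℤ)) (rootSet p F) = 1 := by
  have : CompactSpace (rootSet p F) :=
    isCompact_iff_compactSpace.1 (isClosed_rootSet hFc).isCompact
  have : Nontrivial (Localization.Away (p : ℤ)) :=
    (IsLocalization.injective (Localization.Away (p : ℤ)) (powers_le_nonZeroDivisors_of_noZeroDivisors
      (Int.natCast_ne_zero.2 hp.ne_zero))).nontrivial
  refine le_antisymm (sSup_le ?_) (le_sSup ⟨1, rfl, nontrivial_Hc_one_rootSet hp hFc hF⟩)
  rintro _ ⟨n, rfl, B, hB, hn⟩
  by_contra! hlt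
  obtain ⟨k, rfl⟩ := Nat.exists_eq_add_of_le' (Nat.one_lt_cast.1 hlt)
  exact not_subsingleton_iff_nontrivial.2 hn
    (subsingleton_Hc_of_powersExtend hp.pos (powersExtend_rootSet hFc hd) B k)

end

/-- **Lemma 6** of the "Strongly infinite-dimensional orbit spaces" section
(Dranishnikov–West): for every prime `p` there is a strongly infinite-dimensional compact
metric space `Y` with cohomological dimension `dim_{ℤ[1/p]} Y = 1`. -/
theorem exists_SID_compactum_cohDim_away_eq_one (p : ℕ) (hp : p.Prime) :
    ∃ (Y : Type) (_ : MetricSpace Y) (_ : CompactSpace Y),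
      StronglyInfiniteDimensional Y ∧
      cohDim (Localization.Away (p : ℤ)) Y = 1 := by
  obtain ⟨F, hFc, hF, hd⟩ := exists_dense_triangular_functions
  exact ⟨rootSet p F, TopologicalSpace.metrizableSpaceMetric _,
    isCompact_iff_compactSpace.1 (isClosed_rootSet hFc).isCompact,
    stronglyInfiniteDimensional_rootSet hp hFc hF, cohDim_rootSet hp hFc hF hd⟩
end
end

section
/- If f: X → Y is a closed surjective continuous map of metric spaces, then dim X ≤ dim Y + sup{ dim f^{-1}(y) : y ∈ Y }. -/
open Set Function

open scoped ENNReal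

noncomputable section

/-! ### Covering dimension -/

/-- `CovDimLE X n` : every open cover of `X` has an open refinement of order at most `n + 1`
(i.e. at most `n + 1` members of the refinement have a common point). -/
def CovDimLE (X : Type*) [TopologicalSpace X] (n : ℕ) : Prop :=
  ∀ U : Set (Set X), (∀ u ∈ U, IsOpen u) → ⋃₀ U = univ →
    ∃ V : Set (Set X), (∀ v ∈ V, IsOpen v) ∧ ⋃₀ V = univ ∧
      (∀ v ∈ V, ∃ u ∈ U, v ⊆ u) ∧
      ∀ T : Finset (Set X), ↑T ⊆ V → (⋂₀ (T : Set (Set X))).Nonempty → T.card ≤ n + 1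

/-- The (Lebesgue) covering dimension of a topological space, valued in `ℕ∞`. -/
noncomputable def covDim (X : Type*) [TopologicalSpace X] : ℕ∞ :=
  sInf {e : ℕ∞ | ∃ n : ℕ, e = (n : ℕ∞) ∧ CovDimLE X n}

/-- `ColorCoverable A m`: every family of open sets covering `A` is refined by the union of `m`
families of pairwise disjoint open sets of the ambient space that together cover `A`. -/
def ColorCoverable {X : Type*} [TopologicalSpace X] (A : Set X) (m : ℕ) : Prop :=
  ∀ U : Set (Set X), (∀ u ∈ U, IsOpen u) → A ⊆ ⋃₀ U →
    ∃ B : Fin m → Set (Set X), (∀ c, ∀ b ∈ B c, IsOpen b ∧ ∃ u ∈ U, b ⊆ u) ∧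
      (∀ c, ∀ b ∈ B c, ∀ b' ∈ B c, (b ∩ b').Nonempty → b = b') ∧
      ∀ x ∈ A, ∃ c, ∃ b ∈ B c, x ∈ b

theorem ColorCoverable.inter_isClosed {X : Type*} [TopologicalSpace X] {A L : Set X} {m : ℕ}
    (h : ColorCoverable A m) (hL : IsClosed L) : ColorCoverable (A ∩ L) m := by
  intro U hU hAU
  obtain ⟨B, hB, hdis, hcov⟩ := h (insert Lᶜ U)
    (by rintro u (rfl | hu); exacts [hL.isOpen_compl, hU u hu])
    (fun x hxA ↦ by
      by_cases hx : x ∈ L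
      · obtain ⟨u, hu, hxu⟩ := hAU ⟨hxA, hx⟩
        exact ⟨u, Or.inr hu, hxu⟩
      · exact ⟨_, Or.inl rfl, hx⟩)
  refine ⟨fun c ↦ {b ∈ B c | (b ∩ L).Nonempty}, ?_, ?_, ?_⟩
  · rintro c b ⟨hb, x, hxb, hxL⟩
    obtain ⟨ho, u, rfl | hu, hbu⟩ := hB c b hb
    · exact absurd hxL (hbu hxb)
    · exact ⟨ho, u, hu, hbu⟩
  · exact fun c b hb b' hb' ↦ hdis c b hb.1 b' hb'.1
  · rintro x ⟨hxA, hxL⟩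
    obtain ⟨c, b, hb, hxb⟩ := hcov x hxA
    exact ⟨c, b, ⟨hb, x, hxb, hxL⟩, hxb⟩

/-- An open family of order at most `m` on `A` is refined by `m` disjoint open families
covering `A` (Ostrand). -/
theorem exists_disjoint_families_of_order_le {X ι : Type*} [PseudoMetricSpace X] {A : Set X}
    {m : ℕ} (E : ι → Set X) (hE : ∀ i, IsOpen (E i)) (hcov : ∀ x ∈ A, ∃ i, x ∈ E i)
    (hord : ∀ x ∈ A, ∀ T : Finset ι, (∀ i ∈ T, x ∈ E i) → T.card ≤ m) :
    ∃ B : Fin m → Set (Set X), (∀ c, ∀ b ∈ B c, IsOpen b ∧ ∃ i, b ⊆ E i) ∧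
      (∀ c, ∀ b ∈ B c, ∀ b' ∈ B c, (b ∩ b').Nonempty → b = b') ∧
      ∀ x ∈ A, ∃ c, ∃ b ∈ B c, x ∈ b := by
  let G : Finset ι → Set X := fun S ↦ {x | ∃ r ε : ℝ, 0 < r ∧ 0 < ε ∧
    (∀ i ∈ S, Metric.ball x (r + ε) ⊆ E i) ∧ ∀ j, j ∉ S → ¬ Metric.ball x r ⊆ E j}
  refine ⟨fun c ↦ G '' {S | S.card = c + 1}, ?_, ?_, ?_⟩
  · rintro c _ ⟨S, hS, rfl⟩
    have hS : S.card = c + 1 := hS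
    constructor
    · rw [Metric.isOpen_iff]
      rintro x ⟨r, ε, hr, hε, h1, h2⟩
      refine ⟨ε / 4, by positivity, fun y hy ↦ ?_⟩
      rw [Metric.mem_ball] at hy
      refine ⟨r + ε / 4, ε / 4, by positivity, by positivity, fun i hi ↦ ?_, fun j hj hj' ↦ ?_⟩
      · exact (Metric.ball_subset_ball' (by linarith)).trans (h1 i hi)
      · refine h2 j hj ((Metric.ball_subset_ball' ?_).trans hj')
        rw [dist_comm]; linarith
    · obtain ⟨i, hi⟩ := Finset.card_pos.1 (by omega : 0 < S.card)
      refine ⟨i, ?_⟩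
      rintro x ⟨r, ε, hr, hε, h1, -⟩
      exact h1 i hi (Metric.mem_ball_self (by positivity))
  · rintro c _ ⟨S, hS, rfl⟩ _ ⟨S', hS', rfl⟩ ⟨x, ⟨r, ε, hr, hε, h1, h2⟩, r', ε', hr', hε', h1', h2'⟩
    have hS : S.card = c + 1 := hS
    have hS' : S'.card = c + 1 := hS'
    by_contra hne
    have hSS' : ¬ S ⊆ S' := fun h ↦ hne (by rw [Finset.eq_of_subset_of_card_le h (by omega)])
    have hS'S : ¬ S' ⊆ S := fun h ↦ hne (by rw [Finset.eq_of_subset_of_card_le h (by omega)])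
    obtain ⟨i, hi, hi'⟩ := Finset.not_subset.1 hSS'
    obtain ⟨j, hj, hj'⟩ := Finset.not_subset.1 hS'S
    rcases le_total r r' with hle | hle
    · exact h2 j hj' ((Metric.ball_subset_ball (by linarith)).trans (h1' j hj))
    · exact h2' i hi' ((Metric.ball_subset_ball (by linarith)).trans (h1 i hi))
  · intro x hx
    have hfin : {i | x ∈ E i}.Finite := by
      by_contra hinf
      obtain ⟨T, hT, hcard⟩ := Set.Infinite.exists_subset_card_eq hinf (m + 1)
      have := hord x hx T (fun i hi ↦ hT hi)
      omega
    have hmem : ∀ i, i ∈ hfin.toFinset ↔ x ∈ E i := by simp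
    have hcard := hord x hx hfin.toFinset (fun i hi ↦ (hmem i).1 hi)
    obtain ⟨i₀, hi₀⟩ := hcov x hx
    have hpos : 0 < hfin.toFinset.card := Finset.card_pos.2 ⟨i₀, (hmem i₀).2 hi₀⟩
    refine ⟨⟨hfin.toFinset.card - 1, by omega⟩, _, ⟨hfin.toFinset, ?_, rfl⟩, ?_⟩
    · change _ = _ - 1 + 1
      omega
    · have hnhds : ⋂ i ∈ hfin.toFinset, E i ∈ nhds x := by
        rw [Filter.biInter_finset_mem]
        exact fun i hi ↦ (hE i).mem_nhds ((hmem i).1 hi)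
      obtain ⟨ρ, hρ, hsub⟩ := Metric.mem_nhds_iff.1 hnhds
      refine ⟨ρ / 2, ρ / 2, by positivity, by positivity, fun i hi ↦ ?_, fun j hj hj' ↦ ?_⟩
      · rw [add_halves]
        exact hsub.trans (biInter_subset_of_mem hi)
      · exact hj ((hmem j).2 (hj' (Metric.mem_ball_self (by positivity))))

theorem CovDimLE.colorCoverable_range {W X : Type*} [TopologicalSpace W] [PseudoMetricSpace X]
    {e : W → X} (he : Topology.IsInducing e) {k m : ℕ} (hkm : k + 1 ≤ m) (h : CovDimLE W k) :
    ColorCoverable (range e) m := by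
  intro U hU hAU
  obtain ⟨V, hVo, hVc, hVU, hord⟩ := h (preimage e '' U)
    (by rintro _ ⟨u, hu, rfl⟩; exact (hU u hu).preimage he.continuous)
    (by
      refine eq_univ_of_forall fun x ↦ ?_
      obtain ⟨u, hu, hxu⟩ := hAU ⟨x, rfl⟩
      exact ⟨_, ⟨u, hu, rfl⟩, hxu⟩)
  have hext : ∀ v : V, ∃ w : Set X, IsOpen w ∧ (∃ u ∈ U, w ⊆ u) ∧ e ⁻¹' w = v := by
    rintro ⟨v, hv⟩
    obtain ⟨w, hw, hwv⟩ := he.isOpen_iff.1 (hVo v hv)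
    obtain ⟨_, ⟨u, hu, rfl⟩, hvu⟩ := hVU v hv
    refine ⟨w ∩ u, hw.inter (hU u hu), ⟨u, hu, inter_subset_right⟩, ?_⟩
    rw [preimage_inter, hwv]
    exact inter_eq_left.2 hvu
  choose E hE hEU hEV using hext
  obtain ⟨B, hB, hdis, hcov⟩ := exists_disjoint_families_of_order_le (A := range e) (m := m) E hE
    (by
      rintro _ ⟨x, rfl⟩
      obtain ⟨v, hv, hxv⟩ := (hVc ▸ mem_univ x : x ∈ ⋃₀ V)
      exact ⟨⟨v, hv⟩, ((hEV ⟨v, hv⟩).symm ▸ hxv : x ∈ e ⁻¹' E ⟨v, hv⟩)⟩)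
    (by
      rintro _ ⟨x, rfl⟩ T hT
      have hle := hord (T.map (Embedding.subtype (· ∈ V)))
        (by intro v hv; simp at hv; exact hv.1)
        ⟨x, by
          intro v hv
          simp only [Finset.coe_map, Embedding.subtype_apply, mem_image, Finset.mem_coe] at hv
          obtain ⟨i, hi, rfl⟩ := hv
          rw [← hEV i]
          exact hT i hi⟩
      rw [Finset.card_map] at hle
      omega)
  refine ⟨B, fun c b hb ↦ ⟨(hB c b hb).1, ?_⟩, hdis, hcov⟩
  obtain ⟨-, i, hi⟩ := hB c b hb
  obtain ⟨u, hu, hiu⟩ := hEU i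
  exact ⟨u, hu, hi.trans hiu⟩

theorem ColorCoverable.covDimLE {X : Type*} [TopologicalSpace X] {n : ℕ}
    (h : ColorCoverable (univ : Set X) (n + 1)) : CovDimLE X n := by
  intro U hU hUc
  obtain ⟨B, hB, hdis, hcov⟩ := h U hU hUc.ge
  refine ⟨⋃ c, B c, ?_, ?_, ?_, ?_⟩
  · intro v hv
    obtain ⟨c, hc⟩ := mem_iUnion.1 hv
    exact (hB c v hc).1
  · refine eq_univ_of_forall fun x ↦ ?_
    obtain ⟨c, b, hb, hxb⟩ := hcov x trivial
    exact ⟨b, mem_iUnion.2 ⟨c, hb⟩, hxb⟩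
  · intro v hv
    obtain ⟨c, hc⟩ := mem_iUnion.1 hv
    exact (hB c v hc).2
  · rintro T hT ⟨x, hx⟩
    have hcol : ∀ v : Set X, ∃ c, v ∈ T → v ∈ B c := fun v ↦ by
      by_cases hv : v ∈ T
      · obtain ⟨c, hc⟩ := mem_iUnion.1 (hT hv)
        exact ⟨c, fun _ ↦ hc⟩
      · exact ⟨0, fun h ↦ absurd h hv⟩
    choose g hg using hcol
    have := Finset.card_le_card_of_injOn (s := T) (t := Finset.univ) g (fun _ _ ↦ by simp)
      (fun v hv w hw hvw ↦ hdis (g v) v (hg v hv) w (hvw ▸ hg w hw) ⟨x, hx v hv, hx w hw⟩)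
    simpa using this

/-- Every open cover of a pseudometric space has an open star refinement. -/
theorem exists_open_star_refinement {X : Type*} [PseudoMetricSpace X] (C : Set (Set X))
    (hC : ∀ u ∈ C, IsOpen u) (hcov : ⋃₀ C = univ) :
    ∃ D : Set (Set X), (∀ d ∈ D, IsOpen d) ∧ (∀ x, ∃ d ∈ D, x ∈ d) ∧
      ∀ d ∈ D, ∃ u ∈ C, ∀ d' ∈ D, (d ∩ d').Nonempty → d' ⊆ u := by
  have hex : ∀ x : X, ∃ i : ℕ, ∃ u ∈ C, Metric.ball x (7 * (1 / 2) ^ i) ⊆ u := by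
    intro x
    obtain ⟨u, hu, hxu⟩ := (hcov ▸ mem_univ x : x ∈ ⋃₀ C)
    obtain ⟨ε, hε, hsub⟩ := Metric.isOpen_iff.1 (hC u hu) x hxu
    obtain ⟨i, hi⟩ := exists_pow_lt_of_lt_one (by positivity : 0 < ε / 7)
      (by norm_num : (1 / 2 : ℝ) < 1)
    exact ⟨i, u, hu, (Metric.ball_subset_ball (by linarith)).trans hsub⟩
  classical
  let e : X → ℕ := fun x ↦ Nat.find (hex x)
  let r : X → ℝ := fun x ↦ (1 / 2) ^ e x
  have hr : ∀ x, 0 < r x := fun x ↦ by positivity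
  have hcomp : ∀ x y, (Metric.ball x (r x) ∩ Metric.ball y (r y)).Nonempty → r y ≤ 2 * r x := by
    rintro x y ⟨z, hzx, hzy⟩
    by_contra! hlt
    rw [Metric.mem_ball] at hzx hzy
    have hxy : dist x y < r x + r y :=
      (dist_triangle_left x y z).trans_lt (add_lt_add hzx hzy)
    have hlt' : e y + 1 < e x := by
      rw [← not_le]
      intro hle
      have : (1 / 2 : ℝ) ^ (e y + 1) ≤ (1 / 2) ^ e x :=
        pow_le_pow_of_le_one (by norm_num) (by norm_num) hle
      rw [pow_succ] at this
      change r y * (1 / 2) ≤ r x at this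
      linarith
    obtain ⟨u, hu, hyu⟩ := Nat.find_spec (hex y)
    refine Nat.find_min (hex x) hlt' ⟨u, hu, (Metric.ball_subset_ball' ?_).trans hyu⟩
    change 7 * (1 / 2) ^ (e y + 1) + dist x y ≤ 7 * r y
    have : (1 / 2 : ℝ) ^ (e y + 1) = r y * (1 / 2) := pow_succ _ _
    rw [this]
    linarith [hr x]
  refine ⟨range fun x ↦ Metric.ball x (r x), ?_, ?_, ?_⟩
  · rintro _ ⟨x, rfl⟩
    exact Metric.isOpen_ball
  · exact fun x ↦ ⟨_, ⟨x, rfl⟩, Metric.mem_ball_self (hr x)⟩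
  · rintro _ ⟨x, rfl⟩
    obtain ⟨u, hu, hxu⟩ := Nat.find_spec (hex x)
    refine ⟨u, hu, ?_⟩
    rintro _ ⟨y, rfl⟩ hne
    refine (Metric.ball_subset_ball' ?_).trans hxu
    obtain ⟨z, hzx, hzy⟩ := hne
    have hle := hcomp x y ⟨z, hzx, hzy⟩
    rw [Metric.mem_ball] at hzx hzy
    have hxy : dist y x < r y + r x :=
      (dist_triangle_left y x z).trans_lt (add_lt_add hzy hzx)
    change r y + dist y x ≤ 7 * r x
    linarith [hr x]

/-- One step of the construction of a sequence of covers: the open cover `C` is refined by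
finitely many discrete families `B c` and by a much finer open cover `C'`. -/
theorem ColorCoverable.exists_discrete_families {X : Type*} [PseudoMetricSpace X] {N : ℕ}
    (h : ColorCoverable (univ : Set X) N) {ε : ℝ} (hε : 0 < ε) (C : Set (Set X))
    (hC : ∀ u ∈ C, IsOpen u) (hcov : ⋃₀ C = univ) :
    ∃ (B : Fin N → Set (Set X)) (C' : Set (Set X)), (∀ c, ∀ b ∈ B c, IsOpen b) ∧
      (∀ x, ∃ c, ∃ b ∈ B c, x ∈ b) ∧ (∀ w ∈ C', IsOpen w) ∧ ⋃₀ C' = univ ∧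
      (∀ w ∈ C', ∀ x ∈ w, ∀ y ∈ w, dist x y < ε) ∧ (∀ w ∈ C', ∃ u ∈ C, w ⊆ u) ∧
      (∀ c, ∀ b ∈ B c, ∃ u ∈ C, ∀ w ∈ C', (b ∩ w).Nonempty → w ⊆ u) ∧
      ∀ c, ∀ w ∈ C', ∀ b ∈ B c, ∀ b' ∈ B c, (w ∩ b).Nonempty → (w ∩ b').Nonempty → b = b' := by
  obtain ⟨D, hDo, hDc, hDstar⟩ := exists_open_star_refinement C hC hcov
  obtain ⟨B₀, hB₀, hB₀dis, hB₀cov⟩ := h D hDo (fun x _ ↦ hDc x)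
  obtain ⟨F, hFcov, hFo, hFcl⟩ := exists_iUnion_eq_closure_subset (u := fun c ↦ ⋃₀ B₀ c)
    (fun c ↦ isOpen_sUnion fun b hb ↦ (hB₀ c b hb).1) (fun _ ↦ toFinite _)
    (eq_univ_of_forall fun x ↦ by
      obtain ⟨c, b, hb, hxb⟩ := hB₀cov x trivial
      exact mem_iUnion.2 ⟨c, b, hb, hxb⟩)
  have hdisc : ∀ x c, ∃ w, IsOpen w ∧ x ∈ w ∧ ∀ b ∈ B₀ c, ∀ b' ∈ B₀ c,
      (w ∩ (b ∩ F c)).Nonempty → (w ∩ (b' ∩ F c)).Nonempty → b = b' := by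
    intro x c
    by_cases hx : x ∈ closure (F c)
    · obtain ⟨b₀, hb₀, hxb₀⟩ := hFcl c hx
      refine ⟨b₀, (hB₀ c b₀ hb₀).1, hxb₀, ?_⟩
      rintro b hb b' hb' ⟨y, hy, hyb, -⟩ ⟨z, hz, hzb, -⟩
      rw [← hB₀dis c b₀ hb₀ b hb ⟨y, hy, hyb⟩, ← hB₀dis c b₀ hb₀ b' hb' ⟨z, hz, hzb⟩]
    · refine ⟨(closure (F c))ᶜ, isClosed_closure.isOpen_compl, hx, ?_⟩
      rintro b - b' - ⟨y, hy, -, hyF⟩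
      exact absurd (subset_closure hyF) hy
  choose w hwo hxw hw using hdisc
  refine ⟨fun c ↦ (· ∩ F c) '' B₀ c, {v | IsOpen v ∧ (∀ x ∈ v, ∀ y ∈ v, dist x y < ε) ∧
    (∃ d ∈ D, v ⊆ d) ∧ ∃ x, ∀ c, v ⊆ w x c}, ?_, ?_, fun v hv ↦ hv.1, ?_, fun v hv ↦ hv.2.1,
    ?_, ?_, ?_⟩
  · rintro c _ ⟨b, hb, rfl⟩
    exact (hB₀ c b hb).1.inter (hFo c)
  · intro x
    obtain ⟨c, hc⟩ := mem_iUnion.1 (hFcov ▸ mem_univ x : x ∈ iUnion F)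
    obtain ⟨b, hb, hxb⟩ := hFcl c (subset_closure hc)
    exact ⟨c, _, ⟨b, hb, rfl⟩, hxb, hc⟩
  · refine eq_univ_of_forall fun x ↦ ?_
    obtain ⟨d, hd, hxd⟩ := hDc x
    refine ⟨Metric.ball x (ε / 2) ∩ (d ∩ ⋂ c, w x c), ⟨Metric.isOpen_ball.inter
      ((hDo d hd).inter (isOpen_iInter_of_finite (hwo x))), ?_, ⟨d, hd, ?_⟩, x, fun c ↦ ?_⟩,
      Metric.mem_ball_self (by positivity), hxd, mem_iInter.2 (hxw x)⟩
    · rintro y ⟨hy, -⟩ z ⟨hz, -⟩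
      rw [Metric.mem_ball] at hy hz
      linarith [dist_triangle_right y z x]
    · exact fun y hy ↦ hy.2.1
    · exact fun y hy ↦ mem_iInter.1 hy.2.2 c
  · rintro v ⟨-, -, ⟨d, hd, hvd⟩, -⟩
    obtain ⟨u, hu, hstar⟩ := hDstar d hd
    rcases d.eq_empty_or_nonempty with rfl | hne
    · exact ⟨u, hu, hvd.trans (empty_subset _)⟩
    · exact ⟨u, hu, hvd.trans (hstar d hd (by rwa [inter_self]))⟩
  · rintro c _ ⟨b, hb, rfl⟩
    obtain ⟨-, d, hd, hbd⟩ := hB₀ c b hb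
    obtain ⟨u, hu, hstar⟩ := hDstar d hd
    refine ⟨u, hu, ?_⟩
    rintro v ⟨-, -, ⟨d', hd', hvd'⟩, -⟩ ⟨x, ⟨hxb, -⟩, hxv⟩
    exact hvd'.trans (hstar d' hd' ⟨x, hbd hxb, hvd' hxv⟩)
  · rintro c v ⟨-, -, -, x, hvx⟩ _ ⟨b, hb, rfl⟩ _ ⟨b', hb', rfl⟩ h1 h2
    rw [hw x c b hb b' hb' (h1.mono (inter_subset_inter_left _ (hvx c)))
      (h2.mono (inter_subset_inter_left _ (hvx c)))]

/-- Two points are `ChainConnected B s t` if they are joined by a chain of members of the families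
`B i`, `s ≤ i < t`. -/
def ChainConnected {X : Type*} (B : ℕ → Set (Set X)) (s : ℕ) (t : ℕ∞) : X → X → Prop :=
  Relation.ReflTransGen fun x y ↦ ∃ i : ℕ, s ≤ i ∧ i < t ∧ ∃ b ∈ B i, x ∈ b ∧ y ∈ b

namespace ChainConnected

variable {X : Type*} {B : ℕ → Set (Set X)} {s : ℕ} {t : ℕ∞} {x y z : X}

theorem symm (h : ChainConnected B s t x y) : ChainConnected B s t y x := by
  induction h with
  | refl => exact Relation.ReflTransGen.refl
  | tail _ hstep ih =>
    obtain ⟨i, h1, h2, b, hb, hx, hy⟩ := hstep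
    exact Relation.ReflTransGen.head ⟨i, h1, h2, b, hb, hy, hx⟩ ih

theorem trans (h : ChainConnected B s t x y) (h' : ChainConnected B s t y z) :
    ChainConnected B s t x z :=
  Relation.ReflTransGen.trans h h'

theorem of_mem {i : ℕ} (hs : s ≤ i) (ht : i < t) {b : Set X} (hb : b ∈ B i) (hx : x ∈ b)
    (hy : y ∈ b) : ChainConnected B s t x y :=
  Relation.ReflTransGen.single ⟨i, hs, ht, b, hb, hx, hy⟩

theorem mono_left {s' : ℕ} (hs : s' ≤ s) (h : ChainConnected B s t x y) :
    ChainConnected B s' t x y :=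
  Relation.ReflTransGen.mono (fun _ _ ⟨i, h1, h2, h3⟩ ↦ ⟨i, hs.trans h1, h2, h3⟩) _ _ h

theorem mono_right {t' : ℕ∞} (ht : t ≤ t') (h : ChainConnected B s t x y) :
    ChainConnected B s t' x y :=
  Relation.ReflTransGen.mono (fun _ _ ⟨i, h1, h2, h3⟩ ↦ ⟨i, h1, h2.trans_le ht, h3⟩) _ _ h

theorem exists_nat (h : ChainConnected B s ⊤ x y) : ∃ n : ℕ, ChainConnected B s n x y := by
  induction h with
  | refl => exact ⟨0, Relation.ReflTransGen.refl⟩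
  | tail _ hstep ih =>
    obtain ⟨n, hn⟩ := ih
    obtain ⟨i, hsi, -, b, hb, hx, hy⟩ := hstep
    refine ⟨max n (i + 1), (hn.mono_right (by exact_mod_cast le_max_left n (i + 1))).trans
      (of_mem hsi ?_ hb hx hy)⟩
    exact_mod_cast (Nat.lt_succ_self i).trans_le (le_max_right n (i + 1))

/-- If the families `B s` are much finer than the covers `C s` and much coarser than `C (s + 1)`,
then chains of members of `B i`, `i ≥ s`, stay in a single member of `C s`. -/
theorem exists_subset {C : ℕ → Set (Set X)} (hcov : ∀ s, ⋃₀ C s = univ)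
    (href : ∀ s, ∀ w ∈ C (s + 1), ∃ u ∈ C s, w ⊆ u)
    (hstar : ∀ s, ∀ b ∈ B s, ∃ u ∈ C s, ∀ w ∈ C (s + 1), (b ∩ w).Nonempty → w ⊆ u)
    (hdisc : ∀ s, ∀ w ∈ C (s + 1), ∀ b ∈ B s, ∀ b' ∈ B s,
      (w ∩ b).Nonempty → (w ∩ b').Nonempty → b = b')
    (d s : ℕ) (x : X) : ∃ u ∈ C s, ∀ y, ChainConnected B s ↑(s + d) x y → y ∈ u := by
  induction d generalizing s x with
  | zero =>
    obtain ⟨u, hu, hxu⟩ := (hcov s ▸ mem_univ x : x ∈ ⋃₀ C s)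
    refine ⟨u, hu, fun y hy ↦ ?_⟩
    induction hy with
    | refl => exact hxu
    | tail _ hstep _ =>
      obtain ⟨i, h1, h2, -⟩ := hstep
      have : i < s + 0 := by exact_mod_cast h2
      omega
  | succ d ih =>
    have hsd : s + 1 + d = s + (d + 1) := by omega
    simp only [← hsd]
    have ih' := fun z ↦ ih (s + 1) z
    by_cases hne : ∃ b ∈ B s, ∃ z ∈ b, ChainConnected B (s + 1) ↑(s + 1 + d) x z
    · obtain ⟨b, hb, z, hzb, hxz⟩ := hne
      obtain ⟨u, hu, hbu⟩ := hstar s b hb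
      suffices H : ∀ y, ChainConnected B s ↑(s + 1 + d) x y →
          ∃ z ∈ b, ChainConnected B (s + 1) ↑(s + 1 + d) z y by
        refine ⟨u, hu, fun y hy ↦ ?_⟩
        obtain ⟨z', hz'b, hz'y⟩ := H y hy
        obtain ⟨w, hw, hwz'⟩ := ih' z'
        exact hbu w hw ⟨z', hz'b, hwz' z' Relation.ReflTransGen.refl⟩ (hwz' y hz'y)
      intro y hy
      induction hy with
      | refl => exact ⟨z, hzb, hxz.symm⟩
      | @tail y y' _ hstep ih₂ =>
        obtain ⟨z', hz'b, hz'y⟩ := ih₂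
        obtain ⟨i, hsi, hi, b', hb', hyb', hy'b'⟩ := hstep
        rcases hsi.eq_or_lt with rfl | hlt
        · obtain ⟨w, hw, hwz'⟩ := ih' z'
          obtain rfl := hdisc s w hw b hb b' hb' ⟨z', hwz' z' Relation.ReflTransGen.refl, hz'b⟩
            ⟨y, hwz' y hz'y, hyb'⟩
          exact ⟨y', hy'b', Relation.ReflTransGen.refl⟩
        · exact ⟨z', hz'b, hz'y.trans (of_mem hlt hi hb' hyb' hy'b')⟩
    · obtain ⟨w, hw, hwx⟩ := ih' x
      obtain ⟨u, hu, hwu⟩ := href s w hw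
      refine ⟨u, hu, fun y hy ↦ hwu (hwx y ?_)⟩
      induction hy with
      | refl => exact Relation.ReflTransGen.refl
      | @tail y y' _ hstep ih₂ =>
        obtain ⟨i, hsi, hi, b', hb', hyb', hy'b'⟩ := hstep
        rcases hsi.eq_or_lt with rfl | hlt
        · exact absurd ⟨b', hb', y, hyb', ih₂⟩ hne
        · exact ih₂.trans (of_mem hlt hi hb' hyb' hy'b')

end ChainConnected

theorem colorCoverable_one_of_chainConnected {X : Type*} [PseudoMetricSpace X]
    {B : ℕ → Set (Set X)} (hB : ∀ s, ∀ b ∈ B s, IsOpen b)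
    (hsmall : ∀ ε > 0, ∃ s, ∀ x y, ChainConnected B s ⊤ x y → dist x y < ε) :
    ColorCoverable {x | ∀ s, ∃ i, s ≤ i ∧ ∃ b ∈ B i, x ∈ b} 1 := by
  intro U hU hAU
  have hex : ∀ x ∈ {x | ∀ s, ∃ i, s ≤ i ∧ ∃ b ∈ B i, x ∈ b}, ∃ s, ∃ u ∈ U,
      {y | ChainConnected B s ⊤ x y} ⊆ u := by
    intro x hx
    obtain ⟨u, hu, hxu⟩ := hAU hx
    obtain ⟨ε, hε, hsub⟩ := Metric.isOpen_iff.1 (hU u hu) x hxu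
    obtain ⟨s, hs⟩ := hsmall ε hε
    exact ⟨s, u, hu, fun y hy ↦ hsub (by rw [Metric.mem_ball']; exact hs x y hy)⟩
  classical
  refine ⟨fun _ ↦ {b | ∃ x s, (∃ i, s ≤ i ∧ ∃ b ∈ B i, x ∈ b) ∧
    (∃ u ∈ U, {y | ChainConnected B s ⊤ x y} ⊆ u) ∧
    (∀ s' < s, ¬ ∃ u ∈ U, {y | ChainConnected B s' ⊤ x y} ⊆ u) ∧
    b = {y | ChainConnected B s ⊤ x y}}, ?_, ?_, ?_⟩
  · rintro - _ ⟨x, s, ⟨i, hsi, b, hb, hxb⟩, hu, -, rfl⟩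
    refine ⟨isOpen_iff_mem_nhds.2 fun y hy ↦ ?_, hu⟩
    have hmem : ∃ i, s ≤ i ∧ ∃ b ∈ B i, y ∈ b := by
      rcases Relation.ReflTransGen.cases_tail hy with rfl | ⟨z, -, j, hsj, -, b', hb', -, hyb'⟩
      · exact ⟨i, hsi, b, hb, hxb⟩
      · exact ⟨j, hsj, b', hb', hyb'⟩
    obtain ⟨j, hsj, b', hb', hyb'⟩ := hmem
    refine Filter.mem_of_superset ((hB j b' hb').mem_nhds hyb') fun z hz ↦ ?_
    exact ChainConnected.trans hy (.of_mem hsj (ENat.natCast_lt_top j) hb' hyb' hz)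
  · rintro - _ ⟨x, s, -, hu, hmin, rfl⟩ _ ⟨x', s', -, hu', hmin', rfl⟩ ⟨y, hxy, hx'y⟩
    have hclass : ∀ (r : ℕ) (x x' : X), ChainConnected B r ⊤ x x' →
        {y | ChainConnected B r ⊤ x y} = {y | ChainConnected B r ⊤ x' y} :=
      fun r x x' h ↦ ext fun z ↦ ⟨h.symm.trans, h.trans⟩
    have key : ∀ (s s' : ℕ) (x x' : X), ChainConnected B s ⊤ x y → ChainConnected B s' ⊤ x' y →
        (∃ u ∈ U, {y | ChainConnected B s ⊤ x y} ⊆ u) →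
        (∀ r < s', ¬ ∃ u ∈ U, {y | ChainConnected B r ⊤ x' y} ⊆ u) → s ≤ s' → s = s' := by
      intro s s' x x' h h' hu hmin hle
      refine hle.eq_or_lt.resolve_right fun hlt ↦ hmin s hlt ?_
      rwa [← hclass s x x' (h.trans (h'.mono_left hle).symm)]
    have hss' : s = s' := by
      rcases le_total s s' with hle | hle
      · exact key s s' x x' hxy hx'y hu hmin' hle
      · exact (key s' s x' x hx'y hxy hu' hmin hle).symm
    subst hss'
    exact hclass s x x' (ChainConnected.trans hxy (ChainConnected.symm hx'y))
  · intro x hx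
    exact ⟨0, _, ⟨x, Nat.find (hex x hx), hx _, Nat.find_spec (hex x hx),
      fun s' hs' ↦ Nat.find_min (hex x hx) hs', rfl⟩, Relation.ReflTransGen.refl⟩

/-- Decomposition theorem: a space of dimension less than `N` is the union of `N` zero-dimensional
subsets. -/
theorem ColorCoverable.exists_decomposition {X : Type*} [PseudoMetricSpace X] {N : ℕ}
    (h : ColorCoverable (univ : Set X) N) :
    ∃ Z : Fin N → Set X, ⋃ c, Z c = univ ∧ ∀ c, ColorCoverable (Z c) 1 := by
  let Cover := {C : Set (Set X) // (∀ u ∈ C, IsOpen u) ∧ ⋃₀ C = univ}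
  have hstep : ∀ (C : Cover) (s : ℕ), ∃ (C' : Cover) (B : Fin N → Set (Set X)),
      (∀ c, ∀ b ∈ B c, IsOpen b) ∧ (∀ x, ∃ c, ∃ b ∈ B c, x ∈ b) ∧
      (∀ w ∈ C'.1, ∀ x ∈ w, ∀ y ∈ w, dist x y < 1 / ((s : ℝ) + 1)) ∧
      (∀ w ∈ C'.1, ∃ u ∈ C.1, w ⊆ u) ∧
      (∀ c, ∀ b ∈ B c, ∃ u ∈ C.1, ∀ w ∈ C'.1, (b ∩ w).Nonempty → w ⊆ u) ∧
      ∀ c, ∀ w ∈ C'.1, ∀ b ∈ B c, ∀ b' ∈ B c,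
        (w ∩ b).Nonempty → (w ∩ b').Nonempty → b = b' := by
    intro C s
    obtain ⟨B, C', h1, h2, h3, h4, h5⟩ := h.exists_discrete_families
      (by positivity : 0 < 1 / ((s : ℝ) + 1)) C.1 C.2.1 C.2.2
    exact ⟨⟨C', h3, h4⟩, B, h1, h2, h5⟩
  choose next fam hopen hcov hmesh href hstar hdisc using hstep
  let C : ℕ → Cover := fun s ↦ Nat.rec ⟨{univ}, by simp, by simp⟩ (fun s C ↦ next C s) s
  let B : Fin N → ℕ → Set (Set X) := fun c s ↦ fam (C s) s c
  refine ⟨fun c ↦ {x | ∀ s, ∃ i, s ≤ i ∧ ∃ b ∈ B c i, x ∈ b}, ?_, fun c ↦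
    colorCoverable_one_of_chainConnected (fun s ↦ hopen (C s) s c) fun ε hε ↦ ?_⟩
  · refine eq_univ_of_forall fun x ↦ mem_iUnion.2 ?_
    by_contra! hx
    simp only [mem_ofPred_eq, not_forall] at hx
    choose s hs using hx
    obtain ⟨c, b, hb, hxb⟩ := hcov (C (Finset.univ.sup s)) (Finset.univ.sup s) x
    exact hs c ⟨_, Finset.le_sup (Finset.mem_univ c), b, hb, hxb⟩
  · obtain ⟨s, hs⟩ := exists_nat_one_div_lt hε
    refine ⟨s + 1, fun x y hxy ↦ ?_⟩
    obtain ⟨n, hn⟩ := hxy.exists_nat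
    obtain ⟨u, hu, hxu⟩ := ChainConnected.exists_subset (B := B c) (C := fun s ↦ (C s).1)
      (fun s ↦ (C s).2.2) (fun s ↦ href (C s) s) (fun s ↦ hstar (C s) s c)
      (fun s ↦ hdisc (C s) s c) n (s + 1) x
    refine (hmesh (C s) s u hu x (hxu x Relation.ReflTransGen.refl) y (hxu y ?_)).trans hs
    exact hn.mono_right (by exact_mod_cast Nat.le_add_left n (s + 1))

/-- Gluing: if `A'` can be coloured with `m` colours and `A \ A'` is covered by a disjoint locally
finite family of open sets over whose closures there are `k + 1 ≤ m + 1` disjoint families refining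
`U`, then `A` is covered by `m + 1` disjoint families refining `U`. -/
theorem ColorCoverable.exists_glue {X ι : Type*} [PseudoMetricSpace X] {A A' : Set X} {k m : ℕ}
    (hkm : k ≤ m) (hA' : ColorCoverable A' m) (hA'cl : IsClosed A') {U : Set (Set X)}
    (hU : ∀ u ∈ U, IsOpen u) (hA'U : A' ⊆ ⋃₀ U) {O : ι → Set X} (hO : ∀ a, IsOpen (O a))
    (hOdis : ∀ a a', (O a ∩ O a').Nonempty → a = a') (hOlf : LocallyFinite O)
    (hAO : A ⊆ A' ∪ ⋃ a, O a) {V : ι → Fin (k + 1) → Set (Set X)}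
    (hV : ∀ a d, ∀ v ∈ V a d, IsOpen v ∧ ∃ u ∈ U, v ⊆ u)
    (hVdis : ∀ a d, ∀ v ∈ V a d, ∀ v' ∈ V a d, (v ∩ v').Nonempty → v = v')
    (hVcov : ∀ a, ∀ x ∈ closure (O a), ∃ d, ∃ v ∈ V a d, x ∈ v) :
    ∃ B : Fin (m + 1) → Set (Set X), (∀ c, ∀ b ∈ B c, IsOpen b ∧ ∃ u ∈ U, b ⊆ u) ∧
      (∀ c, ∀ b ∈ B c, ∀ b' ∈ B c, (b ∩ b').Nonempty → b = b') ∧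
      ∀ x ∈ A, ∃ c, ∃ b ∈ B c, x ∈ b := by
  obtain ⟨B, hB, hBdis, hBcov⟩ := hA' {b | IsOpen b ∧ (∃ u ∈ U, b ⊆ u) ∧
      ∀ a, (b ∩ O a).Nonempty → ∃ d, ∃ v ∈ V a d, b ∩ O a ⊆ v} (fun b hb ↦ hb.1) (by
    intro x hx
    obtain ⟨u, hu, hxu⟩ := hA'U hx
    obtain ⟨N, hN, hNfin⟩ := hOlf.closure x
    have hex : ∀ a, ∃ w, IsOpen w ∧ x ∈ w ∧
        (x ∈ closure (O a) → ∃ d, ∃ v ∈ V a d, w ⊆ v) ∧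
        (x ∉ closure (O a) → w ∩ O a = ∅) := by
      intro a
      by_cases hxa : x ∈ closure (O a)
      · obtain ⟨d, v, hv, hxv⟩ := hVcov a x hxa
        exact ⟨v, (hV a d v hv).1, hxv, fun _ ↦ ⟨d, v, hv, subset_rfl⟩, fun h ↦ absurd hxa h⟩
      · refine ⟨(closure (O a))ᶜ, isClosed_closure.isOpen_compl, hxa, fun h ↦ absurd h hxa,
          fun _ ↦ ?_⟩
        exact (disjoint_compl_left_iff_subset.2 subset_closure).inter_eq
    choose w hwo hxw hwV hwe using hex
    refine ⟨interior N ∩ u ∩ ⋂ a ∈ hNfin.toFinset, w a,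
      ⟨(isOpen_interior.inter (hU u hu)).inter (isOpen_biInter_finset fun a _ ↦ hwo a),
        ⟨u, hu, fun y hy ↦ hy.1.2⟩, ?_⟩,
      ⟨mem_interior_iff_mem_nhds.2 hN, hxu⟩, mem_iInter₂.2 fun a _ ↦ hxw a⟩
    rintro a ⟨y, ⟨⟨hyN, -⟩, hyw⟩, hyO⟩
    have ha : a ∈ hNfin.toFinset :=
      hNfin.mem_toFinset.2 ⟨y, subset_closure hyO, interior_subset hyN⟩
    have hyw' : y ∈ w a := mem_iInter₂.1 hyw a ha
    by_cases hxa : x ∈ closure (O a)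
    · obtain ⟨d, v, hv, hwv⟩ := hwV a hxa
      exact ⟨d, v, hv, fun z hz ↦ hwv (mem_iInter₂.1 hz.1.2 a ha)⟩
    · exact absurd (hwe a hxa) (Nonempty.ne_empty ⟨y, hyw', hyO⟩))
  have hJ : ∀ (c : Fin m) (b : Set X) (a : ι), ∃ p : Fin (k + 1) × Set X, b ∈ B c →
      (b ∩ O a).Nonempty → p.2 ∈ V a p.1 ∧ b ∩ O a ⊆ p.2 := by
    intro c b a
    by_cases h : b ∈ B c ∧ (b ∩ O a).Nonempty
    · obtain ⟨-, b', ⟨-, -, hb'⟩, hbb'⟩ := hB c b h.1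
      obtain ⟨d, v, hv, hsub⟩ := hb' a (h.2.mono (inter_subset_inter_left _ hbb'))
      exact ⟨(d, v), fun _ _ ↦ ⟨hv, (inter_subset_inter_left _ hbb').trans hsub⟩⟩
    · exact ⟨(0, ∅), fun h1 h2 ↦ absurd ⟨h1, h2⟩ h⟩
  choose J hJ using hJ
  let Q : Set X := ⋃ c, ⋃₀ B c
  have hQ : IsOpen Q := isOpen_iUnion fun c ↦ isOpen_sUnion fun b hb ↦ (hB c b hb).1
  have hA'Q : A' ⊆ Q := fun x hx ↦ by
    obtain ⟨c, b, hb, hxb⟩ := hBcov x hx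
    exact mem_iUnion.2 ⟨c, b, hb, hxb⟩
  obtain ⟨l, hl0, hl1, -⟩ := exists_continuous_zero_one_of_isClosed hA'cl hQ.isClosed_compl
    (disjoint_compl_right_iff_subset.2 hA'Q)
  let μ : X → ℝ := fun x ↦ (2 * m + 2) * l x
  have hμ : Continuous μ := continuous_const.mul l.continuous
  have hμ0 : ∀ x ∈ A, 0 < μ x → ∃ a, x ∈ O a := by
    intro x hx hpos
    rcases hAO hx with hx' | hx'
    · have : μ x = 0 := by simp only [μ, hl0 hx', Pi.zero_apply, mul_zero]
      exact absurd this hpos.ne'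
    · exact mem_iUnion.1 hx'
  let E : (Fin m × Set X) ⊕ (ι × (Fin (k + 1) × Set X)) → Set X := Sum.elim
    (fun q ↦ {x | q.2 ∈ B q.1 ∧ x ∈ q.2 ∧ μ x < 2 * (q.1 : ℕ) + 2})
    (fun q ↦ {x | x ∈ O q.1 ∧ q.2.2 ∈ V q.1 q.2.1 ∧ x ∈ q.2.2 ∧ (2 * (m : ℝ) + 1 < μ x ∨
      ∃ c, ∃ b ∈ B c, x ∈ b ∧ J c b q.1 = q.2 ∧ 2 * ((c : ℕ) : ℝ) + 1 < μ x)})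
  have hE : ∀ i, IsOpen (E i) := by
    rintro (⟨c, b⟩ | ⟨a, d, v⟩) <;> rw [isOpen_iff_mem_nhds]
    · rintro x ⟨hb, hxb, hlt⟩
      filter_upwards [(hB c b hb).1.mem_nhds hxb, hμ.continuousAt.eventually_lt_const hlt]
        with y hyb hy
      exact ⟨hb, hyb, hy⟩
    · rintro x ⟨hxO, hv, hxv, hlt | ⟨c, b, hb, hxb, hJe, hlt⟩⟩
      · filter_upwards [(hO a).mem_nhds hxO, (hV a d v hv).1.mem_nhds hxv,
          hμ.continuousAt.eventually_const_lt hlt] with y h1 h2 h3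
        exact ⟨h1, hv, h2, Or.inl h3⟩
      · filter_upwards [(hO a).mem_nhds hxO, (hV a d v hv).1.mem_nhds hxv,
          (hB c b hb).1.mem_nhds hxb, hμ.continuousAt.eventually_const_lt hlt] with y h1 h2 h3 h4
        exact ⟨h1, hv, h2, Or.inr ⟨c, b, hb, h3, hJe, h4⟩⟩
  have hEU : ∀ i, (E i).Nonempty → ∃ u ∈ U, E i ⊆ u := by
    rintro (⟨c, b⟩ | ⟨a, d, v⟩) ⟨x, hx⟩
    · obtain ⟨-, b', ⟨-, ⟨u, hu, hb'u⟩, -⟩, hbb'⟩ := hB c b hx.1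
      exact ⟨u, hu, fun y hy ↦ hb'u (hbb' hy.2.1)⟩
    · obtain ⟨-, u, hu, hvu⟩ := hV a d v hx.2.1
      exact ⟨u, hu, fun y hy ↦ hvu hy.2.2.1⟩
  have hcov : ∀ x ∈ A, ∃ i, x ∈ E i := by
    intro x hx
    by_cases hxQ : x ∈ Q
    · obtain ⟨c, b, hb, hxb⟩ := mem_iUnion.1 hxQ
      rcases lt_or_ge (μ x) (2 * (c : ℕ) + 2) with hlt | hge
      · exact ⟨Sum.inl (c, b), hb, hxb, hlt⟩
      · have hc : (0 : ℝ) ≤ (c : ℕ) := Nat.cast_nonneg _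
        obtain ⟨a, ha⟩ := hμ0 x hx (by linarith)
        obtain ⟨h1, h2⟩ := hJ c b a hb ⟨x, hxb, ha⟩
        exact ⟨Sum.inr (a, J c b a), ha, h1, h2 ⟨hxb, ha⟩,
          Or.inr ⟨c, b, hb, hxb, rfl, by linarith⟩⟩
    · have hμx : μ x = 2 * m + 2 := by simp only [μ, hl1 hxQ, Pi.one_apply, mul_one]
      have hm : (0 : ℝ) ≤ m := Nat.cast_nonneg _
      obtain ⟨a, ha⟩ := hμ0 x hx (by linarith)
      obtain ⟨d, v, hv, hxv⟩ := hVcov a x (subset_closure ha)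
      exact ⟨Sum.inr (a, d, v), ha, hv, hxv, Or.inl (by linarith)⟩
  have hinj : ∀ x, ∃ g : (Fin m × Set X) ⊕ (ι × (Fin (k + 1) × Set X)) → ℕ,
      (∀ i, x ∈ E i → g i < m + 1) ∧ ∀ i i', x ∈ E i → x ∈ E i' → g i = g i' → i = i' := by
    intro x
    rcases lt_or_ge (2 * (m : ℝ) + 1) (μ x) with hlt | hge
    · have hnot : ∀ q, x ∉ E (Sum.inl q) := by
        rintro ⟨c, b⟩ ⟨-, -, h⟩
        have hc : ((c : ℕ) : ℝ) + 1 ≤ m := by exact_mod_cast c.2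
        linarith
      refine ⟨Sum.elim (fun _ ↦ 0) (fun q ↦ q.2.1), ?_, ?_⟩
      · rintro (q | ⟨a, d, v⟩) hx
        · exact absurd hx (hnot q)
        · exact d.2.trans_le (by omega)
      · rintro (q | ⟨a, d, v⟩) (q' | ⟨a', d', v'⟩) hx hx' hg
        · exact absurd hx (hnot q)
        · exact absurd hx (hnot q)
        · exact absurd hx' (hnot q')
        · obtain rfl := hOdis a a' ⟨x, hx.1, hx'.1⟩
          obtain rfl := Fin.ext hg
          obtain rfl := hVdis a d v hx.2.1 v' hx'.2.1 ⟨x, hx.2.2.1, hx'.2.2.1⟩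
          rfl
    · have hg : ∀ i, ∃ n : ℕ, x ∈ E i → n < m + 1 ∧ Sum.elim (fun q ↦ n = q.1 + 1)
          (fun q ↦ ∃ c : Fin m, n = c ∧ ∃ b ∈ B c, x ∈ b ∧ J c b q.1 = q.2 ∧
            2 * ((c : ℕ) : ℝ) + 1 < μ x) i := by
        rintro (⟨c, b⟩ | ⟨a, p⟩)
        · exact ⟨c + 1, fun _ ↦ ⟨by omega, rfl⟩⟩
        · by_cases hx : x ∈ E (Sum.inr (a, p))
          · obtain ⟨-, -, -, hlt | ⟨c, hc⟩⟩ := hx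
            · exact absurd hlt hge.not_gt
            · exact ⟨c, fun _ ↦ ⟨by omega, c, rfl, hc⟩⟩
          · exact ⟨0, fun h ↦ absurd h hx⟩
      choose g hg using hg
      have hlr : ∀ q q', x ∈ E (Sum.inl q) → x ∈ E (Sum.inr q') →
          g (Sum.inl q) ≠ g (Sum.inr q') := by
        intro q q' hx hx' he
        have h1 : g (Sum.inl q) = q.1 + 1 := (hg _ hx).2
        obtain ⟨c, h2, b, hb, hxb, -, hlt⟩ := (hg _ hx').2
        have hc : (c : ℕ) = (q.1 : ℕ) + 1 := by omega
        have hc' : ((c : ℕ) : ℝ) = (q.1 : ℕ) + 1 := by exact_mod_cast hc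
        have := hx.2.2
        linarith
      refine ⟨g, fun i hi ↦ (hg i hi).1, ?_⟩
      rintro (⟨c, b⟩ | ⟨a, p⟩) (⟨c', b'⟩ | ⟨a', p'⟩) hx hx' he
      · have h1 : g (Sum.inl (c, b)) = c + 1 := (hg _ hx).2
        have h2 : g (Sum.inl (c', b')) = c' + 1 := (hg _ hx').2
        obtain rfl : c = c' := Fin.ext (by omega)
        obtain rfl := hBdis c b hx.1 b' hx'.1 ⟨x, hx.2.1, hx'.2.1⟩
        rfl
      · exact absurd he (hlr _ _ hx hx')
      · exact absurd he.symm (hlr _ _ hx' hx)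
      · obtain ⟨c, h1, b, hb, hxb, hJb, -⟩ := (hg _ hx).2
        obtain ⟨c', h2, b', hb', hxb', hJb', -⟩ := (hg _ hx').2
        obtain rfl : c = c' := Fin.ext (by omega)
        obtain rfl := hBdis c b hb b' hb' ⟨x, hxb, hxb'⟩
        obtain rfl := hOdis a a' ⟨x, hx.1, hx'.1⟩
        obtain rfl : p = p' := hJb.symm.trans hJb'
        rfl
  obtain ⟨B', hB', hB'dis, hB'cov⟩ := exists_disjoint_families_of_order_le (A := A) (m := m + 1)
    (fun i : {i // (E i).Nonempty} ↦ E i) (fun i ↦ hE i)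
    (fun x hx ↦ by
      obtain ⟨i, hi⟩ := hcov x hx
      exact ⟨⟨i, x, hi⟩, hi⟩)
    (fun x _ T hT ↦ by
      obtain ⟨g, hg1, hg2⟩ := hinj x
      have := Finset.card_le_card_of_injOn (s := T) (t := Finset.range (m + 1)) (fun i ↦ g i)
        (fun i hi ↦ Finset.mem_coe.2 (Finset.mem_range.2 (hg1 i (hT i hi))))
        (fun i hi i' hi' h ↦ Subtype.ext (hg2 i i' (hT i hi) (hT i' hi') h))
      simpa using this)
  refine ⟨B', fun c b hb ↦ ⟨(hB' c b hb).1, ?_⟩, hB'dis, hB'cov⟩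
  obtain ⟨-, i, hi⟩ := hB' c b hb
  obtain ⟨u, hu, hiu⟩ := hEU i i.2
  exact ⟨u, hu, hi.trans hiu⟩

theorem IsClosedMap.colorCoverable_preimage {X Y : Type*} [PseudoMetricSpace X]
    [PseudoMetricSpace Y] {f : X → Y} (hf : Continuous f) (hclosed : IsClosedMap f) {k : ℕ}
    (hfib : ∀ y, ColorCoverable (f ⁻¹' {y}) (k + 1)) {j : ℕ} {Z : Fin j → Set Y}
    (hZ : ∀ c, ColorCoverable (Z c) 1) {L : Set Y} (hL : IsClosed L) (hLZ : L ⊆ ⋃ c, Z c) :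
    ColorCoverable (f ⁻¹' L) (k + j) := by
  induction j generalizing L with
  | zero =>
    obtain rfl : L = ∅ := subset_empty_iff.1 (hLZ.trans (by simp))
    exact fun U _ _ ↦ ⟨fun _ ↦ ∅, by simp, by simp, by simp⟩
  | succ j ih =>
    intro U hU hLU
    have hV : ∀ y : L, ∃ (V : Fin (k + 1) → Set (Set X)) (W : Set Y),
        (∀ d, ∀ v ∈ V d, IsOpen v ∧ ∃ u ∈ U, v ⊆ u) ∧
        (∀ d, ∀ v ∈ V d, ∀ v' ∈ V d, (v ∩ v').Nonempty → v = v') ∧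
        IsOpen W ∧ (y : Y) ∈ W ∧ ∀ x, f x ∈ closure W → ∃ d, ∃ v ∈ V d, x ∈ v := by
      rintro ⟨y, hy⟩
      obtain ⟨V, hV, hVdis, hVcov⟩ := hfib y U hU
        ((preimage_mono (singleton_subset_iff.2 hy)).trans hLU)
      let Q : Set X := ⋃ d, ⋃₀ V d
      have hQ : IsOpen Q := isOpen_iUnion fun d ↦ isOpen_sUnion fun v hv ↦ (hV d v hv).1
      have hy' : y ∈ (f '' Qᶜ)ᶜ := by
        rintro ⟨x, hxQ, rfl⟩
        obtain ⟨d, v, hv, hxv⟩ := hVcov x rfl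
        exact hxQ (mem_iUnion.2 ⟨d, v, hv, hxv⟩)
      obtain ⟨W, hW, hWcl, hWsub⟩ := exists_mem_nhds_isClosed_subset
        ((hclosed _ hQ.isClosed_compl).isOpen_compl.mem_nhds hy')
      refine ⟨V, interior W, hV, hVdis, isOpen_interior, mem_interior_iff_mem_nhds.2 hW,
        fun x hx ↦ ?_⟩
      have hxW : f x ∈ W := closure_minimal interior_subset hWcl hx
      have hxQ : x ∈ Q := by
        by_contra hxQ
        exact hWsub hxW ⟨x, hxQ, rfl⟩
      obtain ⟨d, v, hv, hxv⟩ := mem_iUnion.1 hxQ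
      exact ⟨d, v, hv, hxv⟩
    choose V W hV hVdis hW hyW hVcov using hV
    obtain ⟨w, hwo, hLw, hwlf, hwW⟩ := precise_refinement_set hL W hW
      (fun y hy ↦ mem_iUnion.2 ⟨⟨y, hy⟩, hyW _⟩)
    obtain ⟨B, hB, hBdis, hBcov⟩ := (hZ 0).inter_isClosed hL (range w)
      (by rintro _ ⟨a, rfl⟩; exact hwo a)
      (fun y hy ↦ by
        obtain ⟨a, ha⟩ := mem_iUnion.1 (hLw hy.2)
        exact ⟨_, ⟨a, rfl⟩, ha⟩)
    have hassign : ∀ b : B 0, ∃ a, (b : Set Y) ⊆ w a := fun b ↦ by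
      obtain ⟨-, _, ⟨a, rfl⟩, h⟩ := hB 0 b b.2
      exact ⟨a, h⟩
    choose α hα using hassign
    let O : L → Set Y := fun a ↦ ⋃ b : B 0, ⋃ _ : α b = a, (b : Set Y)
    have hOw : ∀ a, O a ⊆ w a := fun a ↦ iUnion₂_subset fun b hb ↦ hb ▸ hα b
    have hOo : ∀ a, IsOpen (O a) := fun a ↦ isOpen_iUnion fun b ↦ isOpen_iUnion fun _ ↦
      (hB 0 b b.2).1
    have hLO : IsClosed (L \ ⋃ a, O a) := hL.sdiff (isOpen_iUnion hOo)
    have hsub : L \ ⋃ a, O a ⊆ ⋃ c : Fin j, Z c.succ := by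
      rintro y ⟨hyL, hyO⟩
      obtain ⟨c, hc⟩ := mem_iUnion.1 (hLZ hyL)
      rcases Fin.eq_zero_or_eq_succ c with rfl | ⟨c', rfl⟩
      · obtain ⟨d, b, hb, hyb⟩ := hBcov y ⟨hc, hyL⟩
        obtain rfl : d = 0 := Subsingleton.elim _ _
        exact (hyO (mem_iUnion.2 ⟨α ⟨b, hb⟩, mem_iUnion₂.2 ⟨⟨b, hb⟩, rfl, hyb⟩⟩)).elim
      · exact mem_iUnion.2 ⟨c', hc⟩
    refine (ih (fun c ↦ hZ c.succ) hLO hsub).exists_glue (Nat.le_add_right k j)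
      (hLO.preimage hf) hU ((preimage_mono sdiff_subset).trans hLU) (O := fun a ↦ f ⁻¹' O a)
      (fun a ↦ (hOo a).preimage hf) ?_ ((hwlf.subset hOw).preimage_continuous hf) ?_ hV hVdis ?_
    · rintro a a' ⟨x, hx, hx'⟩
      obtain ⟨b, rfl, hb⟩ := mem_iUnion₂.1 hx
      obtain ⟨b', rfl, hb'⟩ := mem_iUnion₂.1 hx'
      rw [Subtype.ext (hBdis 0 b b.2 b' b'.2 ⟨f x, hb, hb'⟩)]
    · intro x hx
      by_cases h : f x ∈ ⋃ a, O a
      · obtain ⟨a, ha⟩ := mem_iUnion.1 h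
        exact Or.inr (mem_iUnion.2 ⟨a, ha⟩)
      · exact Or.inl ⟨hx, h⟩
    · intro a x hx
      exact hVcov a x (closure_mono ((hOw a).trans (hwW a)) (hf.closure_preimage_subset _ hx))

theorem exists_covDimLE_of_covDim_le {X : Type*} [TopologicalSpace X] {n : ℕ}
    (h : covDim X ≤ n) : ∃ k ≤ n, CovDimLE X k := by
  have hne : {e : ℕ∞ | ∃ n : ℕ, e = (n : ℕ∞) ∧ CovDimLE X n}.Nonempty := by
    by_contra hempty
    rw [not_nonempty_iff_eq_empty] at hempty
    rw [covDim, hempty, sInf_empty] at h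
    exact absurd h (by simp)
  obtain ⟨k, hk, hdim⟩ := csInf_mem hne
  refine ⟨k, ?_, hdim⟩
  rw [covDim, hk] at h
  exact_mod_cast h

/-- **Theorem 2** (Hurewicz).  If `f : X → Y` is a closed surjective continuous map of
metric spaces, then `dim X ≤ dim Y + sup { dim f⁻¹(y) : y ∈ Y }`. -/
theorem covDim_le_of_closed_surjection (X : Type*) [MetricSpace X]
    (Y : Type*) [MetricSpace Y] (f : X → Y)
    (hf : Continuous f) (hclosed : IsClosedMap f) (hsurj : Function.Surjective f) :
    covDim X ≤ covDim Y + ⨆ y : Y, covDim (f ⁻¹' {y} : Set X) := by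
  by_cases hY : covDim Y = ⊤
  · simp [hY]
  by_cases hfib : ⨆ y : Y, covDim (f ⁻¹' {y} : Set X) = ⊤
  · simp [hfib]
  obtain ⟨n, hn⟩ := ENat.ne_top_iff_exists.1 hY
  obtain ⟨k, hk⟩ := ENat.ne_top_iff_exists.1 hfib
  obtain ⟨n', hn', hdimY⟩ := exists_covDimLE_of_covDim_le hn.ge
  have hfib' : ∀ y, ColorCoverable (f ⁻¹' {y}) (k + 1) := fun y ↦ by
    obtain ⟨k', hk', hdim⟩ := exists_covDimLE_of_covDim_le
      ((le_iSup (fun y : Y ↦ covDim (f ⁻¹' {y} : Set X)) y).trans hk.ge)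
    have := hdim.colorCoverable_range Topology.IsInducing.subtypeVal (Nat.add_le_add_right hk' 1)
    rwa [Subtype.range_coe] at this
  have hY' := hdimY.colorCoverable_range Topology.IsInducing.id (Nat.add_le_add_right hn' 1)
  rw [range_id] at hY'
  obtain ⟨Z, hZ, hZ1⟩ := hY'.exists_decomposition
  have hX : ColorCoverable (univ : Set X) (k + n + 1) :=
    hclosed.colorCoverable_preimage hf hfib' hZ1 isClosed_univ hZ.ge
  rw [← hn, ← hk, add_comm]
  exact sInf_le ⟨k + n, by push_cast; rfl, hX.covDimLE⟩
end
end
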